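/- arXiv:2402.18939 — 5 statements merged into one kernel-verified Lean document; each statement's English description precedes it below -/
import Mathlib

section
/- Theorem 7: With the reduced form Q and parameters as in the context but with d = ((32/3)·|D|)^{1/5} (so d⁵ = (8/3)aAt), and with m, K defined from this d, suppose the reals c_1, …, c_5 satisfy c_2 ∈ ℤ, and suppose a < 1/2, d ≤ 1, a + d ≤ 1, and (m, K) = (1,2). Then there exist x_1, …, x_5 with x_i − c_i ∈ ℤ for every i such that 0 < Q(x_1,…,x_5) < d. -/
/-- The positive definite ternary form of the Birch reduction. -/
noncomputable def redPhi (a A t lam h₄ h₅ : ℝ) (u v w : ℝ) : ℝ :=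
  a * (u + h₄*v + h₅*w)^2 + A * (v + lam*w)^2 + t * w^2

/-- The Birch-reduced indefinite quadratic form of type (1,4). -/
noncomputable def redQ (a A t lam h₄ h₅ a₂ a₃ a₄ a₅ : ℝ) (x₁ x₂ x₃ x₄ x₅ : ℝ) : ℝ :=
  (x₁ + a₂*x₂ + a₃*x₃ + a₄*x₄ + a₅*x₅) * x₂ - redPhi a A t lam h₄ h₅ x₃ x₄ x₅

set_option maxHeartbeats 1000000

/-- one-dimensional avoidance -/
def RowAv (κ x p : ℝ) : Prop := ∀ i : ℤ, ¬(p < κ * (x + i)^2 ∧ κ * (x + i)^2 < p + 1)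

theorem exists_near (x : ℝ) : ∃ i : ℤ, |x + i| ≤ 1/2 := by
  refine ⟨-round x, ?_⟩
  have := abs_sub_round x
  push_cast
  simpa [sub_eq_add_neg] using this

theorem row_pt {κ x p : ℝ} (h : RowAv κ x p) (i : ℤ) : κ * (x + i)^2 ≤ p ∨ p + 1 ≤ κ * (x+i)^2 := by
  by_contra hc
  push Not at hc
  exact h i hc

/-- row lemma -/
theorem row_lemma {κ x p : ℝ} (h : RowAv κ x p) (hκ : 1/2 ≤ κ) (hκ2 : κ < 2/3) :
    ∃ i : ℤ, ∃ u : ℝ, u = |x + i| ∧ 0 ≤ u ∧ u ≤ 1/2 ∧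
      (p + 1 ≤ κ * u^2 ∨
       (κ * (1-u)^2 ≤ p ∧ p + 1 ≤ κ * (1+u)^2) ∨
       (κ * (1+u)^2 ≤ p ∧ p + 1 ≤ κ * (2-u)^2) ∨
       (κ * (2-u)^2 ≤ p ∧ p + 1 ≤ κ * (2+u)^2) ∨
       κ * (2+u)^2 ≤ p) := by
  obtain ⟨i, hi⟩ := exists_near x
  refine ⟨i, |x+i|, rfl, abs_nonneg _, hi, ?_⟩
  have key : ∀ k : ℤ, κ * (|x+i| + k)^2 ≤ p ∨ p + 1 ≤ κ * (|x+i| + k)^2 := by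
    intro k
    rcases abs_cases (x + i) with ⟨h1, _⟩ | ⟨h1, _⟩
    · have := row_pt h (i + k)
      push_cast at this
      rw [h1]; rw [← add_assoc] at this; exact this
    · have := row_pt h (i - k)
      push_cast at this
      rw [h1]
      have e : (x + (i - k : ℝ))^2 = (-(x + i) + k)^2 := by ring
      rw [e] at this; exact this
  set u := |x+i| with hu
  have hu0 : 0 ≤ u := abs_nonneg _
  have k0 := key 0
  have k1 := key (-1)
  have k2 := key 1
  have k3 := key (-2)
  have k4 := key 2
  push_cast at k0 k1 k2 k3 k4
  have e1 : (u + -1)^2 = (1-u)^2 := by ring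
  have e2 : (u + 1)^2 = (1+u)^2 := by ring
  have e3 : (u + -2)^2 = (2-u)^2 := by ring
  have e4 : (u + 2)^2 = (2+u)^2 := by ring
  rw [add_zero] at k0
  rw [e1] at k1
  rw [e2] at k2
  rw [e3] at k3
  rw [e4] at k4
  rcases k0 with k0 | k0
  · rcases k1 with k1 | k1
    · rcases k2 with k2 | k2
      · rcases k3 with k3 | k3
        · rcases k4 with k4 | k4
          · tauto
          · tauto
        · tauto
      · tauto
    · exfalso; nlinarith
  · tauto

/-- two-dimensional avoidance -/
def Av (κ α h u v ρ : ℝ) : Prop := ∀ i j : ℤ,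
  ¬(ρ < κ * (u + i + h * j)^2 + α * (v + j)^2 ∧ κ * (u + i + h * j)^2 + α * (v + j)^2 < ρ + 1)

theorem Av.row {κ α h u v ρ : ℝ} (H : Av κ α h u v ρ) (j : ℤ) :
    RowAv κ (u + h * j) (ρ - α * (v + j)^2) := by
  intro i hi
  apply H i j
  have e : u + i + h * j = u + h * j + i := by ring
  rw [e]
  constructor <;> linarith [hi.1, hi.2]

/-- common parameter hypotheses in the plane -/
structure Par (κ α h : ℝ) : Prop where
  k1 : 1/2 ≤ κ
  k2 : κ < 2/3
  a1 : 3/4 * κ ≤ α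
  a2 : α < 1/2
  ha : κ * (1 - h^2) ≤ α
  h1 : -1/2 ≤ h
  h2 : h ≤ 1/2

/-- type I data -/
def TyI (κ α h u v ρ : ℝ) : Prop := ∃ i j : ℤ,
  4 * α * |v + j| ≤ 2 * κ - 1 ∧ 4 * κ * |u + i + h * j| ≤ 2 * κ - 1 ∧ 1 ≤ 4 * κ * |h| ∧
  α * (1 + |v + j|)^2 + κ/4 ≤ ρ ∧ ρ + 1 ≤ α * (2 - |v + j|)^2 + (2*κ-1)^2/2

theorem int_pin (n c : ℤ) (h1 : (c:ℝ) - 1 < n) (h2 : (n:ℝ) < c + 1) : (n:ℝ) = c := by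
  have a : c - 1 < n := by exact_mod_cast h1
  have b : n < c + 1 := by exact_mod_cast h2
  have : n = c := by omega
  exact_mod_cast this

/-- a row with its nearest offset `z`, split by the number of points below -/
def RE (κ x p : ℝ) : Prop := p + 1 ≤ κ/4 ∧ ∀ i : ℤ, p + 1 ≤ κ * (x+i)^2
def R2 (κ z p : ℝ) : Prop := κ/4 ≤ p ∧ p + 1 ≤ 9/4*κ ∧ 1 ≤ 4*κ*|z| ∧ κ*(1-|z|)^2 ≤ p ∧ p + 1 ≤ κ*(1+|z|)^2
def R3 (κ z p : ℝ) : Prop := κ ≤ p ∧ p + 1 ≤ 4*κ ∧ 6*κ*|z| ≤ 3*κ-1 ∧ κ*(1+|z|)^2 ≤ p ∧ p + 1 ≤ κ*(2-|z|)^2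
def R4 (κ z p : ℝ) : Prop := 9/4*κ ≤ p ∧ p + 1 ≤ 25/4*κ ∧ 1 ≤ 8*κ*|z| ∧ κ*(2-|z|)^2 ≤ p ∧ p + 1 ≤ κ*(2+|z|)^2
def R5 (κ z p : ℝ) : Prop := 4*κ ≤ p ∧ κ*(2+|z|)^2 ≤ p

theorem row_full {κ x p : ℝ} (h : RowAv κ x p) (hκ : 1/2 ≤ κ) (hκ2 : κ < 2/3) :
    ∃ i : ℤ, ∃ z : ℝ, z = x + i ∧ |z| ≤ 1/2 ∧
      (RE κ x p ∨ R2 κ z p ∨ R3 κ z p ∨ R4 κ z p ∨ R5 κ z p) := by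
  obtain ⟨i, u, hu, hu0, hu2, H⟩ := row_lemma h hκ hκ2
  refine ⟨i, x+i, rfl, hu ▸ hu2, ?_⟩
  unfold RE R2 R3 R4 R5
  rw [← hu]
  have q1 : 0 ≤ κ*u := mul_nonneg (by linarith) hu0
  have q2 : 0 ≤ κ*(1/2-u) := mul_nonneg (by linarith) (by linarith)
  have q3 : 0 ≤ κ*u*(1/2-u) := mul_nonneg q1 (by linarith)
  have q4 : 0 ≤ κ*(1/2-u)^2 := mul_nonneg (by linarith) (sq_nonneg _)
  have q5 : 0 ≤ κ*u^2 := mul_nonneg (by linarith) (sq_nonneg _)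
  rcases H with H | ⟨H,H'⟩ | ⟨H,H'⟩ | ⟨H,H'⟩ | H
  · left
    have : p + 1 ≤ κ/4 := by nlinarith
    refine ⟨this, fun i => ?_⟩
    rcases row_pt h i with q | q
    · exfalso; nlinarith [mul_nonneg (by linarith : (0:ℝ) ≤ κ) (sq_nonneg (x+i))]
    · exact q
  · right; left
    refine ⟨by nlinarith, by nlinarith, by nlinarith, H, H'⟩
  · right; right; left
    refine ⟨by nlinarith, by nlinarith, by nlinarith, H, H'⟩
  · right; right; right; left
    refine ⟨by nlinarith, by nlinarith, by nlinarith, H, H'⟩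
  · right; right; right; right
    refine ⟨by nlinarith, H⟩

def RD (κ x z p : ℝ) : Prop := RE κ x p ∨ R2 κ z p ∨ R3 κ z p ∨ R4 κ z p ∨ R5 κ z p

theorem Av.rd {κ α h u v ρ : ℝ} (H : Av κ α h u v ρ) (P : Par κ α h) (j : ℤ) (y s : ℝ)
    (hy : y = h * j) (hs : s = (v + j)^2) :
    ∃ i : ℤ, ∃ z : ℝ, z = u + y + i ∧ |z| ≤ 1/2 ∧ RD κ (u + y) z (ρ - α * s) := by
  subst hy hs
  exact row_full (H.row j) P.k1 P.k2

theorem half_rep {κ z : ℝ} (k1 : 1/2 ≤ κ) (k2 : κ < 2/3) (hz : 1 ≤ 4*κ*|z|) (b : |z| ≤ 1/2) :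
    ∃ n : ℤ, ∃ e : ℝ, z = 1/2 + e + n ∧ |e| < 1/8 ∧ 4*(κ*e) ≤ 2*κ-1 ∧ -(2*κ-1) ≤ 4*(κ*e) := by
  have kp : 0 ≤ κ := by linarith
  have c : 3/8 < |z| := by
    by_contra hc
    push Not at hc
    linarith [mul_le_mul_of_nonneg_left hc kp]
  rcases abs_cases z with ⟨q, _⟩ | ⟨q, _⟩
  · rw [q] at hz b c
    refine ⟨0, z - 1/2, by push_cast; ring, ?_, ?_, ?_⟩
    · rw [abs_lt]; constructor <;> linarith
    · linarith [mul_le_mul_of_nonneg_left b kp]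
    · linarith
  · rw [q] at hz b c
    refine ⟨-1, z + 1/2, by push_cast; ring, ?_, ?_, ?_⟩
    · rw [abs_lt]; constructor <;> linarith
    · linarith [mul_le_mul_of_nonneg_left b kp]
    · linarith [mul_le_mul_of_nonneg_left b kp]

/-- Type I case (ii): rows `±1` are two-point rows, row `-2` is empty -/
theorem tyI_core {κ α h u v ρ : ℝ} (P : Par κ α h) (h0 : 0 ≤ h) (v0 : 0 ≤ v)
    {z1 zm : ℝ} {i1 im : ℤ} (e1 : z1 = u + h + i1) (em : zm = u + -h + im)
    (b1 : |z1| ≤ 1/2) (bm : |zm| ≤ 1/2)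
    (r1 : R2 κ z1 (ρ - α * (1+v)^2)) (rm : R2 κ zm (ρ - α * (1-v)^2))
    (r2 : RE κ (u + -(2*h)) (ρ - α * (2-v)^2)) : TyI κ α h u v ρ := by
  obtain ⟨k1, k2, a1, a2, ha, hh1, hh2⟩ := P
  obtain ⟨p1, p2, p3, p4, p5⟩ := r1
  obtain ⟨m1, m2, m3, m4, m5⟩ := rm
  obtain ⟨t1, t2⟩ := r2
  have hs : 4 * α * v ≤ 2 * κ - 1 := by linarith
  have kp : 0 < κ := by linarith
  have hlow : ¬ (4*κ*h ≤ 2*κ-1) := by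
    intro hc
    have s1 : (4*κ*h)^2 ≤ (2*κ-1)^2 := by
      apply pow_le_pow_left₀ (by positivity) hc
    have s2 := mul_le_mul_of_nonneg_left ha kp.le
    have s3 := mul_lt_mul_of_pos_left a2 kp
    have s4 := mul_le_mul_of_nonneg_left k1 kp.le
    nlinarith only [s1, s2, s3, k1]
  obtain ⟨n1, f1, g1, l1, q1, w1⟩ := half_rep k1 k2 p3 b1
  obtain ⟨nm, fm, gm, lm, qm, wm⟩ := half_rep k1 k2 m3 bm
  rw [abs_lt] at l1 lm
  have N0 : 2*h = f1 - fm + ((n1 - nm - i1 + im : ℤ):ℝ) := by push_cast; linarith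
  obtain ⟨N, hN⟩ : ∃ N : ℤ, N = n1 - nm - i1 + im := ⟨_, rfl⟩
  rw [← hN] at N0
  have hN0 : N ≠ 0 := by
    rintro rfl
    apply hlow
    push_cast at N0
    have : 2*(κ*h) = κ*f1 - κ*fm := by linear_combination κ * N0
    linarith
  have hN1 : (N:ℝ) = 1 := by
    have u1 : (-1:ℝ) < N := by linarith
    have u2 : (N:ℝ) < 2 := by linarith
    have u1' : -1 < N := by exact_mod_cast u1
    have u2' : N < 2 := by exact_mod_cast u2
    have : N = 1 := by omega
    rw [this]; norm_num
  have X0 : u + ((i1 - n1 : ℤ):ℝ) = (f1+fm)/2 := by push_cast; linarith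
  have X2 : u + -(2*h) + ((i1 - n1 + 1 : ℤ):ℝ) = (3*fm-f1)/2 := by
    push_cast at X0 ⊢; linarith
  have kf : κ*f1 ≤ κ * fm := mul_le_mul_of_nonneg_left (by linarith) kp.le
  have kh : κ*(2*h) = κ*(f1-fm+1) := by rw [N0, hN1]
  refine ⟨i1 - n1, 0, ?_, ?_, ?_, ?_, ?_⟩
  · push_cast; rw [add_zero, abs_of_nonneg v0]; exact hs
  · have : u + ((i1 - n1 : ℤ):ℝ) + h * ((0:ℤ):ℝ) = (f1+fm)/2 := by rw [X0]; push_cast; ring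
    rw [this]
    rcases abs_cases ((f1+fm)/2) with ⟨q,_⟩ | ⟨q,_⟩ <;> rw [q] <;> linarith
  · rw [abs_of_nonneg h0]; linarith
  · push_cast; rw [add_zero, abs_of_nonneg v0]; linarith
  · push_cast; rw [add_zero, abs_of_nonneg v0]
    have := t2 (i1 - n1 + 1)
    rw [X2] at this
    have s1 : (2*κ*((3*fm-f1)/2))^2 ≤ (2*κ-1)^2 := by
      apply sq_le_sq'
      · linarith
      · linarith
    have s2 : κ * ((3*fm-f1)/2)^2 ≤ (2*κ-1)^2/2 := by
      have : 0 ≤ κ * ((3*fm-f1)/2)^2 := by positivity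
      nlinarith only [s1, this, k1]
    linarith

theorem lt_quarter {κ z : ℝ} (k1 : 1/2 ≤ κ) (k2 : κ < 2/3) (hz : 6*κ*|z| ≤ 3*κ-1) : |z| < 1/4 := by
  by_contra hc
  push Not at hc
  linarith [mul_le_mul_of_nonneg_left hc (by linarith : (0:ℝ) ≤ κ)]

/-- both rows ±1 three point: impossible in type I -/
theorem tyI_33 {κ α h u v ρ : ℝ} (P : Par κ α h) (H : Av κ α h u v ρ) (h0 : 0 ≤ h) (v0 : 0 ≤ v)
    {z1 zm z0 : ℝ} {i1 im i0 : ℤ} (e1 : z1 = u + h + i1) (em : zm = u + -h + im) (e0 : z0 = u + 0 + i0)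
    (r1 : R3 κ z1 (ρ - α * (1+v)^2)) (rm : R3 κ zm (ρ - α * (1-v)^2)) (r0 : R3 κ z0 (ρ - α * v^2))
    (r2 : RE κ (u + -(2*h)) (ρ - α * (2-v)^2)) : False := by
  obtain ⟨k1, k2, a1, a2, ha, hh1, hh2⟩ := P
  obtain ⟨-, -, p3, p4, -⟩ := r1
  obtain ⟨-, -, m3, m4, -⟩ := rm
  obtain ⟨-, -, o3, -, -⟩ := r0
  obtain ⟨t1, t2⟩ := r2
  have c1 := lt_quarter k1 k2 p3
  have cm := lt_quarter k1 k2 m3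
  have c0 := lt_quarter k1 k2 o3
  rw [abs_lt] at c1 cm c0
  have n1 := int_pin (i1 - i0) 0 (by push_cast; linarith) (by push_cast; linarith)
  have nm := int_pin (im - i0) 0 (by push_cast; linarith) (by push_cast; linarith)
  push_cast at n1 nm
  have E1 : z1 = z0 + h := by linarith
  have Em : zm = z0 - h := by linarith
  have T2 := t2 i0
  have ap : 0 ≤ α*v := mul_nonneg (by linarith) v0
  have T3 : ρ + 1 ≤ α*(2+v)^2 + κ*(z0+2*h)^2 := by
    rcases row_pt (H.row 2) i0 with q | q
    · exfalso
      have : 0 ≤ κ * (u + h * ((2:ℤ):ℝ) + i0)^2 := by positivity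
      push_cast at q this
      linarith
    · push_cast at q
      have : u + h*2 + i0 = z0 + 2*h := by linarith
      rw [this] at q; linarith
  have E3 : u + -(2*h) + i0 = z0 - 2*h := by linarith
  rw [E3] at T2
  have A1 : 2*h ≤ |z1| + |zm| := by
    have := abs_sub z1 zm
    have : z1 - zm = 2*h := by linarith
    have := le_abs_self (z1 - zm)
    linarith
  have kp : 0 < κ := by linarith
  have A2 := mul_le_mul_of_nonneg_left A1 kp.le
  have s1 : |z1|^2 = (z0+h)^2 := by rw [sq_abs, E1]
  have s2 : |zm|^2 = (z0-h)^2 := by rw [sq_abs, Em]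
  have p4' : κ*(1 + 2*|z1| + (z0+h)^2) ≤ ρ - α*(1+v)^2 := by rw [← s1]; linarith
  have m4' : κ*(1 + 2*|zm| + (z0-h)^2) ≤ ρ - α*(1-v)^2 := by rw [← s2]; linarith
  have B : 0 ≤ κ * (h*(2-3*h)) := mul_nonneg kp.le (mul_nonneg h0 (by linarith))
  linarith

theorem tyI_norm {κ α h u v ρ : ℝ} (P : Par κ α h) (H : Av κ α h u v ρ) (h0 : 0 ≤ h) (v0 : 0 ≤ v)
    (v1 : v ≤ 1/2) (hρ : 0 ≤ ρ)
    (r2 : RE κ (u + -(2*h)) (ρ - α * (2-v)^2)) : TyI κ α h u v ρ := by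
  have P' := P
  obtain ⟨k1, k2, a1, a2, ha, hh1, hh2⟩ := P
  obtain ⟨i0, z0, e0, b0, r0⟩ := H.rd P' 0 0 (v^2) (by simp) (by simp)
  obtain ⟨i1, z1, e1, b1, r1⟩ := H.rd P' 1 h ((1+v)^2) (by simp) (by push_cast; ring)
  obtain ⟨im, zm, em, bm, rm⟩ := H.rd P' (-1) (-h) ((1-v)^2) (by simp) (by push_cast; ring)
  have r2' := r2
  obtain ⟨t1, t2⟩ := r2
  have ap : 0 ≤ α*v := mul_nonneg (by linarith) v0
  have ap2 : α*v ≤ α*(1/2) := mul_le_mul_of_nonneg_left v1 (by linarith)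
  have ap3 : α*v^2 ≤ α*v*(1/2) := by rw [sq, ← mul_assoc]; exact mul_le_mul_of_nonneg_left v1 ap
  -- row 0 nonempty
  have n0 : κ/4 ≤ ρ - α*v^2 := by
    rcases r0 with r | r | r | r | r
    · exfalso; linarith [r.1]
    all_goals linarith [r.1]
  have nm : ¬ RE κ (u + -h) (ρ - α * (1-v)^2) := fun r => by linarith [r.1]
  have n1 : ¬ RE κ (u + h) (ρ - α * (1+v)^2) := fun r => by
    rcases rm with rm | rm | rm | rm | rm
    · exact nm rm
    all_goals linarith [r.1, rm.1]
  rcases r1 with r1 | r1 | r1 | r1 | r1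
  · exact absurd r1 n1
  · rcases rm with rm | rm | rm | rm | rm
    · exact absurd rm nm
    · exact tyI_core P' h0 v0 e1 em b1 bm r1 rm r2'
    · exfalso; linarith [r1.1, r1.2.1, rm.1, rm.2.1]
    · exfalso; linarith [rm.1]
    · exfalso; linarith [rm.1]
  · rcases rm with rm | rm | rm | rm | rm
    · exact absurd rm nm
    · exfalso; linarith [r1.1, r1.2.1, rm.1, rm.2.1]
    · rcases r0 with r0 | r0 | r0 | r0 | r0
      · exfalso; linarith [r0.1]
      · exfalso; linarith [r1.1, r0.2.1]
      · exact (tyI_33 P' H h0 v0 e1 em e0 r1 rm r0 r2').elim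
      · exfalso; linarith [r0.1]
      · exfalso; linarith [r0.1]
    · exfalso; linarith [rm.1]
    · exfalso; linarith [rm.1]
  · exfalso; linarith [r1.1]
  · exfalso; linarith [r1.1]

theorem tyII_c {κ α h u v ρ : ℝ} (P : Par κ α h) (h0 : 0 ≤ h)
    {z1 zm z0 z2 : ℝ} {i1 im i0 i2 : ℤ} (e1 : z1 = u + h + i1) (em : zm = u + -h + im) (e0 : z0 = u + 0 + i0)
    (e2 : z2 = u + -(2*h) + i2) (b1 : |z1| ≤ 1/2) (b2 : |z2| ≤ 1/2)
    (r1 : R2 κ z1 (ρ - α * (1+v)^2)) (rm : R3 κ zm (ρ - α * (1-v)^2)) (r0 : R3 κ z0 (ρ - α * v^2))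
    (r2 : R2 κ z2 (ρ - α * (2-v)^2)) : False := by
  obtain ⟨k1, k2, a1, a2, ha, hh1, hh2⟩ := P
  obtain ⟨p1, -, p3, -, -⟩ := r1
  obtain ⟨-, -, m3, -, m5⟩ := rm
  obtain ⟨-, -, o3, -, o5⟩ := r0
  obtain ⟨t1, -, t3, -, -⟩ := r2
  have cm := lt_quarter k1 k2 m3
  have c0 := lt_quarter k1 k2 o3
  obtain ⟨N1, f1, g1, l1, q1, w1⟩ := half_rep k1 k2 p3 b1
  obtain ⟨N2, f2, g2, l2, q2, w2⟩ := half_rep k1 k2 t3 b2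
  rw [abs_lt] at l1 l2
  have N0 : 3*h = f1 - f2 + ((N1 - N2 - i1 + i2 : ℤ):ℝ) := by push_cast; linarith
  obtain ⟨N, hN⟩ : ∃ N : ℤ, N = N1 - N2 - i1 + i2 := ⟨_, rfl⟩
  rw [← hN] at N0
  have cm' := cm
  have c0' := c0
  rw [abs_lt] at cm' c0'
  have N01 : N = 0 ∨ N = 1 := by
    have u1 : (-1:ℝ) < N := by linarith
    have u2 : (N:ℝ) < 2 := by linarith
    have u1' : -1 < N := by exact_mod_cast u1
    have u2' : N < 2 := by exact_mod_cast u2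
    omega
  rcases N01 with rfl | rfl
  · push_cast at N0
    -- z0 = 1/2 + f1 - h + int
    have E : z0 = 1/2 + f1 - h + ((N1 - i1 + i0 : ℤ):ℝ) := by push_cast; linarith
    obtain ⟨W, hW⟩ : ∃ W : ℤ, W = N1 - i1 + i0 := ⟨_, rfl⟩
    rw [← hW] at E
    have u1 : (-1:ℝ) < W := by linarith
    have u2 : (W:ℝ) < 0 := by linarith
    have u1' : -1 < W := by exact_mod_cast u1
    have u2' : W < 0 := by exact_mod_cast u2
    omega
  · push_cast at N0
    have n := int_pin (i0 - im) 0 (by push_cast; linarith) (by push_cast; linarith)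
    push_cast at n
    have S : h ≤ |z0| + |zm| := by
      have := abs_sub z0 zm
      have : z0 - zm = h := by linarith
      have := le_abs_self (z0 - zm)
      linarith
    have a0 := abs_nonneg z0
    have am := abs_nonneg zm
    have kp : 0 < κ := by linarith
    have key : κ*((2-|z0|)^2 + (2-|zm|)^2) ≤ κ*(8 - 4*h + h^2) := by
      apply mul_le_mul_of_nonneg_left _ kp.le
      nlinarith only [S, a0, am, cm, c0, h0, mul_nonneg a0 am, mul_nonneg (sub_nonneg.2 S) (by linarith : 0 ≤ 4 - h - (|z0|+|zm|))]
    have hb : κ*(7/2 - 4*h + 5*h^2) ≥ 2 := by nlinarith only [key, p1, t1, o5, m5, ha]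
    have : 7/2 - 4*h+5*h^2 ≤ 3 := by nlinarith only [N0, l1, l2, h0, hh2]
    nlinarith only [this, hb, k2, kp]

/-- raw type II data with offset v -/
def TIIa (κ α v ρ : ℝ) : Prop := α*(2-v)^2 + κ ≤ ρ
def TIIb (κ α v ρ : ℝ) : Prop := α*(2-v)^2 + κ/4 ≤ ρ ∧ α*(1+v)^2 + κ ≤ ρ ∧ ρ + 1 ≤ α*(2-v)^2 + 9/4*κ

theorem tri_norm {κ α h u v ρ : ℝ} (P : Par κ α h) (H : Av κ α h u v ρ) (h0 : 0 ≤ h) (v0 : 0 ≤ v)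
    (v1 : v ≤ 1/2) (hρ : 0 ≤ ρ) : TyI κ α h u v ρ ∨ TIIa κ α v ρ ∨ TIIb κ α v ρ := by
  have P' := P
  obtain ⟨k1, k2, a1, a2, ha, hh1, hh2⟩ := P
  obtain ⟨i0, z0, e0, b0, r0⟩ := H.rd P' 0 0 (v^2) (by simp) (by simp)
  obtain ⟨i1, z1, e1, b1, r1⟩ := H.rd P' 1 h ((1+v)^2) (by simp) (by push_cast; ring)
  obtain ⟨im, zm, em, bm, rm⟩ := H.rd P' (-1) (-h) ((1-v)^2) (by simp) (by push_cast; ring)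
  obtain ⟨i2, z2, e2, b2, r2⟩ := H.rd P' (-2) (-(2*h)) ((2-v)^2) (by push_cast; ring) (by push_cast; ring)
  have ap : 0 ≤ α*v := mul_nonneg (by linarith) v0
  have ap2 : α*v ≤ α*(1/2) := mul_le_mul_of_nonneg_left v1 (by linarith)
  have ap3 : α*v^2 ≤ α*v*(1/2) := by rw [sq, ← mul_assoc]; exact mul_le_mul_of_nonneg_left v1 ap
  rcases r2 with r2 | r2 | r2 | r2 | r2
  · left; exact tyI_norm P' H h0 v0 v1 hρ r2
  · rcases r1 with r1 | r1 | r1 | r1 | r1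
    · exfalso; linarith [r1.1, r2.1]
    · exfalso
      rcases r0 with r0 | r0 | r0 | r0 | r0
      · linarith [r0.1, r2.1]
      · linarith [r0.2.1, r2.1]
      · rcases rm with rm | rm | rm | rm | rm
        · linarith [rm.1, r2.1]
        · linarith [rm.2.1, r2.1]
        · exact tyII_c P' h0 e1 em e0 e2 b1 b2 r1 rm r0 r2
        · linarith [rm.1, r1.2.1]
        · linarith [rm.1, r1.2.1]
      · linarith [r0.1, r1.2.1]
      · linarith [r0.1, r1.2.1]
    all_goals
      right; right; exact ⟨by linarith [r2.1], by linarith [r1.1], by linarith [r2.2.1]⟩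
  all_goals right; left; unfold TIIa; linarith [r2.1]

theorem nearest {z w : ℝ} (n : ℤ) (hz : |z| ≤ 1/2) (e : w = z + n) : |z| ≤ |w| := by
  rcases lt_trichotomy n 0 with h | h | h
  · have h' : n ≤ -1 := by omega
    have : (n:ℝ) ≤ -1 := by exact_mod_cast h'
    rw [abs_le] at hz
    have := neg_abs_le w
    exact le_trans (abs_le.2 hz) (by linarith)
  · subst h; simp at e; rw [e]
  · have h' : 1 ≤ n := by omega
    have : (1:ℝ) ≤ n := by exact_mod_cast h'
    rw [abs_le] at hz
    have := le_abs_self w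
    exact le_trans (abs_le.2 hz) (by linarith)

/-- contradiction with the planar volume bound -/
theorem big2 {M κ α : ℝ} (hM : 2*M^2*κ*α^2 ≤ 1) (m k a : ℝ) (h1 : m ≤ M) (h2 : k ≤ κ) (h3 : a ≤ α)
    (m0 : 0 ≤ m) (k0 : 0 ≤ k) (a0 : 0 ≤ a) (hb : 1 < 2*m^2*k*a^2) : False := by
  have := m0.trans h1
  have := k0.trans h2
  have : 2*m^2*k*a^2 ≤ 2*M^2*κ*α^2 := by gcongr
  linarith

/-- refined type IIb data -/
def TB (κ α v ρ : ℝ) : Prop := 28/100 ≤ v ∧ v ≤ 41/100 ∧ α*(2-v)^2 + κ/4 ≤ ρ ∧ α*(1+v)^2 + κ ≤ ρ ∧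
  ρ + 1 ≤ α*(2-v)^2 + 9/4*κ ∧ ρ + 1 ≤ α*(1-v)^2 + 4*κ ∧ κ < 58/100 ∧ 1 ≤ 8*α*v ∧ 1 ≤ 5/4*κ + α*(3-6*v)

theorem IIb_ref {κ α h u v ρ M : ℝ} (P : Par κ α h) (H : Av κ α h u v ρ) (h0 : 0 ≤ h) (v0 : 0 ≤ v)
    (v1 : v ≤ 1/2) (hM : 2*M^2*κ*α^2 ≤ 1) (hR : ρ ≤ α*v^2 + κ/4 + M - 1)
    {z1 z2 : ℝ} {i1 i2 : ℤ} (e1 : z1 = u + h + i1) (e2 : z2 = u + -(2*h) + i2)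
    (b2 : |z2| ≤ 1/2)
    (r2 : R2 κ z2 (ρ - α * (2-v)^2)) (r1 : κ ≤ ρ - α*(1+v)^2)
    (r1' : R3 κ z1 (ρ - α*(1+v)^2) ∨ 9/4*κ ≤ ρ - α*(1+v)^2) :
    TB κ α v ρ := by
  have P' := P
  obtain ⟨k1, k2, a1, a2, ha, hh1, hh2⟩ := P
  obtain ⟨im, zm, em, bm, rm⟩ := H.rd P' (-1) (-h) ((1-v)^2) (by simp) (by push_cast; ring)
  obtain ⟨i3, z3, e3, b3, r3⟩ := H.rd P' 2 (2*h) ((2+v)^2) (by push_cast; ring) (by push_cast; ring)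
  have ap : 0 ≤ α*v := mul_nonneg (by linarith) v0
  have ap2 : α*v ≤ α*(1/2) := mul_le_mul_of_nonneg_left v1 (by linarith)
  have kp : 0 ≤ κ := by linarith
  obtain ⟨t1, t1', t3, -, -⟩ := r2
  obtain ⟨N2, f2, g2, l2, q2, w2⟩ := half_rep k1 k2 t3 b2
  rw [abs_lt] at l2
  -- row -1 with small offset is three-point
  have row3 : |zm| < 3/16 → ρ + 1 ≤ α*(1-v)^2 + 4*κ := by
    intro hz
    rcases rm with rm | rm | rm | rm | rm
    · linarith [rm.1]
    · linarith [rm.2.1]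
    · linarith [rm.2.1]
    · exfalso
      have := rm.2.2.1
      linarith [mul_le_mul_of_nonneg_left hz.le kp]
    · exfalso; linarith [rm.1]
  have row2 : 1 ≤ 8*α*v := by
    by_contra hc
    push Not at hc
    have n3 : κ/4 ≤ ρ - α*(2+v)^2 := by
      rcases r3 with r | r | r | r | r
      · exfalso; linarith [r.1]
      all_goals linarith [r.1]
    have mm : 1 + 4*α ≤ M := by linarith
    have h516 : 5/16 < h := by
      by_contra hc
      push Not at hc
      have : κ*h^2 ≤ κ*(5/16)^2 := mul_le_mul_of_nonneg_left (pow_le_pow_left₀ h0 hc 2) kp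
      exact big2 hM (28/10) (1/2) (45/100) (by linarith) k1 (by linarith) (by norm_num) (by norm_num) (by norm_num) (by norm_num)
    have t3' : 1 ≤ 4*κ*|z3| := by
      rcases r3 with r | r | r | r | r
      · linarith [r.1]
      · exact r.2.2.1
      all_goals exfalso; linarith [r.1]
    obtain ⟨N3, f3, g3, l3, q3, w3⟩ := half_rep k1 k2 t3' b3
    rw [abs_lt] at l3
    have n := int_pin (N3 - N2 - i3 + i2) 2 (by push_cast; linarith) (by push_cast; linarith)
    push_cast at n
    have E : |zm| ≤ |f2 + (f3-f2)/4| := by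
      apply nearest (- N2 + i2 - im - 1) bm
      push_cast; linarith
    have : |f2 + (f3-f2)/4| < 3/16 := by
      rw [abs_lt]; constructor <;> linarith
    linarith [row3 (by linarith)]
  have c3 : R3 κ z1 (ρ - α*(1+v)^2) := by
    rcases r1' with r | r
    · exact r
    · exfalso; linarith
  obtain ⟨-, -, c3, -, -⟩ := c3
  have l1 := lt_quarter k1 k2 c3
  have MR : 1 + 2*α + κ/2 ≤ M := by linarith
  have k58 : κ < 58/100 := by
    by_contra hc
    push Not at hc
    exact big2 hM (216/100) (58/100) (435/1000) (by linarith) hc (by linarith) (by norm_num) (by norm_num) (by norm_num) (by norm_num)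
  rw [abs_lt] at l1
  -- 3h = z1 - 1/2 - f2 + N
  have N0 : 3*h = z1 - 1/2 - f2 + ((-N2 - i1 + i2 : ℤ):ℝ) := by push_cast; linarith
  obtain ⟨N, hN⟩ : ∃ N : ℤ, N = -N2 - i1 + i2 := ⟨_, rfl⟩
  rw [← hN] at N0
  have N01 : N = 1 ∨ N = 2 := by
    have u1 : (0:ℝ) < N := by linarith
    have u2 : (N:ℝ) < 3 := by linarith
    have u1' : 0 < N := by exact_mod_cast u1
    have u2' : N < 3 := by exact_mod_cast u2
    omega
  rcases N01 with rfl | rfl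
  · exfalso
    push_cast at N0
    have ka : κ*z1 ≤ κ*|z1| := mul_le_mul_of_nonneg_left (le_abs_self _) kp
    have kh : 3*(κ*h) = κ*z1 + κ/2 - κ*f2 := by linear_combination κ*N0
    have kh2 : 3*(κ*h) ≤ 3/2*κ - 5/12 := by linarith
    rcases le_or_gt (53/100) κ with c | c
    · have hb : h ≤ 2917/10000 := by
        by_contra hc
        push Not at hc
        linarith [mul_le_mul_of_nonneg_left hc.le kp]
      have : κ*h^2 ≤ κ*(2917/10000)^2 := mul_le_mul_of_nonneg_left (pow_le_pow_left₀ h0 hb 2) kp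
      exact big2 hM (223/100) (53/100) (484/1000) (by linarith) c (by linarith) (by norm_num) (by norm_num) (by norm_num) (by norm_num)
    · have hb : h ≤ 238/1000 := by
        by_contra hc
        push Not at hc
        linarith [mul_le_mul_of_nonneg_left hc.le kp]
      have : κ*h^2 ≤ κ*(238/1000)^2 := mul_le_mul_of_nonneg_left (pow_le_pow_left₀ h0 hb 2) kp
      exact big2 hM (219/100) (1/2) (471/1000) (by linarith) k1 (by linarith) (by norm_num) (by norm_num) (by norm_num) (by norm_num)
  · push_cast at N0
    have hz : |zm| ≤ |(2*f2+z1)/3| := by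
      apply nearest (-N2 + i2 - im - 1) bm
      push_cast; linarith
    have hz2 : |(2*f2+z1)/3| < 3/16 := by
      rw [abs_lt]; constructor <;> linarith
    refine ⟨?_, ?_, by linarith, by linarith, by linarith, row3 (by linarith), k58, row2, by linarith⟩
    · by_contra hc
      push Not at hc
      have : α*v ≤ α*(28/100) := mul_le_mul_of_nonneg_left hc.le (by linarith)
      exact big2 hM (2285/1000) (1/2) (446/1000) (by linarith) k1 (by linarith) (by norm_num) (by norm_num) (by norm_num) (by norm_num)
    · by_contra hc
      push Not at hc
      have : α*(41/100) ≤ α*v := mul_le_mul_of_nonneg_left hc.le (by linarith)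
      linarith

/-- refined type IIa data (`h` is `|h|`) -/
def TA (κ α h v M : ℝ) : Prop := 1 ≤ 8*α*v ∧ 4*κ*h < 1 ∧ κ < 54/100 ∧ 96/100 ≤ α*M

theorem sq_ub {κ x b : ℝ} (kp : 0 ≤ κ) (x0 : 0 ≤ x) (h : x ≤ b) : κ*x^2 ≤ κ*b^2 :=
  mul_le_mul_of_nonneg_left (pow_le_pow_left₀ x0 h 2) kp

theorem IIa_ref {κ α h u v ρ M : ℝ} (P : Par κ α h) (H : Av κ α h u v ρ) (h0 : 0 ≤ h) (v0 : 0 ≤ v)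
    (v1 : v ≤ 1/2) (hM : 2*M^2*κ*α^2 ≤ 1)
    (hR : ∀ i j : ℤ, ρ ≤ κ*(u+i+h*j)^2 + α*(v+j)^2 + M - 1) (hp : α*(2-v)^2 + κ ≤ ρ) :
    TA κ α h v M := by
  have P' := P
  obtain ⟨k1, k2, a1, a2, ha, hh1, hh2⟩ := P
  obtain ⟨i0, z0, e0, b0, r0⟩ := H.rd P' 0 0 (v^2) (by simp) (by simp)
  obtain ⟨i1, z1, e1, b1, r1⟩ := H.rd P' 1 h ((1+v)^2) (by simp) (by push_cast; ring)
  obtain ⟨im, zm, em, bm, rm⟩ := H.rd P' (-1) (-h) ((1-v)^2) (by simp) (by push_cast; ring)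
  obtain ⟨i2, z2, e2, b2, r2⟩ := H.rd P' (-2) (-(2*h)) ((2-v)^2) (by push_cast; ring) (by push_cast; ring)
  obtain ⟨i3, z3, e3, b3, r3⟩ := H.rd P' 2 (2*h) ((2+v)^2) (by push_cast; ring) (by push_cast; ring)
  have ap : 0 ≤ α*v := mul_nonneg (by linarith) v0
  have ap2 : α*v ≤ α*(1/2) := mul_le_mul_of_nonneg_left v1 (by linarith)
  have kp : 0 ≤ κ := by linarith
  have R0 : ρ ≤ α*v^2 + κ*|z0|^2 + M - 1 := by
    have := hR i0 0
    push_cast at this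
    rw [sq_abs, e0]
    ring_nf at this ⊢; linarith
  have Rm : ρ ≤ α*(1-v)^2 + κ*|zm|^2 + M - 1 := by
    have := hR im (-1)
    push_cast at this
    rw [sq_abs, em]
    ring_nf at this ⊢; linarith
  have hR' : ρ ≤ α*v^2 + κ/4 + M - 1 := by
    have := sq_ub kp (abs_nonneg z0) b0
    linarith
  clear hR
  have MR : 1 + 2*α + 3/4*κ ≤ M ∨ ρ < α*(1+v)^2 + κ := by
    rcases le_or_gt (α*(1+v)^2+κ) ρ with c | c
    · left; linarith
    · right; exact c
  -- row 0
  have r0 : R4 κ z0 (ρ - α*v^2) := by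
    rcases r0 with r | r | r | r | r
    · exfalso; linarith [r.1]
    · exfalso; linarith [r.2.1]
    · exfalso; linarith [r.2.1]
    · exact r
    · exfalso
      have := r.1
      exact big2 hM (2875/1000) (1/2) (375/1000) (by linarith) k1 (by linarith) (by norm_num) (by norm_num) (by norm_num) (by norm_num)
  have rm : R4 κ zm (ρ - α*(1-v)^2) := by
    rcases rm with r | r | r | r | r
    · exfalso; linarith [r.1]
    · exfalso; linarith [r.2.1]
    · exfalso; linarith [r.2.1]
    · exact r
    · exfalso
      have := r.1
      exact big2 hM (2875/1000) (1/2) (375/1000) (by linarith) k1 (by linarith) (by norm_num) (by norm_num) (by norm_num) (by norm_num)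
  have n2 : ¬ (9/4*κ ≤ ρ - α*(2-v)^2) := by
    intro r
    exact big2 hM (275/100) (1/2) (375/1000) (by linarith) k1 (by linarith) (by norm_num) (by norm_num) (by norm_num) (by norm_num)
  have r2 : 6*κ*|z2| ≤ 3*κ-1 := by
    rcases r2 with r | r | r | r | r
    · exfalso; linarith [r.1]
    · exfalso; linarith [r.2.1]
    · exact r.2.2.1
    · exfalso; exact n2 r.1
    · exfalso; apply n2; linarith [r.1]
  obtain ⟨-, -, o3, o4, -⟩ := r0
  obtain ⟨-, -, m3, m4, -⟩ := rm
  have l2 := lt_quarter k1 k2 r2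
  have l2' := l2
  rw [abs_lt] at l2
  have n1 : ¬ (9/4*κ ≤ ρ - α*(1+v)^2 ∧ 1 ≤ 8*κ*|z1|) := by
    rintro ⟨r, o1⟩
    have MM : 1 + 2*α + 158/100*κ ≤ M := by linarith
    rcases le_or_gt (52/100) κ with c | c
    · exact big2 hM (26/10) (52/100) (39/100) (by linarith) c (by linarith) (by norm_num) (by norm_num) (by norm_num) (by norm_num)
    have U : ∀ z : ℝ, 1 ≤ 8*κ*|z| → 24/100 < |z| := by
      intro z hz
      by_contra hc
      push Not at hc
      linarith [mul_le_mul_of_nonneg_left hc kp]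
    have U1 := U z1 o1
    have U0 := U z0 o3
    have Um := U zm m3
    have U2 : |z2| < 18/100 := by
      by_contra hc
      push Not at hc
      linarith [mul_le_mul_of_nonneg_left hc kp]
    rw [abs_lt] at U2
    have hb : h ≤ 314/1000 := by
      by_contra hc
      push Not at hc
      -- z2 + 2h < 0.76
      have A : z2 + 2*h < 76/100 := by
        by_contra hc2
        push Not at hc2
        have : |z0| ≤ |z2 + 2*h - 1| := by
          apply nearest (i2 - 1 - i0) b0
          push_cast; linarith
        have : |z2 + 2*h - 1| ≤ 24/100 := by rw [abs_le]; constructor <;> linarith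
        linarith
      have B : ¬ (z2 + 3*h < 124/100) := by
        intro hc2
        have : |z1| ≤ |z2 + 3*h - 1| := by
          apply nearest (i2 - 1 - i1) b1
          push_cast; linarith
        have : |z2 + 3*h - 1| ≤ 24/100 := by rw [abs_le]; constructor <;> linarith
        linarith
      linarith
    have := sq_ub kp h0 hb
    exact big2 hM (269/100) (1/2) (45/100) (by linarith) k1 (by linarith) (by norm_num) (by norm_num) (by norm_num) (by norm_num)
  have r1 : κ ≤ ρ - α*(1+v)^2 ∧ 6*κ*|z1| ≤ 3*κ-1 := by
    rcases r1 with r | r | r | r | r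
    · exfalso; linarith [r.1]
    · exfalso; linarith [r.2.1]
    · exact ⟨r.1, r.2.2.1⟩
    · exfalso; exact n1 ⟨r.1, r.2.2.1⟩
    · exfalso
      have := r.1
      exact big2 hM (2875/1000) (1/2) (375/1000) (by linarith) k1 (by linarith) (by norm_num) (by norm_num) (by norm_num) (by norm_num)
  obtain ⟨c1, r1⟩ := r1
  have MR : 1 + 2*α + 3/4*κ ≤ M := by linarith
  have k56 : κ < 565/1000 := by
    by_contra hc
    push Not at hc
    exact big2 hM (227/100) (565/1000) (423/1000) (by linarith) hc (by linarith) (by norm_num) (by norm_num) (by norm_num) (by norm_num)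
  have th : ∀ z : ℝ, 6*κ*|z| ≤ 3*κ-1 → |z| < 206/1000 := by
    intro z hz
    by_contra hc
    push Not at hc
    linarith [mul_le_mul_of_nonneg_left hc kp]
  have T1 := th z1 r1
  have T2 := th z2 r2
  rw [abs_lt] at T1 T2
  have N0 : 3*h = z1 - z2 + ((i2 - i1 : ℤ):ℝ) := by push_cast; linarith
  obtain ⟨N, hN⟩ : ∃ N : ℤ, N = i2 - i1 := ⟨_, rfl⟩
  rw [← hN] at N0
  have N01 : N = 0 ∨ N = 1 := by
    have u1 : (-1:ℝ) < N := by linarith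
    have u2 : (N:ℝ) < 2 := by linarith
    have u1' : -1 < N := by exact_mod_cast u1
    have u2' : N < 2 := by exact_mod_cast u2
    omega
  rcases N01 with rfl | rfl
  · exfalso
    push_cast at N0
    have := sq_ub kp h0 (by linarith : h ≤ 14/100)
    exact big2 hM (235/100) (1/2) (49/100) (by linarith) k1 (by linarith) (by norm_num) (by norm_num) (by norm_num) (by norm_num)
  push_cast at N0
  have ka1 : κ*z1 ≤ κ*|z1| := mul_le_mul_of_nonneg_left (le_abs_self _) kp
  have ka2 : κ*(-z2) ≤ κ*|z2| := mul_le_mul_of_nonneg_left (neg_le_abs _) kp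
  have kh : 3*(κ*h) = κ*z1 - κ*z2 + κ := by linear_combination κ*N0
  have kh2 : 3*(κ*h) ≤ 2*κ - 1/3 := by linarith
  have hlo : 19/100 ≤ h := by linarith
  have hhi : h ≤ 471/1000 := by linarith
  have usum : |z0| + |zm| ≤ 1 - h := by
    have A : |zm| ≤ |z2 + h| := by
      apply nearest (i2 - im) bm; push_cast; linarith
    have B : |z0| ≤ |z2 + 2*h - 1| := by
      apply nearest (i2 - i0 - 1) b0; push_cast; linarith
    rcases le_or_gt 0 (z2+h) with c | c
    · rw [abs_of_nonneg c] at A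
      rcases le_or_gt 0 (z2+2*h-1) with c' | c'
      · rw [abs_of_nonneg c'] at B; linarith
      · rw [abs_of_neg c'] at B; linarith
    · rw [abs_of_neg c] at A
      rcases le_or_gt 0 (z2+2*h-1) with c' | c'
      · rw [abs_of_nonneg c'] at B; linarith
      · rw [abs_of_neg c'] at B; linarith
  have M2 : 1 + κ*(2+2*h) ≤ M := by
    have := mul_le_mul_of_nonneg_left usum kp
    linarith
  have Mp : 0 < M := by linarith
  have am : κ*(1-h^2)*(1+κ*(2+2*h)) ≤ α*M := by
    apply mul_le_mul ha M2 _ (by linarith)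
    have : 0 ≤ κ*h := mul_nonneg kp h0
    linarith
  have am2 : ∀ k : ℝ, 1/2 ≤ k → k ≤ κ → k*(1-h^2)*(1+k*(2+2*h)) ≤ α*M := by
    intro k hk hkκ
    refine le_trans ?_ am
    have : 0 ≤ 1 - h^2 := by nlinarith only [h0, hh2]
    gcongr
  have hq : 0 ≤ (h - 19/100)*(471/1000 - h) := mul_nonneg (by linarith) (by linarith)
  have hq2 : 0 ≤ h*((h - 19/100)*(471/1000 - h)) := mul_nonneg h0 hq
  have k54 : κ < 54/100 := by
    by_contra hc
    push Not at hc
    have a3 := am2 (54/100) (by norm_num) hc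
    have a4 : 1 ≤ α*M := by nlinarith only [a3, hq, hq2, hlo, hhi]
    have a5 : 1 ≤ (α*M)^2 := by nlinarith only [a4]
    nlinarith only [a5, hM, hc]
  have a96 : 96/100 ≤ α*M := by
    have a3 := am2 (1/2) (by norm_num) k1
    nlinarith only [a3, hq, hq2, hlo, hhi]
  refine ⟨?_, by linarith, k54, a96⟩
  by_contra hc
  push Not at hc
  have n3 : κ/4 ≤ ρ - α*(2+v)^2 := by
    rcases r3 with r | r | r | r | r
    · exfalso; linarith [r.1]
    all_goals linarith [r.1]
  have hb : h ≤ 461/1000 := by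
    by_contra hc
    push Not at hc
    linarith [mul_le_mul_of_nonneg_left hc.le kp]
  have := sq_ub kp h0 hb
  exact big2 hM (2574/1000) (1/2) (3935/10000) (by linarith) k1 (by linarith) (by norm_num) (by norm_num) (by norm_num) (by norm_num)


/-- refined trichotomy, normalised -/
theorem tri_ref_norm {κ α h u v ρ M : ℝ} (P : Par κ α h) (H : Av κ α h u v ρ) (h0 : 0 ≤ h) (v0 : 0 ≤ v)
    (v1 : v ≤ 1/2) (hρ : 0 ≤ ρ) (hM : 2*M^2*κ*α^2 ≤ 1)
    (hR : ∀ i j : ℤ, ρ ≤ κ*(u+i+h*j)^2 + α*(v+j)^2 + M - 1) :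
    TyI κ α h u v ρ ∨ (TA κ α h v M ∧ TIIa κ α v ρ) ∨ TB κ α v ρ := by
  have P' := P
  obtain ⟨k1, k2, a1, a2, ha, hh1, hh2⟩ := P
  obtain ⟨i0, z0, e0, b0, r0⟩ := H.rd P' 0 0 (v^2) (by simp) (by simp)
  obtain ⟨i1, z1, e1, b1, r1⟩ := H.rd P' 1 h ((1+v)^2) (by simp) (by push_cast; ring)
  obtain ⟨i2, z2, e2, b2, r2⟩ := H.rd P' (-2) (-(2*h)) ((2-v)^2) (by push_cast; ring) (by push_cast; ring)
  have kp : 0 ≤ κ := by linarith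
  have ap : 0 ≤ α*v := mul_nonneg (by linarith) v0
  have ap2 : α*v ≤ α*(1/2) := mul_le_mul_of_nonneg_left v1 (by linarith)
  rcases tri_norm P' H h0 v0 v1 hρ with q | q | q
  · exact Or.inl q
  · exact Or.inr (Or.inl ⟨IIa_ref P' H h0 v0 v1 hM hR q, q⟩)
  · have q' := q
    obtain ⟨q1, q2, q3⟩ := q
    right; right
    have hR' : ρ ≤ α*v^2 + κ/4 + M - 1 := by
      have := hR i0 0
      push_cast at this
      have e : (u + i0 + h*0)^2 = |z0|^2 := by rw [sq_abs, e0]; ring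
      rw [e] at this
      have := sq_ub kp (abs_nonneg z0) b0
      rw [add_zero] at *
      linarith
    have r2' : R2 κ z2 (ρ - α*(2-v)^2) := by
      rcases r2 with r | r | r | r | r
      · exfalso; linarith [r.1]
      · exact r
      all_goals exfalso; linarith [r.1]
    refine IIb_ref P' H h0 v0 v1 hM hR' e1 e2 b2 r2' (by linarith) ?_
    rcases r1 with r | r | r | r | r
    · exfalso; linarith [r.1]
    · exfalso; linarith [r.2.1]
    · exact Or.inl r
    · exact Or.inr r.1
    · right; linarith [r.1]

theorem Par.neg {κ α h : ℝ} (P : Par κ α h) : Par κ α (-h) :=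
  ⟨P.k1, P.k2, P.a1, P.a2, by have := P.ha; rw [neg_sq]; exact this, by linarith [P.h2], by linarith [P.h1]⟩

theorem Av.flip {κ α h u v ρ : ℝ} (H : Av κ α h u v ρ) : Av κ α (-h) (-u) v ρ := by
  intro i j
  have := H (-i) j
  have e : (-u + i + -h * j)^2 = (u + ((-i : ℤ):ℝ) + h * j)^2 := by push_cast; ring
  rw [e]; exact this

theorem Av.neg {κ α h u v ρ : ℝ} (H : Av κ α h u v ρ) : Av κ α h (-u) (-v) ρ := by
  intro i j
  have := H (-i) (-j)
  have e : (-u + i + h * j)^2 = (u + ((-i : ℤ):ℝ) + h * ((-j : ℤ):ℝ))^2 := by push_cast; ring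
  have e' : (-v + j)^2 = (v + ((-j : ℤ):ℝ))^2 := by push_cast; ring
  rw [e, e']; exact this

theorem Av.shift {κ α h u v ρ : ℝ} (H : Av κ α h u v ρ) (k : ℤ) : Av κ α h (u + h*k) (v+k) ρ := by
  intro i j
  have := H i (k+j)
  have e : (u + h*k + i + h * j)^2 = (u + i + h * ((k+j : ℤ):ℝ))^2 := by push_cast; ring
  have e' : (v + k + j)^2 = (v + ((k+j : ℤ):ℝ))^2 := by push_cast; ring
  rw [e, e']; exact this

theorem TyI.flip {κ α h u v ρ : ℝ} (H : TyI κ α (-h) (-u) v ρ) : TyI κ α h u v ρ := by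
  obtain ⟨i, j, a, b, c, d, e⟩ := H
  refine ⟨-i, j, a, ?_, ?_, d, e⟩
  · have : u + ((-i:ℤ):ℝ) + h*j = -(-u + i + -h*j) := by push_cast; ring
    rw [this, abs_neg]; exact b
  · rwa [abs_neg] at c

theorem TyI.neg {κ α h u v ρ : ℝ} (H : TyI κ α h (-u) (-v) ρ) : TyI κ α h u v ρ := by
  obtain ⟨i, j, a, b, c, d, e⟩ := H
  have E : |v + ((-j:ℤ):ℝ)| = |-v + j| := by
    have : v + ((-j:ℤ):ℝ) = -(-v + j) := by push_cast; ring
    rw [this, abs_neg]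
  refine ⟨-i, -j, ?_, ?_, c, ?_, ?_⟩
  · rw [E]; exact a
  · have : u + ((-i:ℤ):ℝ) + h*((-j:ℤ):ℝ) = -(-u + i + h*j) := by push_cast; ring
    rw [this, abs_neg]; exact b
  · rw [E]; exact d
  · rw [E]; exact e

theorem TyI.shift {κ α h u v ρ : ℝ} (k : ℤ) (H : TyI κ α h (u+h*k) (v+k) ρ) : TyI κ α h u v ρ := by
  obtain ⟨i, j, a, b, c, d, e⟩ := H
  have E : v + ((k+j:ℤ):ℝ) = v + k + j := by push_cast; ring
  refine ⟨i, k+j, ?_, ?_, c, ?_, ?_⟩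
  · rw [E]; exact a
  · have : u + (i:ℝ) + h*((k+j:ℤ):ℝ) = u + h*k + i + h*j := by push_cast; ring
    rw [this]; exact b
  · rw [E]; exact d
  · rw [E]; exact e

/-- reduction of a symmetric statement to the normalised situation -/
theorem layer_reduce {κ α ρ : ℝ} (S : ℝ → ℝ → ℝ → Prop) (T : ℝ → ℝ → Prop)
    (Sflip : ∀ h u v, S h u v → S (-h) (-u) v) (Sneg : ∀ h u v, S h u v → S h (-u) (-v))
    (Sshift : ∀ h u v, ∀ k : ℤ, S h u v → S h (u+h*k) (v+k))
    (main : ∀ h u v, S h u v → 0 ≤ h → 0 ≤ v → v ≤ 1/2 → TyI κ α h u v ρ ∨ T h v)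
    (h u v : ℝ) (H : S h u v) : TyI κ α h u v ρ ∨ ∃ j : ℤ, |v+j| ≤ 1/2 ∧ T |h| |v+j| := by
  have step1 : ∀ u v, S h u v → 0 ≤ v → v ≤ 1/2 → TyI κ α h u v ρ ∨ T |h| v := by
    intro u v H v0 v1
    rcases le_total 0 h with c | c
    · rw [abs_of_nonneg c]; exact main h u v H c v0 v1
    · rw [abs_of_nonpos c]
      rcases main (-h) (-u) v (Sflip _ _ _ H) (by linarith) v0 v1 with q | q
      · exact Or.inl q.flip
      · exact Or.inr q
  have step2 : ∀ u v, S h u v → |v| ≤ 1/2 → TyI κ α h u v ρ ∨ T |h| |v| := by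
    intro u v H v1
    rcases le_total 0 v with c | c
    · rw [abs_of_nonneg c] at v1 ⊢; exact step1 u v H c v1
    · rw [abs_of_nonpos c] at v1 ⊢
      rcases step1 (-u) (-v) (Sneg _ _ _ H) (by linarith) v1 with q | q
      · exact Or.inl q.neg
      · exact Or.inr q
  obtain ⟨j, hj⟩ := exists_near v
  rcases step2 _ _ (Sshift h u v j H) hj with q | q
  · exact Or.inl (q.shift j)
  · exact Or.inr ⟨j, hj, q⟩

theorem tri_gen {κ α h u v ρ : ℝ} (P : Par κ α h) (H : Av κ α h u v ρ) (hρ : 0 ≤ ρ) :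
    TyI κ α h u v ρ ∨ ∃ j : ℤ, |v+j| ≤ 1/2 ∧ (TIIa κ α |v+j| ρ ∨ TIIb κ α |v+j| ρ) := by
  apply layer_reduce (S := fun h u v => Par κ α h ∧ Av κ α h u v ρ) (T := fun _ v => TIIa κ α v ρ ∨ TIIb κ α v ρ)
  · rintro h u v ⟨a, b⟩; exact ⟨a.neg, b.flip⟩
  · rintro h u v ⟨a, b⟩; exact ⟨a, b.neg⟩
  · rintro h u v k ⟨a, b⟩; exact ⟨a, b.shift k⟩
  · rintro h u v ⟨a, b⟩ h0 v0 v1; exact tri_norm a b h0 v0 v1 hρ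
  · exact ⟨P, H⟩

theorem tri_ref {κ α h u v ρ M : ℝ} (P : Par κ α h) (H : Av κ α h u v ρ) (hρ : 0 ≤ ρ) (hM : 2*M^2*κ*α^2 ≤ 1)
    (hR : ∀ i j : ℤ, ρ ≤ κ*(u+i+h*j)^2 + α*(v+j)^2 + M - 1) :
    TyI κ α h u v ρ ∨ ∃ j : ℤ, |v+j| ≤ 1/2 ∧ ((TA κ α |h| |v+j| M ∧ TIIa κ α |v+j| ρ) ∨ TB κ α |v+j| ρ) := by
  apply layer_reduce (S := fun h u v => Par κ α h ∧ Av κ α h u v ρ ∧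
    ∀ i j : ℤ, ρ ≤ κ*(u+i+h*j)^2 + α*(v+j)^2 + M - 1) (T := fun h v => (TA κ α h v M ∧ TIIa κ α v ρ) ∨ TB κ α v ρ)
  · rintro h u v ⟨a, b, c⟩
    refine ⟨a.neg, b.flip, fun i j => ?_⟩
    have := c (-i) j
    have e : (-u + i + -h * j)^2 = (u + ((-i : ℤ):ℝ) + h * j)^2 := by push_cast; ring
    rw [e]; exact this
  · rintro h u v ⟨a, b, c⟩
    refine ⟨a, b.neg, fun i j => ?_⟩
    have := c (-i) (-j)
    have e : (-u + i + h * j)^2 = (u + ((-i : ℤ):ℝ) + h * ((-j : ℤ):ℝ))^2 := by push_cast; ring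
    have e' : (-v + j)^2 = (v + ((-j : ℤ):ℝ))^2 := by push_cast; ring
    rw [e, e']; exact this
  · rintro h u v k ⟨a, b, c⟩
    refine ⟨a, b.shift k, fun i j => ?_⟩
    have := c i (k+j)
    have e : (u + h*k + i + h * j)^2 = (u + i + h * ((k+j : ℤ):ℝ))^2 := by push_cast; ring
    have e' : (v + k + j)^2 = (v + ((k+j : ℤ):ℝ))^2 := by push_cast; ring
    rw [e, e']; exact this
  · rintro h u v ⟨a, b, c⟩ h0 v0 v1; exact tri_ref_norm a b h0 v0 v1 hρ hM c
  · exact ⟨P, H, hR⟩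

/-- an out layer -/
theorem out_bound {κ α h u v ρ : ℝ} (P : Par κ α h) (H : Av κ α h u v ρ) (hρ : ρ < 0) (i j : ℤ) :
    ρ + 1 ≤ κ*(u+i+h*j)^2 + α*(v+j)^2 := by
  have k := P.k1
  have a := P.a1
  by_contra hc
  push Not at hc
  apply H i j
  refine ⟨lt_of_lt_of_le hρ ?_, hc⟩
  have : 0 ≤ κ := by linarith
  have : 0 ≤ α := by linarith
  positivity

theorem near_pt {κ α : ℝ} (h u v : ℝ) (kp : 0 ≤ κ) (ap : 0 ≤ α) :
    ∃ i j : ℤ, κ*(u+i+h*j)^2 + α*(v+j)^2 ≤ (κ+α)/4 := by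
  obtain ⟨j, hj⟩ := exists_near v
  obtain ⟨i, hi⟩ := exists_near (u + h*j)
  refine ⟨i, j, ?_⟩
  have e : (u+i+h*j)^2 = |u+h*j+i|^2 := by rw [sq_abs]; ring
  have e' : (v+j)^2 = |v+j|^2 := by rw [sq_abs]
  rw [e, e']
  have := sq_ub kp (abs_nonneg _) hi
  have := sq_ub ap (abs_nonneg _) hj
  linarith

theorem near_pt_row {κ α : ℝ} (h u v : ℝ) (kp : 0 ≤ κ) (j : ℤ) :
    ∃ i : ℤ, κ*(u+i+h*j)^2 + α*(v+j)^2 ≤ κ/4 + α*|v+j|^2 := by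
  obtain ⟨i, hi⟩ := exists_near (u + h*j)
  refine ⟨i, ?_⟩
  have e : (u+i+h*j)^2 = |u+h*j+i|^2 := by rw [sq_abs]; ring
  rw [e, sq_abs (v+j)]
  have := sq_ub kp (abs_nonneg _) hi
  linarith

theorem out_bound' {κ α h u v ρ : ℝ} (P : Par κ α h) (H : Av κ α h u v ρ) (hρ : ρ < 0) :
    ρ + 1 ≤ (κ+α)/4 := by
  have k := P.k1
  have a := P.a1
  obtain ⟨i, j, h1⟩ := near_pt (κ := κ) (α := α) h u v (by linarith) (by linarith)
  exact (out_bound P H hρ i j).trans h1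

/-- lower bound in types I and II -/
theorem TII_low {κ α v ρ : ℝ} (v0 : 0 ≤ v) (v1 : v ≤ 1/2) (kp : 0 ≤ κ) (ap : 0 ≤ α) (H : TIIa κ α v ρ ∨ TIIb κ α v ρ) :
    9/4*α + 5/8*κ ≤ ρ := by
  have a1 : 0 ≤ α*v := mul_nonneg ap v0
  have a2 : 0 ≤ α*(1/2-v) := mul_nonneg ap (by linarith)
  have a3 : 0 ≤ α*(1/2-v)^2 := mul_nonneg ap (sq_nonneg _)
  rcases H with H | H
  · unfold TIIa at H; linarith
  · obtain ⟨h1, h2, -⟩ := H; linarith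

theorem TyI.low {κ α h u v ρ : ℝ} (H : TyI κ α h u v ρ) (ap : 0 ≤ α) : α + κ/4 ≤ ρ := by
  obtain ⟨i, j, -, -, -, d, -⟩ := H
  have : 0 ≤ α*|v+j| := mul_nonneg ap (abs_nonneg _)
  have : 0 ≤ α*|v+j|^2 := mul_nonneg ap (sq_nonneg _)
  linarith

theorem TyI.up {κ α h u v ρ : ℝ} (H : TyI κ α h u v ρ) (P : Par κ α h) : ρ + 1 ≤ 4*α + (2*κ-1)^2/2 := by
  have k := P.k1
  have k2 := P.k2
  have a := P.a1
  obtain ⟨i, j, q, -, -, -, d⟩ := H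
  have ap : 0 ≤ α := by linarith
  have h1 : 0 ≤ α*|v+j| := mul_nonneg ap (abs_nonneg _)
  have : |v+j| ≤ 1/2 := by
    by_contra hc
    push Not at hc
    linarith [mul_le_mul_of_nonneg_left hc.le ap]
  have : α*|v+j|^2 ≤ (α*|v+j|) * (1/2) := by rw [sq, ← mul_assoc]; exact mul_le_mul_of_nonneg_left this h1
  linarith

structure Par3 (κ α τ h l M : ℝ) : Prop extends Par κ α h where
  l0 : 0 ≤ l
  l1 : l ≤ 1/2
  t : α*(1-l^2) ≤ τ
  vol : 8/3*M^2*κ*α*τ = 1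
  m : 1 + κ ≤ M

structure HP (κ α τ h g l M u v w r : ℝ) : Prop where
  s1 : ∀ n : ℤ, Av κ α h (u+g*n) (v+l*n) (r - τ*(w+n)^2)
  s2 : ∀ n : ℤ, Av κ α h (u+g*n) (v+l*n) (r + M - τ*(w+n)^2)
  rb : ∀ n i j : ℤ, r - τ*(w+n)^2 ≤ κ*(u+g*n+i+h*j)^2 + α*(v+l*n+j)^2 + M - 1
  ex : ∃ n i j : ℤ, κ*(u+g*n+i+h*j)^2 + α*(v+l*n+j)^2 + τ*(w+n)^2 ≤ r

theorem big3 {κ α τ h l M : ℝ} (P : Par3 κ α τ h l M) (m k a t : ℝ) (h1 : m ≤ M) (h2 : k ≤ κ) (h3 : a ≤ α)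
    (h4 : t ≤ τ)
    (m0 : 0 ≤ m) (k0 : 0 ≤ k) (a0 : 0 ≤ a) (t0 : 0 ≤ t) (hb : 1 < 8/3*m^2*k*a*t) : False := by
  have := m0.trans h1
  have := k0.trans h2
  have := a0.trans h3
  have := t0.trans h4
  have : 8/3*m^2*k*a*t ≤ 8/3*M^2*κ*α*τ := by gcongr
  linarith [P.vol]

theorem Par3.tlow {κ α τ h l M : ℝ} (P : Par3 κ α τ h l M) : 3/4*α ≤ τ := by
  have := P.t
  have h0 := P.l0
  have h1 := P.l1
  have a : 0 ≤ α := by linarith [P.a1, P.k1]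
  have := sq_ub a h0 h1
  linarith

theorem Par3.pl {κ α τ h l M : ℝ} (P : Par3 κ α τ h l M) : 2*M^2*κ*α^2 ≤ 1 := by
  have := P.vol
  have h1 := P.tlow
  have a : 0 ≤ α := by linarith [P.a1, P.k1]
  have k : 0 ≤ κ := by linarith [P.k1]
  have : M^2*κ*α*(3/4*α) ≤ M^2*κ*α*τ := by gcongr
  linarith

theorem Par3.tup {κ α τ h l M : ℝ} (P : Par3 κ α τ h l M) : τ < 889/1000 := by
  by_contra hc
  push Not at hc
  have := P.k1
  have := P.a1
  have := P.m
  exact big3 P (3/2) (1/2) (3/8) (889/1000) (by linarith) (by linarith) (by linarith) hc (by norm_num) (by norm_num) (by norm_num) (by norm_num) (by norm_num)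

theorem cen_bound {κ α s x c : ℝ} (k1 : 1/2 ≤ κ) (a1 : 3/4*κ ≤ α)
    (hs : 4*α*|s| ≤ c*(2*κ-1)) (hx : 4*κ*|x| ≤ c*(2*κ-1)) :
    κ*x^2 + α*s^2 ≤ 7/48*c^2*((2*κ-1)^2/κ) := by
  have kp : 0 < κ := by linarith
  have ap : 0 < α := by linarith
  have e1 : κ*x^2 ≤ c^2*(2*κ-1)^2/(16*κ) := by
    rw [le_div_iff₀ (by positivity)]
    have : (4*κ*|x|)^2 ≤ (c*(2*κ-1))^2 := pow_le_pow_left₀ (by positivity) hx 2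
    have e := sq_abs x
    have : (4*κ)^2*|x|^2 ≤ (c*(2*κ-1))^2 := by rw [← mul_pow]; exact this
    rw [e] at this; linarith
  have e2 : α*s^2 ≤ c^2*(2*κ-1)^2/(16*α) := by
    rw [le_div_iff₀ (by positivity)]
    have : (4*α*|s|)^2 ≤ (c*(2*κ-1))^2 := pow_le_pow_left₀ (by positivity) hs 2
    have e := sq_abs s
    have : (4*α)^2*|s|^2 ≤ (c*(2*κ-1))^2 := by rw [← mul_pow]; exact this
    rw [e] at this; linarith
  have e3 : c^2*(2*κ-1)^2/(16*α) ≤ c^2*(2*κ-1)^2/(12*κ) := by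
    apply div_le_div_of_nonneg_left (by positivity) (by positivity) (by linarith)
  have e4 : 7/48*c^2*((2*κ-1)^2/κ) = c^2*(2*κ-1)^2/(16*κ) + c^2*(2*κ-1)^2/(12*κ) := by
    field_simp; ring
  linarith

/-- output of the analysis in the prism case -/
structure Prism (κ α τ h g l M r : ℝ) : Prop where
  k : κ < 54/100
  tl : 741/1000 ≤ τ
  tl2 : 1 + α + κ/4 - 21/16*((2*κ-1)^2/κ)*1 ≤ 2*τ
  hh : 1 ≤ 4*κ*|h|
  lam : 4*α*l ≤ 2*(2*κ-1)
  gg : ∃ i : ℤ, 4*κ*|g+i| ≤ 2*(2*κ-1)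
  rlo : τ/4 + α + κ/4 ≤ r
  rup : r ≤ τ/4 + M - 1 + 7/48*((2*κ-1)^2/κ)

theorem near_int {x : ℝ} {c : ℝ} (h : |x| ≤ c) : -c ≤ x ∧ x ≤ c := abs_le.1 h

theorem TyI.smallv {α : ℝ} {s c : ℝ} (ap : 0 < α) (b : ℝ) (h : 4*α*|s| ≤ c) (hb : c ≤ 4*α*b) : |s| ≤ b := by
  by_contra hc
  push Not at hc
  linarith [mul_lt_mul_of_pos_left hc ap]

theorem prism {κ α τ h g l M u v y r : ℝ} (P : Par3 κ α τ h l M) (H : HP κ α τ h g l M u v y r)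
    (y0 : 0 ≤ y) (y1 : y ≤ 1/2) (T : TyI κ α h u v (r - τ*y^2)) : Prism κ α τ h g l M r := by
  have PP := P.toPar
  have k1 := P.k1
  have k2 := P.k2
  have a1 := P.a1
  have a2 := P.a2
  have l0 := P.l0
  have l1 := P.l1
  have tt := P.t
  have hm := P.m
  have tup := P.tup
  have tlo := P.tlow
  have kp : 0 < κ := by linarith
  have ap : 0 < α := by linarith
  have tp : 0 < τ := by linarith
  have ty0 : 0 ≤ τ*y := by positivity
  have ty1 : τ*y ≤ τ*(1/2) := mul_le_mul_of_nonneg_left y1 tp.le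
  have ty2 : τ*y^2 ≤ τ*y*(1/2) := by rw [sq, ← mul_assoc]; exact mul_le_mul_of_nonneg_left y1 ty0
  have q2 : (2*κ-1)^2 ≤ 1/9 := by nlinarith only [k1, k2]
  have T' := T
  have Tlow := T.low ap.le
  have Tup := T.up PP
  -- layer -1
  have Lm := H.s1 (-1)
  have em : r - τ*(y + ((-1:ℤ):ℝ))^2 = r - τ*(1-y)^2 := by push_cast; ring
  rw [em] at Lm
  have inm : 0 ≤ r - τ*(1-y)^2 := by
    by_contra hc
    push Not at hc
    have := out_bound' PP Lm hc
    linarith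
  have Tm : TyI κ α h (u+g*((-1:ℤ):ℝ)) (v+l*((-1:ℤ):ℝ)) (r - τ*(1-y)^2) := by
    rcases tri_gen PP Lm inm with q | ⟨j, hj, q⟩
    · exact q
    · exfalso
      have := TII_low (abs_nonneg _) hj kp.le ap.le q
      linarith
  have Tmlow := Tm.low ap.le
  obtain ⟨i0, j0, c1, c2, c3, c4, c5⟩ := T
  obtain ⟨im, jm, d1, d2, d3, d4, d5⟩ := Tm
  have s0 : |v + j0| ≤ 1/6 := TyI.smallv ap (1/6) c1 (by linarith)
  have sm : |v + l*((-1:ℤ):ℝ) + jm| ≤ 1/6 := TyI.smallv ap (1/6) d1 (by linarith)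
  have s0' := near_int s0
  have sm' := near_int sm
  push_cast at sm'
  have nj := int_pin (j0 - jm) 0 (by push_cast; linarith) (by push_cast; linarith)
  push_cast at nj
  have jj : (jm:ℝ) = j0 := by linarith
  rw [jj] at d1 d2 sm'
  push_cast at d1 d2
  -- lambda
  have hl : 4*α*l ≤ 2*(2*κ-1) := by
    have e : l = (v+j0) - (v + l * -1 + j0) := by ring
    have : l ≤ |v+j0| + |v + l * -1 + j0| := by
      calc l = (v+j0) - (v + l * -1 + j0) := e
        _ ≤ |(v+j0) - (v + l * -1 + j0)| := le_abs_self _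
        _ ≤ _ := abs_sub _ _
    linarith [mul_le_mul_of_nonneg_left this ap.le]
  have hl13 : l ≤ 1/3 := by
    by_contra hc
    push Not at hc
    linarith [mul_lt_mul_of_pos_left hc ap]
  have hg : ∃ i : ℤ, 4*κ*|g+i| ≤ 2*(2*κ-1) ∧ i = i0 - im := by
    refine ⟨i0 - im, ?_, rfl⟩
    have : |g + ((i0 - im : ℤ):ℝ)| ≤ |u + i0 + h*j0| + |u + g * -1 + im + h*j0| := by
      have e : g + ((i0 - im : ℤ):ℝ) = (u + i0 + h*j0) - (u + g * -1 + im + h*j0) := by push_cast; ring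
      rw [e]; exact abs_sub _ _
    linarith [mul_le_mul_of_nonneg_left this kp.le]
  obtain ⟨ig, hg, -⟩ := hg
  have tl89 : 8/9*α ≤ τ := by
    have := sq_ub ap.le l0 hl13
    linarith
  -- layer 1 is out
  have L1 := H.s1 1
  have e1 : r - τ*(y + ((1:ℤ):ℝ))^2 = r - τ*(1+y)^2 := by push_cast; ring
  rw [e1] at L1
  have out1 : r - τ*(1+y)^2 < 0 := by
    by_contra hc
    push Not at hc
    have : α + κ/4 ≤ r - τ*(1+y)^2 := by
      rcases tri_gen PP L1 hc with q | ⟨j, hj, q⟩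
      · exact q.low ap.le
      · have := TII_low (abs_nonneg _) hj kp.le ap.le q
        linarith
    linarith
  have ob := out_bound PP L1 out1 (i0 + ig) j0
  push_cast at ob
  have cb := cen_bound (κ := κ) (α := α) (s := v + l*1 + j0) (x := u + g*1 + (i0+ig) + h*j0) (c := 3) k1 a1 (by
      have : |v + l*1 + j0| ≤ |v+j0| + l := by
        have : v + l*1+j0 = (v+j0) + l := by ring
        rw [this]
        exact (abs_add_le _ _).trans (by rw [abs_of_nonneg l0])
      linarith [mul_le_mul_of_nonneg_left this ap.le]) (by
      have : |u + g*1 + (i0+ig) + h*j0| ≤ |u+i0+h*j0| + |g+ig| := by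
        have : u + g*1 + (i0+ig) + h*j0 = (u+i0+h*j0) + (g+ig) := by ring
        rw [this]
        exact abs_add_le _ _
      linarith [mul_le_mul_of_nonneg_left this kp.le])
  have main : 1 + α + κ/4 - 21/16*((2*κ-1)^2/κ)*1 ≤ 2*τ := by linarith
  have k60 : κ < 60/100 := by
    by_contra hc
    push Not at hc
    have : (2*κ-1)^2/κ ≤ 1/6 := by
      rw [div_le_iff₀ kp]; nlinarith only [hc, k2]
    exact big3 P (16/10) (6/10) (45/100) (69/100) (by linarith) (by linarith) (by linarith) (by linarith) (by norm_num) (by norm_num) (by norm_num) (by norm_num) (by norm_num)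
  have k54 : κ < 54/100 := by
    by_contra hc
    push Not at hc
    have : (2*κ-1)^2/κ ≤ 667/10000 := by
      rw [div_le_iff₀ kp]; nlinarith only [hc, k60]
    exact big3 P (154/100) (54/100) (405/1000) (726/1000) (by linarith) (by linarith) (by linarith) (by linarith) (by norm_num) (by norm_num) (by norm_num) (by norm_num) (by norm_num)
  have qk : (2*κ-1)^2/κ ≤ 128/10000 := by
    rw [div_le_iff₀ kp]; nlinarith only [k1, k54]
  have cb0 := cen_bound (κ := κ) (α := α) (s := v + j0) (x := u + i0 + h*j0) (c := 1) k1 a1 (by linarith) (by linarith)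
  have rb := H.rb 0 i0 j0
  push_cast at rb
  rw [mul_zero, mul_zero, add_zero, add_zero, add_zero] at rb
  have hy4 : 0 ≤ τ*(1/2-y)^2 := by positivity
  have hrl : τ/4 + α + κ/4 ≤ r := by linarith [ty1, Tmlow]
  exact ⟨k54, by linarith, main, c3, hl, ⟨ig, hg⟩, hrl, by linarith⟩

def AvZ (κ α τ h g l U V W ρ : ℝ) : Prop := ∀ n : ℤ, Av κ α h (U+g*n) (V+l*n) (ρ - τ*(W+n)^2)

theorem shift_bd {c s x y b d : ℝ} (cp : 0 < c) (e : s = x + y) (hx : 4*c*|x| ≤ b) (hy : 4*c*|y| ≤ d) :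
    4*c*|s| ≤ b + d := by
  have : |s| ≤ |x| + |y| := by rw [e]; exact abs_add_le _ _
  linarith [mul_le_mul_of_nonneg_left this cp.le]

/-- a lattice nearly centred at a lattice point hits the shell -/
theorem centred {κ α h u v ρ S X E : ℝ} (kp : 0 < κ) (ap : 0 < α) (h1 : -1/2 ≤ h) (h2 : h ≤ 1/2)
    (H : Av κ α h u v ρ) (i j : ℤ) (hs : |v+j| ≤ S) (hx : |u+i+h*j| ≤ X) (hE : 1-2*|h| ≤ E)
    (c1 : ρ < 4*κ) (c2 : α*(2+S)^2 + κ*(X+E)^2 < ρ+1) (c3 : 4*α ≤ ρ → κ*(2+X)^2 + α*S^2 < ρ+1) : False := by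
  have hs' := abs_le.1 hs
  have hx' := abs_le.1 hx
  have S0 : 0 ≤ S := (abs_nonneg _).trans hs
  have X0 : 0 ≤ X := (abs_nonneg _).trans hx
  rcases lt_or_ge ρ (4*α) with c | c
  · -- a sign choice for the row
    obtain ⟨e, he⟩ : ∃ e : ℤ, |h*2 - e| ≤ E := by
      rcases le_total 0 h with q | q
      · refine ⟨1, ?_⟩
        rw [abs_of_nonneg q] at hE
        rw [abs_le]; push_cast; constructor <;> linarith
      · refine ⟨-1, ?_⟩
        rw [abs_of_nonpos q] at hE
        rw [abs_le]; push_cast; constructor <;> linarith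
    have he' := abs_le.1 he
    rcases le_total 0 (v+j) with q | q
    · apply H (i - e) (j + 2)
      push_cast
      have A1 : (2:ℝ)^2 ≤ (v+(j+2))^2 := pow_le_pow_left₀ (by norm_num) (by linarith) 2
      have A2 : (v+(j+2))^2 ≤ (2+S)^2 := pow_le_pow_left₀ (by linarith) (by linarith) 2
      have A3 : (u+(i-e)+h*(j+2))^2 ≤ (X+E)^2 := sq_le_sq' (by linarith) (by linarith)
      have := mul_le_mul_of_nonneg_left A1 ap.le
      have := mul_le_mul_of_nonneg_left A2 ap.le
      have := mul_le_mul_of_nonneg_left A3 kp.le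
      have := mul_nonneg kp.le (sq_nonneg (u+(i-e)+h*(j+2)))
      constructor <;> linarith
    · apply H (i + e) (j - 2)
      push_cast
      have E1 : (v+(j-2))^2 = (-(v+j)+2)^2 := by ring
      have A1 : (2:ℝ)^2 ≤ (-(v+j)+2)^2 := pow_le_pow_left₀ (by norm_num) (by linarith) 2
      have A2 : (-(v+j)+2)^2 ≤ (2+S)^2 := pow_le_pow_left₀ (by linarith) (by linarith) 2
      have A3 : (u+(i+e)+h*(j-2))^2 ≤ (X+E)^2 := sq_le_sq' (by linarith) (by linarith)
      have := mul_le_mul_of_nonneg_left A1 ap.le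
      have := mul_le_mul_of_nonneg_left A2 ap.le
      have := mul_le_mul_of_nonneg_left A3 kp.le
      have := mul_nonneg kp.le (sq_nonneg (u+(i+e)+h*(j-2)))
      rw [E1]
      constructor <;> linarith
  · have c3 := c3 c
    have A4 : (v+j)^2 ≤ S^2 := sq_le_sq' (by linarith) (by linarith)
    have B4 := mul_le_mul_of_nonneg_left A4 ap.le
    have B5 := mul_nonneg ap.le (sq_nonneg (v+j))
    rcases le_total 0 (u+i+h*j) with q | q
    · apply H (i+2) j
      push_cast
      have A1 : (2:ℝ)^2 ≤ (u+(i+2)+h*j)^2 := pow_le_pow_left₀ (by norm_num) (by linarith) 2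
      have A2 : (u+(i+2)+h*j)^2 ≤ (2+X)^2 := pow_le_pow_left₀ (by linarith) (by linarith) 2
      have := mul_le_mul_of_nonneg_left A1 kp.le
      have := mul_le_mul_of_nonneg_left A2 kp.le
      constructor <;> linarith
    · apply H (i-2) j
      push_cast
      have E1 : (u+(i-2)+h*j)^2 = (-(u+i+h*j)+2)^2 := by ring
      have A1 : (2:ℝ)^2 ≤ (-(u+i+h*j)+2)^2 := pow_le_pow_left₀ (by norm_num) (by linarith) 2
      have A2 : (-(u+i+h*j)+2)^2 ≤ (2+X)^2 := pow_le_pow_left₀ (by linarith) (by linarith) 2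
      have := mul_le_mul_of_nonneg_left A1 kp.le
      have := mul_le_mul_of_nonneg_left A2 kp.le
      rw [E1]
      constructor <;> linarith

theorem le_of_four {c x b d : ℝ} (cp : 0 < c) (h : 4*c*x ≤ d) (hb : d ≤ 4*c*b) : x ≤ b := by
  by_contra hc
  push Not at hc
  linarith [mul_lt_mul_of_pos_left hc cp]

/-- common numerical consequences -/
theorem prism_num {κ α τ h g l M r : ℝ} (P : Par3 κ α τ h l M) (R : Prism κ α τ h g l M r) :
    M ≤ 1645/1000 ∧ α < 43/100 ∧ (2*κ-1)^2/κ ≤ 128/10000 ∧ 1-2*|h| ≤ 75/1000 := by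
  have k1 := P.k1
  have a1 := P.a1
  have hm := P.m
  have k54 := R.k
  have kp : 0 < κ := by linarith
  have qk : (2*κ-1)^2/κ ≤ 128/10000 := by
    rw [div_le_iff₀ kp]; nlinarith only [k1, k54]
  have rl := R.rlo
  have ru := R.rup
  have tl := R.tl
  have tl2 := R.tl2
  refine ⟨?_, ?_, qk, ?_⟩
  · by_contra hc
    push Not at hc
    exact big3 P (1645/1000) (1/2) (3/8) (741/1000) hc.le k1 (by linarith) tl (by norm_num) (by norm_num) (by norm_num) (by norm_num) (by norm_num)
  · by_contra hc
    push Not at hc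
    exact big3 P (155/100) (1/2) (43/100) (768/1000) (by linarith) k1 (by linarith) (by linarith) (by norm_num) (by norm_num) (by norm_num) (by norm_num) (by norm_num)
  · have := R.hh
    have : |h| * (54/100) ≥ |h| * κ := mul_le_mul_of_nonneg_left k54.le (abs_nonneg _)
    linarith

theorem prismB {κ α τ h g l M r N U V W : ℝ} (P : Par3 κ α τ h l M) (R : Prism κ α τ h g l M r)
    (n1 : 4+4*α+κ+τ-4*M ≤ N) (n2 : N ≤ τ + 7/12*((2*κ-1)^2/κ)) (w0 : 0 ≤ W) (w1 : W ≤ 1/2)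
    (H : AvZ κ α τ h g l U V W (N+M-1)) : False := by
  obtain ⟨Mu, au, qk, hE⟩ := prism_num P R
  have PP := P.toPar
  have k1 := P.k1
  have a1 := P.a1
  have l0 := P.l0
  have tup := P.tup
  have tl := R.tl
  have k54 := R.k
  have hl := R.lam
  obtain ⟨ig, hg⟩ := R.gg
  have kp : 0 < κ := by linarith
  have ap : 0 < α := by linarith
  have tp : 0 < τ := by linarith
  have ty0 : 0 ≤ τ*W := by positivity
  have ty1 : τ*W ≤ τ*(1/2) := mul_le_mul_of_nonneg_left w1 tp.le
  have ty2 : τ*W^2 ≤ τ*W*(1/2) := by rw [sq, ← mul_assoc]; exact mul_le_mul_of_nonneg_left w1 ty0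
  have ty3 : 0 ≤ τ*W^2 := by positivity
  have q2 : (2*κ-1)^2 ≤ 64/10000 := by nlinarith only [k1, k54]
  have L0 := H 0
  have Lm := H (-1)
  have L1 := H 1
  have e0 : N+M-1 - τ*(W + ((0:ℤ):ℝ))^2 = N+M-1 - τ*W^2 := by push_cast; ring
  have em : N+M-1 - τ*(W + ((-1:ℤ):ℝ))^2 = N+M-1 - τ*(1-W)^2 := by push_cast; ring
  have e1 : N+M-1 - τ*(W + ((1:ℤ):ℝ))^2 = N+M-1 - τ*(1+W)^2 := by push_cast; ring
  rw [e0] at L0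
  rw [em] at Lm
  rw [e1] at L1
  have in0 : 0 ≤ N+M-1 - τ*W^2 := by
    by_contra hc
    push Not at hc
    have := out_bound' PP L0 hc
    linarith
  have inm : 0 ≤ N+M-1 - τ*(1-W)^2 := by
    by_contra hc
    push Not at hc
    have := out_bound' PP Lm hc
    linarith
  have low0 : 9/4*α + 5/8*κ ≤ N+M-1 - τ*W^2 := by
    rcases tri_gen PP L0 in0 with q | ⟨j, hj, q⟩
    · exfalso
      have := q.up PP
      linarith
    · exact TII_low (abs_nonneg _) hj kp.le ap.le q
  have cen : ∀ i j : ℤ, 4*α*|V + l*((0:ℤ):ℝ) + j| ≤ 3*(2*κ-1) → 4*κ*|U+g*((0:ℤ):ℝ) + i + h*j| ≤ 3*(2*κ-1) → False := by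
    intro i j h1 h2
    refine centred (S := 16/100) (X := 12/100) (E := 75/1000) kp ap (by linarith [P.h1]) P.h2 L0 i j (le_of_four ap h1 (by linarith))
      (le_of_four kp h2 (by linarith)) hE ?_ ?_ ?_
    · linarith
    · linarith
    · intro; linarith
  have lowm : 9/4*α + 5/8*κ ≤ N+M-1 - τ*(1-W)^2 := by
    rcases tri_gen PP Lm inm with q | ⟨j, hj, q⟩
    · exfalso
      obtain ⟨i, j, c1, c2, -⟩ := q
      have A := shift_bd (s := V + l*((0:ℤ):ℝ) + j) (y := l) (d := 2*(2*κ-1)) ap (by push_cast; ring) c1 (by rw [abs_of_nonneg l0]; exact hl)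
      have B := shift_bd (s := U + g*((0:ℤ):ℝ) + ((i+ig:ℤ):ℝ) + h*j) (y := g+ig) kp (by push_cast; ring) c2 hg
      exact cen (i+ig) j (by linarith) (by linarith)
    · exact TII_low (abs_nonneg _) hj kp.le ap.le q
  have in1 : 0 ≤ N+M-1 - τ*(1+W)^2 := by
    by_contra hc
    push Not at hc
    have := out_bound' PP L1 hc
    linarith
  rcases tri_gen PP L1 in1 with q | ⟨j, hj, q⟩
  · obtain ⟨i, j, c1, c2, -⟩ := q
    have A := shift_bd (s := V + l*((0:ℤ):ℝ) + j) (y := -l) (d := 2*(2*κ-1)) ap (by push_cast; ring) c1 (by rw [abs_neg, abs_of_nonneg l0]; exact hl)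
    have B := shift_bd (s := U + g*((0:ℤ):ℝ) + ((i-ig:ℤ):ℝ) + h*j) (y := -(g+ig)) (d := 2*(2*κ-1)) kp (by push_cast; ring) c2 (by rw [abs_neg]; exact hg)
    exact cen (i-ig) j (by linarith) (by linarith)
  · have := TII_low (abs_nonneg _) hj kp.le ap.le q
    linarith

theorem prismA {κ α τ h g l M r N U V W : ℝ} (P : Par3 κ α τ h l M) (R : Prism κ α τ h g l M r)
    (n1 : 4+4*α+κ+τ-4*M ≤ N) (n2 : N ≤ τ + 7/12*((2*κ-1)^2/κ)) (w0 : 0 ≤ W) (w1 : W ≤ 1/2)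
    (H : AvZ κ α τ h g l U V W (N-1)) (H2 : AvZ κ α τ h g l U V W (N+2*M-1)) : False := by
  obtain ⟨Mu, -, qk, hE⟩ := prism_num P R
  have PP := P.toPar
  have k1 := P.k1
  have a1 := P.a1
  have l0 := P.l0
  have tup := P.tup
  have tl := R.tl
  have tl2 := R.tl2
  have hl := R.lam
  have k54 := R.k
  obtain ⟨ig, hg⟩ := R.gg
  have kp : 0 < κ := by linarith
  have ap : 0 < α := by linarith
  have tp : 0 < τ := by linarith
  have ty0 : 0 ≤ τ*W := by positivity
  have ty1 : τ*W ≤ τ*(1/2) := mul_le_mul_of_nonneg_left w1 tp.le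
  have ty2 : τ*W^2 ≤ τ*W*(1/2) := by rw [sq, ← mul_assoc]; exact mul_le_mul_of_nonneg_left w1 ty0
  have ty3 : 0 ≤ τ*W^2 := by positivity
  have L0 := H 0
  have e0 : N-1 - τ*(W + ((0:ℤ):ℝ))^2 = N-1 - τ*W^2 := by push_cast; ring
  rw [e0] at L0
  have ob := out_bound' PP L0 (by linarith)
  have k515 : κ < 515/1000 := by
    by_contra hc
    push Not at hc
    exact big3 P (1599/1000) (515/1000) (38625/100000) (749/1000) (by linarith) (by linarith) (by linarith) (by linarith) (by norm_num) (by norm_num) (by norm_num) (by norm_num) (by norm_num)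
  have qk2 : (2*κ-1)^2/κ ≤ 18/10000 := by
    rw [div_le_iff₀ kp]; nlinarith only [k1, k515]
  have a39 : α < 39/100 := by
    by_contra hc
    push Not at hc
    exact big3 P (160/100) (1/2) (39/100) (756/1000) (by linarith) (by linarith) (by linarith) (by linarith) (by norm_num) (by norm_num) (by norm_num) (by norm_num) (by norm_num)
  have t80 : τ < 8/10 := by
    by_contra hc
    push Not at hc
    exact big3 P (159/100) (1/2) (375/1000) (8/10) (by linarith) (by linarith) (by linarith) (by linarith) (by norm_num) (by norm_num) (by norm_num) (by norm_num) (by norm_num)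
  have q2 : (2*κ-1)^2 ≤ 9/10000 := by nlinarith only [k1, k515]
  have L2 := H2 (-2)
  have e2 : N+2*M-1 - τ*(W + ((-2:ℤ):ℝ))^2 = N+2*M-1 - τ*(2-W)^2 := by push_cast; ring
  rw [e2] at L2
  have L1 := H2 1
  have e1 : N+2*M-1 - τ*(W + ((1:ℤ):ℝ))^2 = N+2*M-1 - τ*(1+W)^2 := by push_cast; ring
  rw [e1] at L1
  have in2 : 0 ≤ N+2*M-1 - τ*(2-W)^2 := by
    by_contra hc
    push Not at hc
    have := out_bound' PP L2 hc
    linarith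
  have T2 : TyI κ α h (U+g*((-2:ℤ):ℝ)) (V+l*((-2:ℤ):ℝ)) (N+2*M-1 - τ*(2-W)^2) := by
    rcases tri_gen PP L2 in2 with q | ⟨j, hj, q⟩
    · exact q
    · exfalso
      have := TII_low (abs_nonneg _) hj kp.le ap.le q
      linarith
  have up := T2.up PP
  have low := T2.low ap.le
  have w42 : W < 42/100 := by
    by_contra hc
    push Not at hc
    have : 0 ≤ τ*((W-42/100)*(358/100-W)) := mul_nonneg tp.le (mul_nonneg (by linarith) (by linarith))
    linarith
  have ty4 : τ*W ≤ τ*(42/100) := mul_le_mul_of_nonneg_left w42.le tp.le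
  obtain ⟨i, j, c1, c2, -⟩ := T2
  have A := shift_bd (s := V + l*((1:ℤ):ℝ) + j) (y := 3*l) (d := 6*(2*κ-1)) ap (by push_cast; ring) c1 (by rw [abs_of_nonneg (by linarith)]; linarith)
  have B := shift_bd (s := U + g*((1:ℤ):ℝ) + ((i+3*ig:ℤ):ℝ) + h*j) (y := 3*(g+ig)) (d := 6*(2*κ-1)) kp (by push_cast; ring) c2 (by
    rw [abs_mul, abs_of_nonneg (by norm_num : (0:ℝ) ≤ 3)]; linarith)
  refine centred (S := 14/100) (X := 105/1000) (E := 3/100) kp ap (by linarith [P.h1]) P.h2 L1 (i+3*ig) j (le_of_four ap A (by linarith))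
      (le_of_four kp B (by linarith)) ?_ ?_ ?_ ?_
  · have := R.hh
    have : |h| * (515/1000) ≥ |h| * κ := mul_le_mul_of_nonneg_left k515.le (abs_nonneg _)
    linarith
  · linarith
  · linarith
  · intro; linarith

def TT (κ α h s ρ M : ℝ) : Prop := (TA κ α |h| s M ∧ TIIa κ α s ρ) ∨ TB κ α s ρ

theorem TB.toB {κ α s ρ : ℝ} (T : TB κ α s ρ) : TIIb κ α s ρ := ⟨T.2.2.1, T.2.2.2.1, T.2.2.2.2.1⟩

theorem TT.low {κ α h s ρ M : ℝ} (T : TT κ α h s ρ M) (s0 : 0 ≤ s) (s1 : s ≤ 1/2) (kp : 0 ≤ κ) (ap : 0 ≤ α) :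
    9/4*α + 5/8*κ ≤ ρ := by
  rcases T with T | T
  · exact TII_low s0 s1 kp ap (Or.inl T.2)
  · exact TII_low s0 s1 kp ap (Or.inr T.toB)

theorem TT.mlow {κ α h s ρ M : ℝ} (T : TT κ α h s ρ M) (s1 : s ≤ 1/2) (kp : 0 ≤ κ) (ap : 0 ≤ α)
    (hr : ρ ≤ κ/4 + α*s^2 + M - 1) : 1 + 2*α + κ/2 ≤ M := by
  have := mul_le_mul_of_nonneg_left s1 ap
  rcases T with T | T
  · have := T.2
    unfold TIIa at this
    linarith
  · obtain ⟨h1, h2, -⟩ := T.toB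
    linarith

theorem lay {κ α τ h g l M u v y r : ℝ} (P : Par3 κ α τ h l M) (H : HP κ α τ h g l M u v y r) (n : ℤ) (R : ℝ)
    (hR : r - τ*(y+n)^2 = R) (h0 : 0 ≤ R) :
    TyI κ α h (u+g*n) (v+l*n) R ∨ ∃ j : ℤ, |v+l*n+j| ≤ 1/2 ∧ TT κ α h |v+l*n+j| R M ∧
      R ≤ κ/4 + α*|v+l*n+j|^2 + M - 1 := by
  subst hR
  rcases tri_ref P.toPar (H.s1 n) h0 P.pl (fun i j => H.rb n i j) with q | ⟨j, hj, q⟩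
  · exact Or.inl q
  · refine Or.inr ⟨j, hj, q, ?_⟩
    obtain ⟨i, hi⟩ := near_pt_row (κ := κ) (α := α) h (u+g*n) (v+l*n) (by linarith [P.k1]) j
    have := H.rb n i j
    linarith

theorem arc {x c : ℝ} (j : ℤ) (h1 : c < |x+j|) (h2 : |x+j| ≤ 1/2) : ∃ k : ℤ, c < x+k ∧ x+k < 1-c := by
  rcases le_total 0 (x+j) with q | q
  · rw [abs_of_nonneg q] at h1 h2
    exact ⟨j, h1, by linarith⟩
  · rw [abs_of_nonpos q] at h1 h2
    refine ⟨j+1, ?_, ?_⟩ <;> push_cast <;> linarith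

/-- three equally spaced layers off the integers -/
theorem three_arc {v l c : ℝ} (l0 : 0 ≤ l) (l1 : l ≤ 1/2) (hc : 1/4 ≤ c) (ja jb jc : ℤ)
    (a1 : c < |v - l + ja|) (a2 : |v - l + ja| ≤ 1/2) (b1 : c < |v + jb|) (b2 : |v + jb| ≤ 1/2)
    (c1 : c < |v + l + jc|) (c2 : |v + l + jc| ≤ 1/2) :
    ∃ k : ℤ, c < v - l + k ∧ v + l + k < 1 - c := by
  obtain ⟨p, p1, p2⟩ := arc ja a1 a2
  obtain ⟨q, q1, q2⟩ := arc jb b1 b2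
  obtain ⟨s, s1, s2⟩ := arc jc c1 c2
  have e1 := int_pin (p - q) 0 (by push_cast; linarith) (by push_cast; linarith)
  have e2 := int_pin (s - q) 0 (by push_cast; linarith) (by push_cast; linarith)
  push_cast at e1 e2
  exact ⟨q, by linarith, by linarith⟩

theorem quarter_lt {α s : ℝ} (a : α < 1/2) (ap : 0 < α) (h : 1 ≤ 8*α*s) : 1/4 < s := by
  by_contra hc
  push Not at hc
  linarith [mul_le_mul_of_nonneg_left hc ap.le]

theorem TT.quarter {κ α h s ρ M : ℝ} (T : TT κ α h s ρ M) (a : α < 1/2) (ap : 0 < α) : 1/4 < s := by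
  rcases T with T | T
  · exact quarter_lt a ap T.1.1
  · linarith [T.1]

theorem no_TA {κ α τ h l M v : ℝ} (P : Par3 κ α τ h l M) (ja jb jc : ℤ)
    (a1 : 1/4 < |v - l + ja|) (a2 : |v - l + ja| ≤ 1/2) (b1 : 1/4 < |v + jb|) (b2 : |v + jb| ≤ 1/2)
    (c1 : 1/4 < |v + l + jc|) (c2 : |v + l + jc| ≤ 1/2) (T : 96/100 ≤ α*M) : False := by
  obtain ⟨k, h1, h2⟩ := three_arc P.l0 P.l1 le_rfl ja jb jc a1 a2 b1 b2 c1 c2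
  have ap : 0 < α := by linarith [P.a1, P.k1]
  have kp : 0 < κ := by linarith [P.k1]
  have k1 := P.k1
  have := sq_ub ap.le P.l0 (b := 1/4) (by linarith)
  have tt : 15/16*α ≤ τ := by linarith [P.t]
  have e1 : 8/3*κ*(15/16)*(α*M)^2 ≤ 8/3*M^2*κ*α*τ := by
    have : 8/3*M^2*κ*α*(15/16*α) ≤ 8/3*M^2*κ*α*τ := mul_le_mul_of_nonneg_left tt (by positivity)
    linarith
  have e2 : (96/100)^2 ≤ (α*M)^2 := pow_le_pow_left₀ (by norm_num) T 2
  have e3 : 8/3*(1/2)*(15/16)*(96/100)^2 ≤ 8/3*κ*(15/16)*(α*M)^2 := by gcongr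
  have := P.vol
  norm_num at e3
  linarith

theorem three_TB {κ α τ h l M v : ℝ} (P : Par3 κ α τ h l M) (ja jb jc : ℤ)
    (a1 : 28/100 ≤ |v - l + ja|) (a2 : |v - l + ja| ≤ 41/100) (b1 : 28/100 ≤ |v + jb|) (b2 : |v + jb| ≤ 41/100)
    (c1 : 28/100 ≤ |v + l + jc|) (c2 : |v + l + jc| ≤ 41/100) (hM : 1 + τ + 9/4*α + 3/8*κ - α*|v+jb|^2 ≤ M) : False := by
  obtain ⟨k, h1, h2⟩ := three_arc (v := v) (l := l) (c := 279/1000) P.l0 P.l1 (by norm_num) ja jb jc (by linarith) (by linarith)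
    (by linarith) (by linarith) (by linarith) (by linarith)
  have ap : 0 < α := by linarith [P.a1, P.k1]
  have k1 := P.k1
  have a1 := P.a1
  have l0 := P.l0
  have hl : l ≤ 131/1000 := by
    rcases le_total 0 (v+jb) with q | q
    · rw [abs_of_nonneg q] at b1 b2
      have e := int_pin (jb - k) 0 (by push_cast; linarith) (by push_cast; linarith)
      push_cast at e
      linarith
    · rw [abs_of_nonpos q] at b1 b2
      have e := int_pin (jb - k) (-1) (by push_cast; linarith) (by push_cast; linarith)
      push_cast at e
      linarith
  have := sq_ub ap.le l0 hl
  have := sq_ub ap.le (abs_nonneg _) b2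
  have := P.t
  exact big3 P (2336/1000) (1/2) (3/8) (3685/10000) (by linarith) (by linarith) (by linarith) (by linarith) (by norm_num) (by norm_num) (by norm_num) (by norm_num) (by norm_num)

theorem TyI.small {κ α h u v ρ : ℝ} (T : TyI κ α h u v ρ) (k1 : 1/2 ≤ κ) (a1 : 3/4*κ ≤ α) (k : κ < 578/1000) :
    ∃ i j : ℤ, 4*α*|v+j| ≤ 2*κ-1 ∧ 4*κ*|u+i+h*j| ≤ 2*κ-1 ∧ α*(1+|v+j|)^2+κ/4 ≤ ρ ∧ |v+j| < 9/100 := by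
  obtain ⟨i, j, c1, c2, -, c4, -⟩ := T
  refine ⟨i, j, c1, c2, c4, ?_⟩
  by_contra hc
  push Not at hc
  have := mul_le_mul_of_nonneg_left hc (by linarith : (0:ℝ) ≤ α)
  linarith

structure FC1 (κ α τ h g l M y r s3 s4 : ℝ) : Prop where
  k : κ < 578/1000
  a : α < 47/100
  m : 1 + 2*α + κ/2 ≤ M
  le : 3*l = 1 + s3 - s4
  b3 : 4*α*|s3| ≤ 2*κ-1
  b4 : 4*α*|s4| ≤ 2*κ-1
  c3 : |s3| < 9/100
  c4 : |s4| < 9/100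
  T0 : TB κ α (l-s3) (r-τ*y^2)
  T1 : TB κ α (1+s3-2*l) (r-τ*(1-y)^2)
  I3 : α*(1+|s3|)^2+κ/4 ≤ r-τ*(1+y)^2
  I4 : α*(1+|s4|)^2+κ/4 ≤ r-τ*(2-y)^2
  V0 : r-τ*y^2 ≤ κ/4 + α*(l-s3)^2 + M - 1
  V1 : r-τ*(1-y)^2 ≤ κ/4 + α*(1+s3-2*l)^2 + M - 1
  hh : 1 ≤ 4*κ*|h|
  gg : ∃ i : ℤ, 4*κ*|3*g-h+i| ≤ 2*(2*κ-1)
  o : 1 + 3/4*α ≤ 8*(τ*y)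

theorem fcc1 {κ α τ h g l M u v y r : ℝ} (P : Par3 κ α τ h l M) (H : HP κ α τ h g l M u v y r)
    (y0 : 0 ≤ y) (y1 : y ≤ 1/2) (nI : ¬ TyI κ α h u v (r - τ*y^2)) : ∃ s3 s4, FC1 κ α τ h g l M y r s3 s4 := by
  have PP := P.toPar
  have k1 := P.k1
  have k2 := P.k2
  have a1 := P.a1
  have a2 := P.a2
  have l0 := P.l0
  have l1 := P.l1
  have tup := P.tup
  have tlo := P.tlow
  have kp : 0 < κ := by linarith
  have ap : 0 < α := by linarith
  have tp : 0 < τ := by linarith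
  have ty0 : 0 ≤ τ*y := by positivity
  have ty1 : τ*y ≤ τ*(1/2) := mul_le_mul_of_nonneg_left y1 tp.le
  have ty2 : τ*y^2 ≤ τ*y*(1/2) := by rw [sq, ← mul_assoc]; exact mul_le_mul_of_nonneg_left y1 ty0
  have ty3 : 0 ≤ τ*y^2 := by positivity
  have q2 : (2*κ-1)^2 ≤ 1/9 := by nlinarith only [k1, k2]
  -- layer 0
  have in0 : 0 ≤ r - τ*y^2 := by
    obtain ⟨n, i, j, hp⟩ := H.ex
    have : y^2 ≤ (y+n)^2 := by
      rcases le_or_gt 0 n with c | c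
      · have : (0:ℝ) ≤ n := by exact_mod_cast c
        exact pow_le_pow_left₀ y0 (by linarith) 2
      · have c : n ≤ -1 := by omega
        have : (n:ℝ) ≤ -1 := by exact_mod_cast c
        have e : (y+n)^2 = (-(y+n))^2 := by ring
        rw [e]
        exact pow_le_pow_left₀ y0 (by linarith) 2
    have := mul_le_mul_of_nonneg_left this tp.le
    have := mul_nonneg kp.le (sq_nonneg (u+g*n+i+h*j))
    have := mul_nonneg ap.le (sq_nonneg (v+l*n+j))
    linarith
  obtain ⟨j0, hj0, T0, V0⟩ : ∃ j : ℤ, |v+j| ≤ 1/2 ∧ TT κ α h |v+j| (r-τ*y^2) M ∧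
      r-τ*y^2 ≤ κ/4 + α*|v+j|^2 + M - 1 := by
    have := lay P H 0 (r-τ*y^2) (by push_cast; ring) in0
    push_cast at this
    rw [mul_zero, mul_zero, add_zero, add_zero] at this
    exact this.resolve_left nI
  have low0 := T0.low (abs_nonneg _) hj0 kp.le ap.le
  have hM := T0.mlow hj0 kp.le ap.le V0
  have k578 : κ < 578/1000 := by
    by_contra hc
    push Not at hc
    exact big2 P.pl (2156/1000) (578/1000) (4335/10000) (by linarith) (by linarith) (by linarith) (by norm_num) (by norm_num) (by norm_num) (by norm_num)
  have a47 : α < 47/100 := by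
    by_contra hc
    push Not at hc
    exact big2 P.pl (219/100) (1/2) (47/100) (by linarith) (by linarith) (by linarith) (by norm_num) (by norm_num) (by norm_num) (by norm_num)
  have q3 : (2*κ-1)^2 ≤ 25/1000 := by nlinarith only [k1, k578]
  -- layers 1 and -1 are in
  have em : r - τ*(y + ((-1:ℤ):ℝ))^2 = r - τ*(1-y)^2 := by push_cast; ring
  have e1 : r - τ*(y + ((1:ℤ):ℝ))^2 = r - τ*(1+y)^2 := by push_cast; ring
  have e2 : r - τ*(y + ((2:ℤ):ℝ))^2 = r - τ*(2+y)^2 := by push_cast; ring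
  have em2 : r - τ*(y + ((-2:ℤ):ℝ))^2 = r - τ*(2-y)^2 := by push_cast; ring
  have inm : 0 ≤ r - τ*(1-y)^2 := by
    by_contra hc
    push Not at hc
    have L := H.s1 (-1)
    rw [em] at L
    have := out_bound' PP L hc
    linarith
  have in1 : 0 ≤ r - τ*(1+y)^2 := by
    by_contra hc
    push Not at hc
    have L := H.s1 1
    rw [e1] at L
    have := out_bound' PP L hc
    linarith
  have Lm := lay P H (-1) _ em inm
  have L1 := lay P H 1 _ e1 in1
  have vm : v + l*((-1:ℤ):ℝ) = v - l := by push_cast; ring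
  have v1 : v + l*((1:ℤ):ℝ) = v + l := by push_cast; ring
  have v2 : v + l*((2:ℤ):ℝ) = v + 2*l := by push_cast; ring
  have vm2 : v + l*((-2:ℤ):ℝ) = v - 2*l := by push_cast; ring
  rw [vm] at Lm
  rw [v1] at L1
  -- no TA
  have hTA : ¬ (4*κ*|h| < 1 ∧ 96/100 ≤ α*M) := by
    rintro ⟨t1, t2⟩
    have nn : ∀ u v ρ, ¬ TyI κ α h u v ρ := by
      rintro u v ρ ⟨i, j, -, -, c, -⟩
      linarith
    obtain ⟨ja, ja1, Ta, -⟩ := Lm.resolve_left (nn _ _ _)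
    obtain ⟨jc, jc1, Tc, -⟩ := L1.resolve_left (nn _ _ _)
    exact no_TA P ja j0 jc (Ta.quarter a2 ap) ja1 (T0.quarter a2 ap) hj0 (Tc.quarter a2 ap) jc1 t2
  have toTB : ∀ s ρ, TT κ α h s ρ M → TB κ α s ρ := by
    rintro s ρ (T | T)
    · exact absurd ⟨T.1.2.1, T.1.2.2.2⟩ hTA
    · exact T
  have B0 := toTB _ _ T0
  have Imax : ∀ u v ρ, TyI κ α h u v ρ → ρ < 9/4*α + 5/8*κ := by
    intro u v ρ T
    have := T.up PP
    linarith
  -- layer 1 is of type I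
  have T1 : TyI κ α h (u+g*((1:ℤ):ℝ)) (v+l) (r - τ*(1+y)^2) := by
    rcases L1 with q | ⟨jc, jc1, Tc, -⟩
    · exact q
    · exfalso
      have lo1 := Tc.low (abs_nonneg _) jc1 kp.le ap.le
      rcases Lm with q | ⟨ja, ja1, Ta, -⟩
      · have := Imax _ _ _ q
        linarith
      · have Ba := toTB _ _ Ta
        have Bc := toTB _ _ Tc
        exact three_TB P ja j0 jc Ba.1 Ba.2.1 B0.1 B0.2.1 Bc.1 Bc.2.1 (by linarith)
  have hh : 1 ≤ 4*κ*|h| := by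
    obtain ⟨i, j, -, -, c, -⟩ := T1
    exact c
  have T1up := T1.up PP
  have T1low := T1.low ap.le
  obtain ⟨i1, j1, p1, p2, p3, p4⟩ := T1.small k1 a1 k578
  have p4' := abs_lt.1 p4
  -- position of layer 0
  have z0 : |v + j0| = l - (v+l+j1) ∧ (j0:ℝ) = j1 := by
    have h1 := B0.1
    have h2 := B0.2.1
    rcases le_total 0 (v+j0) with q | q
    · exfalso
      rw [abs_of_nonneg q] at h1 h2
      have e := int_pin (j0 - j1) 1 (by push_cast; linarith) (by push_cast; linarith)
      push_cast at e
      linarith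
    · rw [abs_of_nonpos q] at h1 h2 ⊢
      have e := int_pin (j0 - j1) 0 (by push_cast; linarith) (by push_cast; linarith)
      push_cast at e
      exact ⟨by linarith, by linarith⟩
  obtain ⟨z0, -⟩ := z0
  rw [z0] at B0 V0
  have z0l := B0.1
  have z0u := B0.2.1
  -- layer -1
  obtain ⟨ja, ja1, Ta, Va⟩ : ∃ j : ℤ, |v-l+j| ≤ 1/2 ∧ TT κ α h |v-l+j| (r-τ*(1-y)^2) M ∧
      r-τ*(1-y)^2 ≤ κ/4 + α*|v-l+j|^2 + M - 1 := by
    rcases Lm with q | q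
    · exfalso
      obtain ⟨i', j', -, -, -, p⟩ := q.small k1 a1 k578
      have p' := abs_lt.1 p
      have e := int_pin (j' - j1) 1 (by push_cast; linarith) (by push_cast; linarith)
      push_cast at e
      linarith
    · exact q
  have Ba := toTB _ _ Ta
  have zm : |v - l + ja| = 1 + (v+l+j1) - 2*l := by
    have h1 := Ba.1
    have h2 := Ba.2.1
    rcases le_total 0 (v-l+ja) with q | q
    · rw [abs_of_nonneg q] at h1 h2 ⊢
      have e := int_pin (ja - j1) 1 (by push_cast; linarith) (by push_cast; linarith)
      push_cast at e
      linarith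
    · exfalso
      rw [abs_of_nonpos q] at h1 h2
      have e := int_pin (ja - j1) 0 (by push_cast; linarith) (by push_cast; linarith)
      push_cast at e
      linarith
  rw [zm] at Ba Va
  have zml := Ba.1
  have zmu := Ba.2.1
  -- layer -2
  have inm2 : 0 ≤ r - τ*(2-y)^2 := by
    by_contra hc
    push Not at hc
    have L := H.s1 (-2)
    rw [em2] at L
    have := out_bound' PP L hc
    have hk : 0 ≤ (κ - 1/2)*(578/1000-κ) := mul_nonneg (by linarith) (by linarith)
    rcases le_total α (42/100) with c | c
    · exact big3 P 2 (1/2) (375/1000) (508/1000) (by linarith) (by linarith) (by linarith) (by linarith) (by norm_num) (by norm_num) (by norm_num) (by norm_num) (by norm_num)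
    · exact big3 P (209/100) (1/2) (42/100) (46/100) (by linarith) (by linarith) (by linarith) (by linarith) (by norm_num) (by norm_num) (by norm_num) (by norm_num) (by norm_num)
  have Tm2 : TyI κ α h (u+g*((-2:ℤ):ℝ)) (v-2*l) (r - τ*(2-y)^2) := by
    have := lay P H (-2) _ em2 inm2
    rw [vm2] at this
    rcases this with q | ⟨j, hj, q, -⟩
    · exact q
    · exfalso
      have := q.low (abs_nonneg _) hj kp.le ap.le
      linarith
  obtain ⟨i4, j4, w1, w2, w3, w4⟩ := Tm2.small k1 a1 k578
  have w4' := abs_lt.1 w4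
  have ej4 : (j4:ℝ) = j1 + 1 := by
    have e := int_pin (j4 - j1) 1 (by push_cast; linarith) (by push_cast; linarith)
    push_cast at e
    linarith
  -- layer 2
  have out2 : r - τ*(2+y)^2 < 0 := by
    by_contra hc
    push Not at hc
    have := lay P H 2 _ e2 hc
    rw [v2] at this
    rcases this with q | ⟨j, hj, q, -⟩
    · obtain ⟨i', j', -, -, -, p⟩ := q.small k1 a1 k578
      have p' := abs_lt.1 p
      have e := int_pin (j' - j1) 0 (by push_cast; linarith) (by push_cast; linarith)
      push_cast at e
      linarith
    · have := q.low (abs_nonneg _) hj kp.le ap.le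
      linarith
  have L2 := H.s1 2
  rw [e2] at L2
  have ob2 := out_bound' PP L2 out2
  have Tm2low := Tm2.low ap.le
  refine ⟨v+l+j1, v-2*l+j4, k578, a47, hM, by linarith, p1, w1, p4, w4, B0, Ba, p3, w3, V0, Va, hh, ⟨i1 - i4, ?_⟩, by linarith⟩
  have A := shift_bd (s := 3*g - h + ((i1-i4:ℤ):ℝ)) (x := u+g*((1:ℤ):ℝ)+i1+h*j1) (y := -(u+g*((-2:ℤ):ℝ)+i4+h*j4))
    (d := 2*κ-1) kp (by rw [ej4]; push_cast; ring) p2 (by rw [abs_neg]; exact w2)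
  linarith

structure FCC (κ α τ h g l M r : ℝ) : Prop where
  k : κ < 567/1000
  a : α < 47/100
  m : 1 + 2*α + κ/2 ≤ M
  f1 : 2*τ ≤ 15/4*κ - 1 - 5/9*α
  t0 : 1 + 3/4*α ≤ 4*τ
  f2 : M + 1 + 3/4*α ≤ 10*τ
  m23 : M < 23/10
  rlo : 9/4*τ + α + κ/4 ≤ r
  V : r ≤ τ/4 + α/9 + (2*κ-1)*(1/18+9/400) + κ/4 + M - 1 + 7/400*(4*τ-1-3/4*α)
  C : r ≤ τ/4 + 4/9*α + (2*κ-1)*(1/3+9/400) + 4*κ - 1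
  hh : 1 ≤ 4*κ*|h|
  gg : ∃ i : ℤ, 4*κ*|3*g-h+i| ≤ 2*(2*κ-1)
  lam : 4*α*|3*l-1| ≤ 2*(2*κ-1)

theorem fcc2 {κ α τ h g l M u v y r s3 s4 : ℝ} (P : Par3 κ α τ h l M) (H : HP κ α τ h g l M u v y r)
    (y0 : 0 ≤ y) (y1 : y ≤ 1/2) (F : FC1 κ α τ h g l M y r s3 s4) : FCC κ α τ h g l M r := by
  have PP := P.toPar
  have k1 := P.k1
  have a1 := P.a1
  have hk := F.k
  have ha := F.a
  have hm := F.m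
  have le := F.le
  have ho := F.o
  have kp : 0 < κ := by linarith
  have ap : 0 < α := by linarith
  have tlo := P.tlow
  have tp : 0 < τ := by linarith
  have tup := P.tup
  have ty0 : 0 ≤ τ*y := by positivity
  have ty1 : τ*y ≤ τ*(1/2) := mul_le_mul_of_nonneg_left y1 tp.le
  have ty2 : τ*y^2 ≤ τ*y*(1/2) := by rw [sq, ← mul_assoc]; exact mul_le_mul_of_nonneg_left y1 ty0
  have ty3 : 0 ≤ τ*y^2 := by positivity
  have I4 := F.I4
  have n3 := abs_nonneg s3
  have n4 := abs_nonneg s4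
  have i3 := abs_le.1 (le_refl |s3|)
  have i4 := abs_le.1 (le_refl |s4|)
  have c3 := F.c3
  have c4 := F.c4
  have b3 := F.b3
  have b4 := F.b4
  have as4 : 0 ≤ α*|s4| := by positivity
  have as3 : 0 ≤ α*|s3| := by positivity
  have as42 : 0 ≤ α*|s4|^2 := by positivity
  have f1 : 2*τ ≤ 15/4*κ - 1 - 5/9*α := by
    rcases le_total 0 s3 with q | q
    · have := F.T1.2.2.2.2.2.1
      have := sq_ub ap.le (x := 1 - (1+s3-2*l)) (b := 2/3*(1+|s4|)) (by linarith) (by linarith)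
      linarith
    · have := F.T0.2.2.2.2.2.1
      have := sq_ub ap.le (x := 1 - (l-s3)) (b := 2/3*(1+|s4|)) (by linarith) (by linarith)
      linarith
  have t0 : 1 + 3/4*α ≤ 4*τ := by linarith
  have f2 : M + 1 + 3/4*α ≤ 10*τ := by
    have L := H.s2 3
    have e : r + M - τ*(y+((3:ℤ):ℝ))^2 = r + M - τ*(3+y)^2 := by push_cast; ring
    rw [e] at L
    rcases lt_or_ge (r + M - τ*(3+y)^2) 0 with q | q
    · have := out_bound' PP L q
      linarith
    · exfalso
      have low : α + κ/4 ≤ r + M - τ*(3+y)^2 := by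
        rcases tri_gen PP L q with T | ⟨j, hj, T⟩
        · exact T.low ap.le
        · have := TII_low (abs_nonneg _) hj kp.le ap.le T
          linarith
      have V0 := F.V0
      have := sq_ub ap.le (by linarith [F.T0.1]) F.T0.2.1
      exact big3 P (2577/1000) (1/2) (375/1000) (3203/10000) (by linarith) (by linarith) (by linarith) (by linarith) (by norm_num) (by norm_num) (by norm_num) (by norm_num) (by norm_num)
  have k567 : κ < 567/1000 := by
    by_contra hc
    push Not at hc
    exact big3 P (2134/1000) (567/1000) (425/1000) (345/1000) (by linarith) (by linarith) (by linarith) (by linarith) (by norm_num) (by norm_num) (by norm_num) (by norm_num) (by norm_num)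
  have m23 : M < 23/10 := by
    by_contra hc
    push Not at hc
    exact big3 P (23/10) (515/1000) (386/1000) (3589/10000) (by linarith) (by linarith) (by linarith) (by linarith) (by norm_num) (by norm_num) (by norm_num) (by norm_num) (by norm_num)
  have q3 : α*s3^2 ≤ 9/400*(2*κ-1) := by
    rw [← sq_abs, sq, ← mul_assoc]
    have := mul_le_mul_of_nonneg_left c3.le as3
    linarith
  have q4 : α*s4^2 ≤ 9/400*(2*κ-1) := by
    rw [← sq_abs, sq, ← mul_assoc]
    have := mul_le_mul_of_nonneg_left c4.le as4
    linarith
  have u3 := mul_le_mul_of_nonneg_left i3.1 ap.le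
  have w3 := mul_le_mul_of_nonneg_left i3.2 ap.le
  have u4 := mul_le_mul_of_nonneg_left i4.1 ap.le
  have w4 := mul_le_mul_of_nonneg_left i4.2 ap.le
  have d34 : 0 ≤ α*(s3-s4)^2 := by positivity
  have l3 : l = (1+s3-s4)/3 := by linarith
  refine ⟨k567, ha, hm, f1, t0, f2, m23, ?_, ?_, ?_, F.hh, F.gg, ?_⟩
  · have : (3/2)^2 ≤ (2-y)^2 := pow_le_pow_left₀ (by norm_num) (by linarith) 2
    have := mul_le_mul_of_nonneg_left this tp.le
    linarith
  · have V0 := F.V0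
    have V1 := F.V1
    rw [l3] at V0 V1
    have z0 : 0 ≤ τ*(1/2-y) := mul_nonneg tp.le (by linarith)
    have zz : 1/2 - y ≤ 14/100 := by
      by_contra hc
      push Not at hc
      have := mul_le_mul_of_nonneg_left hc.le tp.le
      linarith
    have := mul_le_mul_of_nonneg_left zz z0
    have e : τ*(1/2-y)*(1/2-y) = τ*(1/2-y)^2 := by ring
    rw [e] at this
    linarith
  · have T := F.T0.2.2.2.2.2.1
    rw [l3] at T
    linarith
  · have e : |3*l-1| ≤ |s3| + |s4| := by
      rw [le]
      have := abs_sub s3 s4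
      have e : 1 + s3 - s4 - 1 = s3 - s4 := by ring
      rw [e]; exact abs_sub _ _
    have := mul_le_mul_of_nonneg_left e ap.le
    linarith

theorem cen_pair {κ α h u v ρ : ℝ} (kp : 0 < κ) (ap : 0 < α) (H : Av κ α h u v ρ) (i j : ℤ)
    (c1 : ρ < 4*κ) (c2 : 4*κ + (κ*(u+i+h*j)^2 + α*(v+j)^2) < ρ + 1) (c3 : 8*κ*|u+i+h*j| < 1) : False := by
  have q1 := mul_nonneg kp.le (sq_nonneg (u+i+h*j))
  have q2 := mul_nonneg ap.le (sq_nonneg (v+j))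
  have Hp := H (i+2) j
  have Hm := H (i-2) j
  push_cast at Hp Hm
  have ep : κ*(u+(i+2)+h*j)^2 = κ*(u+i+h*j)^2 + 4*κ + 4*(κ*(u+i+h*j)) := by ring
  have em : κ*(u+(i-2)+h*j)^2 = κ*(u+i+h*j)^2 + 4*κ - 4*(κ*(u+i+h*j)) := by ring
  rw [ep] at Hp
  rw [em] at Hm
  rcases le_total 0 (u+i+h*j) with q | q
  · rw [abs_of_nonneg q] at c3
    have := mul_nonneg kp.le q
    have a1 : ρ + 1 ≤ κ*(u+i+h*j)^2 + 4*κ + 4*(κ*(u+i+h*j)) + α*(v+j)^2 := by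
      by_contra hc
      push Not at hc
      exact Hp ⟨by linarith, hc⟩
    apply Hm
    constructor <;> linarith
  · rw [abs_of_nonpos q] at c3
    have := mul_nonneg kp.le (neg_nonneg.2 q)
    have a1 : ρ + 1 ≤ κ*(u+i+h*j)^2 + 4*κ - 4*(κ*(u+i+h*j)) + α*(v+j)^2 := by
      by_contra hc
      push Not at hc
      exact Hm ⟨by linarith, hc⟩
    apply Hp
    constructor <;> linarith

theorem fccA {κ α τ h g l M r N U V W : ℝ} (P : Par3 κ α τ h l M) (R : FCC κ α τ h g l M r)
    (n1 : 4+9*τ+4*α+κ-4*M ≤ N)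
    (n2 : N ≤ τ + 4/9*α + (2*κ-1)*(2/9+9/100) + κ + 7/100*(4*τ-1-3/4*α)) (w0 : 0 ≤ W) (w1 : W ≤ 1/2)
    (H : AvZ κ α τ h g l U V W (N-1)) (H2 : AvZ κ α τ h g l U V W (N+2*M-1)) : False := by
  have PP := P.toPar
  have k1 := P.k1
  have a1 := P.a1
  have hk := R.k
  have ha := R.a
  have f1 := R.f1
  have f2 := R.f2
  have t0 := R.t0
  have m23 := R.m23
  have hl := R.lam
  obtain ⟨ig, hg⟩ := R.gg
  have kp : 0 < κ := by linarith
  have ap : 0 < α := by linarith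
  have tp : 0 < τ := by linarith
  have ty0 : 0 ≤ τ*W := by positivity
  have ty1 : τ*W ≤ τ*(1/2) := mul_le_mul_of_nonneg_left w1 tp.le
  have ty2 : τ*W^2 ≤ τ*W*(1/2) := by rw [sq, ← mul_assoc]; exact mul_le_mul_of_nonneg_left w1 ty0
  have ty3 : 0 ≤ τ*W^2 := by positivity
  have L0 := H 0
  have e0 : N-1 - τ*(W + ((0:ℤ):ℝ))^2 = N-1 - τ*W^2 := by push_cast; ring
  rw [e0] at L0
  have out0 : N-1-τ*W^2 < 0 := by
    by_contra hc
    push Not at hc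
    have low : α + κ/4 ≤ N-1-τ*W^2 := by
      rcases tri_gen PP L0 hc with T | ⟨j, hj, T⟩
      · exact T.low ap.le
      · have := TII_low (abs_nonneg _) hj kp.le ap.le T
        linarith
    linarith
  have ob := out_bound' PP L0 out0
  have L3 := H2 3
  have e3 : N+2*M-1 - τ*(W + ((3:ℤ):ℝ))^2 = N+2*M-1 - τ*(3+W)^2 := by push_cast; ring
  rw [e3] at L3
  have in3 : 0 ≤ N+2*M-1 - τ*(3+W)^2 := by
    by_contra hc
    push Not at hc
    have := out_bound' PP L3 hc
    have k53 : κ < 53/100 := by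
      by_contra hc
      push Not at hc
      exact big3 P (228/100) (53/100) (3975/10000) (358/1000) (by linarith) (by linarith) (by linarith) (by linarith) (by norm_num) (by norm_num) (by norm_num) (by norm_num) (by norm_num)
    linarith
  have T3 : TyI κ α h (U+g*((3:ℤ):ℝ)) (V+l*((3:ℤ):ℝ)) (N+2*M-1 - τ*(3+W)^2) := by
    rcases tri_gen PP L3 in3 with q | ⟨j, hj, q⟩
    · exact q
    · exfalso
      have := TII_low (abs_nonneg _) hj kp.le ap.le q
      linarith
  have low := T3.low ap.le
  have w10 : W < 1/10 := by
    by_contra hc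
    push Not at hc
    have := mul_le_mul_of_nonneg_left hc tp.le
    linarith
  have ty4 : τ*W^2 ≤ τ*W*(1/10) := by rw [sq, ← mul_assoc]; exact mul_le_mul_of_nonneg_left w10.le ty0
  obtain ⟨i, j, c1, c2, -⟩ := T3
  have A := shift_bd (s := V + l*((0:ℤ):ℝ) + ((j+1:ℤ):ℝ)) (y := -(3*l-1)) (d := 2*(2*κ-1)) ap (by push_cast; ring) c1 (by rw [abs_neg]; exact hl)
  have B := shift_bd (s := U + g*((0:ℤ):ℝ) + ((i-ig:ℤ):ℝ) + h*((j+1:ℤ):ℝ)) (y := -(3*g-h+ig)) (d := 2*(2*κ-1)) kp (by push_cast; ring) c2 (by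
    rw [abs_neg]; exact hg)
  have cb := cen_bound (c := 3) (s := V + l*((0:ℤ):ℝ) + ((j+1:ℤ):ℝ)) k1 a1 (by linarith) (by linarith : 4*κ*|U + g*((0:ℤ):ℝ) + ((i-ig:ℤ):ℝ) + h*((j+1:ℤ):ℝ)| ≤ 3*(2*κ-1))
  have o2 := out_bound PP L0 out0 (i-ig) (j+1)
  have qk2 : (2*κ-1)^2/κ ≤ 32/1000 := by
    rw [div_le_iff₀ kp]; nlinarith only [k1, hk]
  have o3 := o2.trans cb
  generalize (2*κ-1)^2/κ = q at o3 qk2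
  clear cb o2 A B c1 c2
  linarith

theorem fccB {κ α τ h g l M r N U V W : ℝ} (P : Par3 κ α τ h l M) (R : FCC κ α τ h g l M r)
    (n1 : 4+9*τ+4*α+κ-4*M ≤ N)
    (n2 : N ≤ τ + 4/9*α + (2*κ-1)*(2/9+9/100) + κ + 7/100*(4*τ-1-3/4*α))
    (n3 : N ≤ τ + 16/9*α + (2*κ-1)*(4/3+9/100) + 16*κ - 4*M) (w0 : 0 ≤ W) (w1 : W ≤ 1/2)
    (H : AvZ κ α τ h g l U V W (N+M-1)) : False := by
  have PP := P.toPar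
  have k1 := P.k1
  have a1 := P.a1
  have hk := R.k
  have ha := R.a
  have f1 := R.f1
  have f2 := R.f2
  have t0 := R.t0
  have m23 := R.m23
  have hl := R.lam
  obtain ⟨ig, hg⟩ := R.gg
  have kp : 0 < κ := by linarith
  have ap : 0 < α := by linarith
  have tp : 0 < τ := by linarith
  have ty0 : 0 ≤ τ*W := by positivity
  have ty1 : τ*W ≤ τ*(1/2) := mul_le_mul_of_nonneg_left w1 tp.le
  have ty2 : τ*W^2 ≤ τ*W*(1/2) := by rw [sq, ← mul_assoc]; exact mul_le_mul_of_nonneg_left w1 ty0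
  have ty3 : 0 ≤ τ*W^2 := by positivity
  have q2 : (2*κ-1)^2 ≤ 18/1000 := by nlinarith only [k1, hk]
  have L2 := H 2
  have e2 : N+M-1 - τ*(W + ((2:ℤ):ℝ))^2 = N+M-1 - τ*(2+W)^2 := by push_cast; ring
  rw [e2] at L2
  have L1 := H 1
  have e1 : N+M-1 - τ*(W + ((1:ℤ):ℝ))^2 = N+M-1 - τ*(1+W)^2 := by push_cast; ring
  rw [e1] at L1
  have in2 : 0 ≤ N+M-1 - τ*(2+W)^2 := by
    by_contra hc
    push Not at hc
    have ob2 := out_bound' PP L2 hc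
    have in1 : 0 ≤ N+M-1 - τ*(1+W)^2 := by
      by_contra hc
      push Not at hc
      have := out_bound' PP L1 hc
      linarith
    rcases tri_gen PP L1 in1 with q | ⟨j, hj, q⟩
    · have := q.up PP
      linarith
    · have := TII_low (abs_nonneg _) hj kp.le ap.le q
      linarith
  have T2 : TyI κ α h (U+g*((2:ℤ):ℝ)) (V+l*((2:ℤ):ℝ)) (N+M-1 - τ*(2+W)^2) := by
    rcases tri_gen PP L2 in2 with q | ⟨j, hj, q⟩
    · exact q
    · exfalso
      have := TII_low (abs_nonneg _) hj kp.le ap.le q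
      linarith
  have low := T2.low ap.le
  have Lm := H (-1)
  have em : N+M-1 - τ*(W + ((-1:ℤ):ℝ))^2 = N+M-1 - τ*(1-W)^2 := by push_cast; ring
  rw [em] at Lm
  obtain ⟨i, j, c1, c2, -⟩ := T2
  have A := shift_bd (s := V + l*((-1:ℤ):ℝ) + ((j+1:ℤ):ℝ)) (y := -(3*l-1)) (d := 2*(2*κ-1)) ap (by push_cast; ring) c1 (by rw [abs_neg]; exact hl)
  have B := shift_bd (s := U + g*((-1:ℤ):ℝ) + ((i-ig:ℤ):ℝ) + h*((j+1:ℤ):ℝ)) (y := -(3*g-h+ig)) (d := 2*(2*κ-1)) kp (by push_cast; ring) c2 (by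
    rw [abs_neg]; exact hg)
  have cb := cen_bound (c := 3) (s := V + l*((-1:ℤ):ℝ) + ((j+1:ℤ):ℝ)) k1 a1 (by linarith) (by linarith : 4*κ*|U + g*((-1:ℤ):ℝ) + ((i-ig:ℤ):ℝ) + h*((j+1:ℤ):ℝ)| ≤ 3*(2*κ-1))
  have qk2 : (2*κ-1)^2/κ ≤ 32/1000 := by
    rw [div_le_iff₀ kp]; nlinarith only [k1, hk]
  have cb2 : κ*(U + g*((-1:ℤ):ℝ) + ((i-ig:ℤ):ℝ) + h*((j+1:ℤ):ℝ))^2 + α*(V + l*((-1:ℤ):ℝ) + ((j+1:ℤ):ℝ))^2 ≤ 42/1000 := by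
    generalize (2*κ-1)^2/κ = q at cb qk2
    refine cb.trans ?_
    linarith
  refine cen_pair kp ap Lm (i-ig) (j+1) ?_ ?_ (by linarith)
  · clear cb cb2 qk2 A B
    by_contra hc
    push Not at hc
    have k54 : κ < 54/100 := by
      by_contra hc
      push Not at hc
      exact big3 P (2219/1000) (54/100) (405/1000) (352/1000) (by linarith) (by linarith) (by linarith) (by linarith) (by norm_num) (by norm_num) (by norm_num) (by norm_num) (by norm_num)
    linarith
  · have := add_le_add_left cb2 (4*κ)
    refine lt_of_le_of_lt (add_le_add_right cb2 (4*κ)) ?_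
    clear cb cb2 qk2 A B
    linarith

theorem AvZ.norm {κ α τ h g l : ℝ} (u v w : ℝ) : ∃ U V W : ℝ, 0 ≤ W ∧ W ≤ 1/2 ∧
    ∀ ρ, AvZ κ α τ h g l u v w ρ → AvZ κ α τ h g l U V W ρ := by
  obtain ⟨k, hk⟩ := exists_near w
  have sh : ∀ ρ, AvZ κ α τ h g l u v w ρ → AvZ κ α τ h g l (u+g*k) (v+l*k) (w+k) ρ := by
    intro ρ H n
    have := H (k+n)
    push_cast at this
    have e1 : u+g*k+g*n = u+g*(k+n) := by ring
    have e2 : v+l*k+l*n = v+l*(k+n) := by ring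
    have e3 : w+k+n = w+(k+n) := by ring
    rw [e1, e2, e3]
    exact this
  have hk' := abs_le.1 hk
  rcases le_total 0 (w+k) with q | q
  · exact ⟨_, _, _, q, hk'.2, sh⟩
  · refine ⟨-(u+g*k), -(v+l*k), -(w+k), by linarith, by linarith, fun ρ H n => ?_⟩
    have := (sh ρ H (-n)).neg
    push_cast at this
    have e1 : -(u+g*k)+g*n = -(u+g*k+g*(-n)) := by ring
    have e2 : -(v+l*k)+l*n = -(v+l*k+l*(-n)) := by ring
    have e3 : (-(w+k)+n)^2 = (w+k+-n)^2 := by ring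
    rw [e1, e2, e3]
    exact this

theorem half {κ α τ h g l M u v w ν : ℝ} (P : Par3 κ α τ h l M)
    (H : ∀ j : ℤ, AvZ κ α τ h g l u v w (ν + j*M - 1)) :
    ∃ (r : ℝ) (j : ℤ), r = ν + j*M - 1 ∧ (Prism κ α τ h g l M r ∨ FCC κ α τ h g l M r) := by
  obtain ⟨U, V, W, w0, w1, hn⟩ := AvZ.norm (κ := κ) (α := α) (τ := τ) (h := h) (g := g) (l := l) u v w
  have H' := fun j => hn _ (H j)
  have k1 := P.k1
  have a1 := P.a1
  have t1 := P.tlow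
  have m1 := P.m
  have kp : 0 < κ := by linarith
  have ap : 0 < α := by linarith
  have tp : 0 < τ := by linarith
  have Mp : 0 < M := by linarith
  obtain ⟨j, ⟨n0, i0, j0, h0⟩, hj⟩ := Int.exists_least_of_bdd
    (P := fun z : ℤ => ∃ n i j : ℤ, κ*(U+g*n+i+h*j)^2 + α*(V+l*n+j)^2 + τ*(W+n)^2 ≤ ν + z*M - 1)
    (by
      refine ⟨⌊(1-ν)/M⌋, ?_⟩
      rintro z ⟨n, i, j, hz⟩
      have : 0 ≤ κ*(U+g*n+i+h*j)^2 + α*(V+l*n+j)^2 + τ*(W+n)^2 := by positivity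
      have h2 : (1-ν)/M ≤ z := by rw [div_le_iff₀ Mp]; linarith
      have h3 := Int.floor_le ((1-ν)/M)
      exact_mod_cast h3.trans h2)
    (by
      obtain ⟨b, hb⟩ : ∃ b, b = κ*(U+g*((0:ℤ):ℝ)+((0:ℤ):ℝ)+h*((0:ℤ):ℝ))^2 + α*(V+l*((0:ℤ):ℝ)+((0:ℤ):ℝ))^2 + τ*(W+((0:ℤ):ℝ))^2 := ⟨_, rfl⟩
      refine ⟨⌈(b+1-ν)/M⌉, 0, 0, 0, ?_⟩
      have h3 := Int.le_ceil ((b+1-ν)/M)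
      rw [div_le_iff₀ Mp] at h3
      rw [← hb]
      linarith)
  have HH : HP κ α τ h g l M U V W (ν + j*M - 1) := by
    refine ⟨H' j, ?_, ?_, ⟨n0, i0, j0, h0⟩⟩
    · have := H' (j+1)
      have e : ν + ((j+1:ℤ):ℝ)*M - 1 = ν + j*M - 1 + M := by push_cast; ring
      rw [e] at this
      exact this
    · intro n i k
      have h1 := H' (j-1) n i k
      have e : ν + ((j-1:ℤ):ℝ)*M - 1 = ν + j*M - 1 - M := by push_cast; ring
      rw [e] at h1
      by_contra hc
      push Not at hc
      apply h1
      constructor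
      · by_contra hd
        push Not at hd
        have := hj (j-1) ⟨n, i, k, by rw [e]; linarith⟩
        omega
      · linarith
  refine ⟨_, j, rfl, ?_⟩
  by_cases T : TyI κ α h U V (ν + j*M - 1 - τ*W^2)
  · exact Or.inl (prism P HH w0 w1 T)
  · obtain ⟨s3, s4, F⟩ := fcc1 P HH w0 w1 T
    exact Or.inr (fcc2 P HH w0 w1 F)

theorem Prism.not_FCC {κ α τ h g l M r r' : ℝ} (P : Par3 κ α τ h l M) (A : Prism κ α τ h g l M r)
    (B : FCC κ α τ h g l M r') : False := by
  have k1 := P.k1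
  have a1 := P.a1
  have l2 := B.lam
  have l1 := A.lam
  have k := A.k
  have := mul_le_mul_of_nonneg_left (neg_abs_le (3*l-1)) (by linarith : 0 ≤ α)
  linarith

theorem core {κ α τ h g l M u v w u' v' w' U V W ν ν' : ℝ} (P : Par3 κ α τ h l M)
    (H : ∀ j : ℤ, AvZ κ α τ h g l u v w (ν + j*M - 1))
    (H' : ∀ j : ℤ, AvZ κ α τ h g l u' v' w' (ν' + j*M - 1))
    (H2 : ∀ j : ℤ, AvZ κ α τ h g l U V W (3*ν + ν' + 2*j*M - 1)) : False := by
  obtain ⟨r, j, er, D⟩ := half P H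
  obtain ⟨r', j', er', D'⟩ := half P H'
  obtain ⟨X, Y, Z, z0, z1, hn⟩ := AvZ.norm (κ := κ) (α := α) (τ := τ) (h := h) (g := g) (l := l) U V W
  have H2 := fun j => hn _ (H2 j)
  rcases Int.even_or_odd' (3*j+j') with ⟨c, hc | hc⟩
  · have hc' : 3*(j:ℝ)+j' = 2*c := by exact_mod_cast hc
    have HA := H2 (c-2)
    have HB := H2 (c-1)
    have eA : 3*ν + ν' + 2*((c-2:ℤ):ℝ)*M - 1 = (4+3*r+r'-4*M) - 1 := by
      push_cast
      rw [er, er']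
      linear_combination -M*hc'
    have eB : 3*ν + ν' + 2*((c-1:ℤ):ℝ)*M - 1 = (4+3*r+r'-4*M)+2*M - 1 := by
      push_cast
      rw [er, er']
      linear_combination -M*hc'
    rw [eA] at HA
    rw [eB] at HB
    rcases D with D | D <;> rcases D' with D' | D'
    · exact prismA P D (by linarith [D.rlo, D'.rlo]) (by linarith [D.rup, D'.rup]) z0 z1 HA HB
    · exact D.not_FCC P D'
    · exact D'.not_FCC P D
    · exact fccA P D (by linarith [D.rlo, D'.rlo]) (by linarith [D.V, D'.V]) z0 z1 HA HB
  · have hc' : 3*(j:ℝ)+j' = 2*c+1 := by exact_mod_cast hc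
    have HA := H2 (c-1)
    have eA : 3*ν + ν' + 2*((c-1:ℤ):ℝ)*M - 1 = (4+3*r+r'-4*M)+M - 1 := by
      push_cast
      rw [er, er']
      linear_combination -M*hc'
    rw [eA] at HA
    rcases D with D | D <;> rcases D' with D' | D'
    · exact prismB P D (by linarith [D.rlo, D'.rlo]) (by linarith [D.rup, D'.rup]) z0 z1 HA
    · exact D.not_FCC P D'
    · exact D'.not_FCC P D
    · exact fccB P D (by linarith [D.rlo, D'.rlo]) (by linarith [D.V, D'.V]) (by linarith [D.C, D'.C]) z0 z1 HA

theorem thm7 (a A t lam h₄ h₅ a₂ a₃ a₄ a₅ d : ℝ) (m K : ℤ)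
    (ha : 0 < a) (hA : 0 < A) (ht : 0 < t)
    (ha₂ : -1/2 < a₂ ∧ a₂ ≤ 1/2) (ha₃ : -1/2 < a₃ ∧ a₃ ≤ 1/2)
    (ha₄ : -1/2 < a₄ ∧ a₄ ≤ 1/2) (ha₅ : -1/2 < a₅ ∧ a₅ ≤ 1/2)
    (hh₄ : -1/2 < h₄ ∧ h₄ ≤ 1/2) (hh₅ : -1/2 < h₅ ∧ h₅ ≤ 1/2)
    (hlam : 0 ≤ lam ∧ lam ≤ 1/2) (hAC : A ≤ t + A * lam^2)
    (hmin_le : ∀ u v w : ℤ, ¬(u = 0 ∧ v = 0 ∧ w = 0) →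
      a ≤ redPhi a A t lam h₄ h₅ (u : ℝ) (v : ℝ) (w : ℝ))
    (hmin_eq : ∃ u v w : ℤ, ¬(u = 0 ∧ v = 0 ∧ w = 0) ∧
      redPhi a A t lam h₄ h₅ (u : ℝ) (v : ℝ) (w : ℝ) = a)
    (hd : d = ((8/3) * a * A * t) ^ ((1 : ℝ)/5))
    (hm : (m : ℝ) < d / a ∧ d / a ≤ (m : ℝ) + 1)
    (hK : (K : ℝ) < (d + ((m : ℝ)^2 - 1) * a / 4) / A ∧
          (d + ((m : ℝ)^2 - 1) * a / 4) / A ≤ (K : ℝ) + 1)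
    (ha' : a < 1/2) (hd1 : d ≤ 1) (had : a + d ≤ 1)
    (hmK : m = 1 ∧ K = 2)
    (c₁ c₂ c₃ c₄ c₅ : ℝ) (hc₂ : ∃ n : ℤ, (n : ℝ) = c₂) :
    ∃ x₁ x₂ x₃ x₄ x₅ : ℝ,
      (∃ k : ℤ, x₁ - c₁ = k) ∧ (∃ k : ℤ, x₂ - c₂ = k) ∧ (∃ k : ℤ, x₃ - c₃ = k) ∧
      (∃ k : ℤ, x₄ - c₄ = k) ∧ (∃ k : ℤ, x₅ - c₅ = k) ∧
      0 < redQ a A t lam h₄ h₅ a₂ a₃ a₄ a₅ x₁ x₂ x₃ x₄ x₅ ∧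
      redQ a A t lam h₄ h₅ a₂ a₃ a₄ a₅ x₁ x₂ x₃ x₄ x₅ < d := by
  obtain ⟨rfl, rfl⟩ := hmK
  have hprod : 0 < 8/3*a*A*t := by positivity
  have hd0 : 0 < d := by rw [hd]; exact Real.rpow_pos_of_pos hprod _
  have hd5 : d^5 = 8/3*a*A*t := by
    rw [hd, ← Real.rpow_natCast, ← Real.rpow_mul hprod.le]
    norm_num
  push_cast at hm hK
  have ed : (d + ((1:ℝ)^2 - 1)*a/4) = d := by ring
  rw [ed] at hK
  have k1 : d ≤ 2*a := by
    have := (div_le_iff₀ ha).1 hm.2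
    linarith
  have a2 : 2*A < d := (lt_div_iff₀ hA).1 hK.1
  have hmn : a*(1-h₄^2) ≤ A := by
    have := hmin_le 0 1 0 (by simp)
    unfold redPhi at this
    push_cast at this
    linarith
  have h42 : h₄^2 ≤ 1/4 := by nlinarith only [hh₄.1, hh₄.2]
  have a1 : 3/4*a ≤ A := by
    have := mul_le_mul_of_nonneg_left h42 ha.le
    linarith
  have P : Par3 (a/d) (A/d) (t/d) h₄ lam (1/d) := by
    refine ⟨⟨?_, ?_, ?_, ?_, ?_, by linarith [hh₄.1], hh₄.2⟩, hlam.1, hlam.2, ?_, ?_, ?_⟩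
    · rw [le_div_iff₀ hd0]; linarith
    · rw [div_lt_iff₀ hd0]; linarith
    · rw [← mul_div_assoc]; exact div_le_div_of_nonneg_right a1 hd0.le
    · rw [div_lt_iff₀ hd0]; linarith
    · rw [div_mul_eq_mul_div]; exact div_le_div_of_nonneg_right hmn hd0.le
    · rw [div_mul_eq_mul_div]; exact div_le_div_of_nonneg_right (by linarith) hd0.le
    · have e : 8/3*(1/d)^2*(a/d)*(A/d)*(t/d) = (8/3*a*A*t)/d^5 := by
        field_simp
      rw [e, ← hd5]
      exact div_self (by positivity)
    · rw [le_div_iff₀ hd0, add_mul, div_mul_cancel₀ _ hd0.ne']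
      linarith
  by_contra hno
  push Not at hno
  obtain ⟨c, hc⟩ := hc₂
  obtain ⟨q3, hq3⟩ : ∃ q, 2*a*q = a₃ := ⟨a₃/(2*a), by field_simp⟩
  obtain ⟨q4, hq4⟩ : ∃ q, 2*A*q = a₄ - a₃*h₄ := ⟨(a₄ - a₃*h₄)/(2*A), by field_simp⟩
  obtain ⟨q5, hq5⟩ : ∃ q, 2*t*q = a₅ + a₃*(h₄*lam-h₅) - a₄*lam :=
    ⟨(a₅ + a₃*(h₄*lam-h₅) - a₄*lam)/(2*t), by field_simp⟩
  obtain ⟨β, hβ⟩ : ∃ β, β = a₂ + a*q3^2 + A*q4^2 + t*q5^2 := ⟨_, rfl⟩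
  have key : ∀ k z : ℤ, AvZ (a/d) (A/d) (t/d) h₄ h₅ lam
      (c₃ + h₄*c₄ + h₅*c₅ - k*q3) (c₄ + lam*c₅ - k*q4) (c₅ - k*q5) ((k*c₁ + k^2*β + k*z)/d - 1) := by
    intro k z n i j
    rintro ⟨p1, p2⟩
    have hQ : redQ a A t lam h₄ h₅ a₂ a₃ a₄ a₅ (c₁+z) k (c₃+i) (c₄+j) (c₅+n) =
        k*c₁ + k^2*β + k*z - (a*(c₃ + h₄*c₄ + h₅*c₅ - k*q3 + h₅*n + i + h₄*j)^2
          + A*(c₄ + lam*c₅ - k*q4 + lam*n + j)^2 + t*(c₅ - k*q5 + n)^2) := by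
      unfold redQ redPhi
      have e5 : a₅ = 2*t*q5 - a₃*(h₄*lam-h₅) + a₄*lam := by linarith
      have e4 : a₄ = 2*A*q4 + a₃*h₄ := by linarith
      rw [hβ, e5, e4, ← hq3]
      ring
    have eS : ∀ x y z' : ℝ, a/d*x^2 + A/d*y^2 + t/d*z'^2 = (a*x^2 + A*y^2 + t*z'^2)/d := by
      intro x y z'; ring
    have e1 := eS (c₃ + h₄*c₄ + h₅*c₅ - k*q3 + h₅*n + i + h₄*j) (c₄ + lam*c₅ - k*q4 + lam*n + j) (c₅ - k*q5 + n)
    generalize hS : a*(c₃ + h₄*c₄ + h₅*c₅ - k*q3 + h₅*n + i + h₄*j)^2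
          + A*(c₄ + lam*c₅ - k*q4 + lam*n + j)^2 + t*(c₅ - k*q5 + n)^2 = S at hQ e1
    generalize hT : k*c₁ + k^2*β + k*z = T at hQ p1 p2
    have p3 : T/d - 1 < S/d := by linarith
    have p4 : S/d < T/d := by linarith
    have p5 : S < T := by
      have := (div_lt_div_iff_of_pos_right hd0).1 p4
      exact this
    have p6 : T - d < S := by
      have e : T/d - 1 = (T-d)/d := by field_simp
      rw [e] at p3
      exact (div_lt_div_iff_of_pos_right hd0).1 p3
    have := hno (c₁+z) k (c₃+i) (c₄+j) (c₅+n) ⟨z, by ring⟩ ⟨k - c, by rw [← hc]; push_cast; ring⟩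
      ⟨i, by ring⟩ ⟨j, by ring⟩ ⟨n, by ring⟩ (by rw [hQ]; linarith)
    rw [hQ] at this
    linarith
  refine core (ν := (c₁+β)/d) (ν' := (-c₁+β)/d) P (fun j => ?_) (fun j => ?_) (fun j => ?_)
    (u := c₃ + h₄*c₄ + h₅*c₅ - ((1:ℤ):ℝ)*q3) (v := c₄ + lam*c₅ - ((1:ℤ):ℝ)*q4) (w := c₅ - ((1:ℤ):ℝ)*q5)
    (u' := c₃ + h₄*c₄ + h₅*c₅ - ((-1:ℤ):ℝ)*q3) (v' := c₄ + lam*c₅ - ((-1:ℤ):ℝ)*q4) (w' := c₅ - ((-1:ℤ):ℝ)*q5)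
    (U := c₃ + h₄*c₄ + h₅*c₅ - ((2:ℤ):ℝ)*q3) (V := c₄ + lam*c₅ - ((2:ℤ):ℝ)*q4) (W := c₅ - ((2:ℤ):ℝ)*q5) (g := h₅)
  · have := key 1 j
    have e : (((1:ℤ):ℝ)*c₁ + ((1:ℤ):ℝ)^2*β + ((1:ℤ):ℝ)*j)/d - 1 = (c₁+β)/d + j*(1/d) - 1 := by push_cast; ring
    rw [e] at this
    exact this
  · have := key (-1) (-j)
    have e : (((-1:ℤ):ℝ)*c₁ + ((-1:ℤ):ℝ)^2*β + ((-1:ℤ):ℝ)*((-j:ℤ):ℝ))/d - 1 = (-c₁+β)/d + j*(1/d) - 1 := by push_cast; ring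
    rw [e] at this
    exact this
  · have := key 2 j
    have e : (((2:ℤ):ℝ)*c₁ + ((2:ℤ):ℝ)^2*β + ((2:ℤ):ℝ)*j)/d - 1 = 3*((c₁+β)/d) + (-c₁+β)/d + 2*j*(1/d) - 1 := by push_cast; ring
    rw [e] at this
    exact this
end

section
/- Theorem 8: With the reduced form Q and parameters as in the context but with d = ((32/3)·|D|)^{1/5} (so d⁵ = (8/3)aAt), and with m, K defined from this d, suppose the reals c_1, …, c_5 satisfy c_2 ∈ ℤ, and suppose a < 1/2, d ≤ 1, a + d ≤ 1, and (m, K) = (1,1). Then there exist x_1, …, x_5 with x_i − c_i ∈ ℤ for every i such that 0 < Q(x_1,…,x_5) < d. -/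
/-- A bounded arithmetic progression is constant. -/
lemma ap_const (f : ℕ → ℝ) (c : ℝ) (h : ∀ k, f (k+1) = f k + c) (b : ∀ k, |f k| ≤ 1) : c = 0 := by
  have hk : ∀ k : ℕ, f k = f 0 + k * c := by
    intro k
    induction k with
    | zero => simp
    | succ k ih => rw [h, ih]; push_cast; ring
  by_contra hc
  obtain ⟨n, hn⟩ := exists_nat_gt (3 / |c|)
  have hcp : 0 < |c| := abs_pos.mpr hc
  rw [div_lt_iff₀ hcp] at hn
  have h1 : |(n : ℝ) * c| ≤ 2 := by
    have : (n : ℝ) * c = f n - f 0 := by rw [hk n]; ring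
    rw [this]
    have h0 := abs_le.mp (b 0)
    have h2 := abs_le.mp (b n)
    rw [abs_le]; constructor <;> linarith
  rw [abs_mul, Nat.abs_cast] at h1
  linarith

/-- Second difference of `r` centred at `n+1`. -/
def sd (r : ℕ → ℝ) (n : ℕ) : ℝ := r (n+2) + r n - 2 * r (n+1)

lemma exists_minus (a : ℝ) (r : ℕ → ℝ) (ha' : a < 1/2)
    (hr : ∀ n, 0 ≤ r n ∧ r n ≤ 1)
    (hw : ∀ n, sd r n = -(2*a) ∨ sd r n = 1 - 2*a) : ∃ n, sd r n = -(2*a) := by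
  by_contra hcon
  push Not at hcon
  have h := ap_const (fun k => r (k+1) - r k) (1 - 2*a) (fun k => by
      have := (hw k).resolve_left (hcon k)
      unfold sd at this
      show r (k+2) - r (k+1) = r (k+1) - r k + _
      linarith)
    (fun k => by
      have h1 := hr k; have h2 := hr (k+1)
      rw [abs_le]; constructor <;> linarith)
  linarith

/-- One-dimensional rigidity. -/
lemma one_dim (a d : ℝ) (r : ℕ → ℝ) (hd : 1/2 < d) (hd2 : d ≤ 2*a) (had : a + d ≤ 1)
    (hch : a ≤ 1/4 + 37/18*(d - 1/2))
    (hr : ∀ n, 0 ≤ r n ∧ r n ≤ 1 - d)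
    (hw : ∀ n, sd r n = -(2*a) ∨ sd r n = 1 - 2*a) : a = 1/3 ∨ a = 3/10 := by
  have nxt : ∀ n, sd r n = -(2*a) →
      (sd r (n+1) = 1-2*a ∧ sd r (n+2) = -(2*a)) ∨
      (sd r (n+1) = 1-2*a ∧ sd r (n+2) = 1-2*a ∧ sd r (n+3) = -(2*a)) := by
    intro n hn
    have h1 : sd r (n+1) = 1-2*a := by
      refine (hw (n+1)).resolve_left fun h => ?_
      unfold sd at *
      linarith [hr n, hr (n+1), hr (n+2), hr (n+3)]
    rcases hw (n+2) with h2 | h2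
    · exact Or.inl ⟨h1, h2⟩
    · refine Or.inr ⟨h1, h2, (hw (n+3)).resolve_right fun h3 => ?_⟩
      have b0 := hr n; have b1 := hr (n+1); have b2 := hr (n+2); have b3 := hr (n+3)
      have b4 := hr (n+4); have b5 := hr (n+5); have b6 := hr (n+6)
      rcases hw (n+4) with h4 | h4 <;> unfold sd at * <;> linarith
  have f3222 : ∀ n, sd r n = -(2*a) → sd r (n+1) = 1-2*a → sd r (n+2) = -(2*a) →
      sd r (n+3) = 1-2*a → sd r (n+4) = -(2*a) → sd r (n+6) = -(2*a) ∧ sd r (n+5) = 1-2*a := by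
    intro n h0 h1 h2 h3 h4
    rcases nxt _ h4 with ⟨h5, h6⟩ | ⟨h5, h6, h7⟩
    · exact ⟨h6, h5⟩
    · exfalso
      have b0 := hr n; have b1 := hr (n+1); have b2 := hr (n+2); have b3 := hr (n+3)
      have b4 := hr (n+4); have b5 := hr (n+5); have b6 := hr (n+6); have b7 := hr (n+7)
      have b8 := hr (n+8); have b9 := hr (n+9)
      unfold sd at *; linarith
  have f322 : ∀ n, sd r n = -(2*a) → sd r (n+1) = 1-2*a → sd r (n+2) = 1-2*a →
      sd r (n+3) = -(2*a) → sd r (n+4) = 1-2*a → sd r (n+5) = -(2*a) → 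
      sd r (n+6) = 1-2*a ∧ sd r (n+7) = 1-2*a ∧ sd r (n+8) = -(2*a) := by
    intro n h0 h1 h2 h3 h4 h5
    rcases nxt _ h5 with ⟨h6, h7⟩ | h
    · exfalso
      have b0 := hr n; have b1 := hr (n+1); have b2 := hr (n+2); have b3 := hr (n+3)
      have b4 := hr (n+4); have b5 := hr (n+5); have b6 := hr (n+6); have b7 := hr (n+7)
      have b8 := hr (n+8); have b9 := hr (n+9)
      unfold sd at *; linarith
    · exact h
  have f333 : ∀ n, sd r n = -(2*a) → sd r (n+1) = 1-2*a → sd r (n+2) = 1-2*a →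
      sd r (n+3) = -(2*a) → sd r (n+4) = 1-2*a → sd r (n+5) = 1-2*a → sd r (n+6) = -(2*a) →
      sd r (n+7) = 1-2*a ∧ sd r (n+8) = 1-2*a ∧ sd r (n+9) = -(2*a) := by
    intro n h0 h1 h2 h3 h4 h5 h6
    rcases nxt _ h6 with ⟨h7, h8⟩ | h
    · exfalso
      have b0 := hr n; have b1 := hr (n+1); have b2 := hr (n+2); have b3 := hr (n+3)
      have b4 := hr (n+4); have b5 := hr (n+5); have b6 := hr (n+6); have b7 := hr (n+7)
      have b8 := hr (n+8); have b9 := hr (n+9); have b10 := hr (n+10)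
      unfold sd at *; linarith
    · exact h
  have f232 : ∀ n, sd r n = -(2*a) → sd r (n+1) = 1-2*a → sd r (n+2) = -(2*a) →
      sd r (n+3) = 1-2*a → sd r (n+4) = 1-2*a → sd r (n+5) = -(2*a) → 
      sd r (n+6) = 1-2*a ∧ sd r (n+7) = -(2*a) := by
    intro n h0 h1 h2 h3 h4 h5
    rcases nxt _ h5 with h | ⟨h6, h7, h8⟩
    · exact h
    · exfalso
      have b0 := hr n; have b1 := hr (n+1); have b2 := hr (n+2); have b3 := hr (n+3)
      have b4 := hr (n+4); have b5 := hr (n+5); have b6 := hr (n+6); have b7 := hr (n+7)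
      have b8 := hr (n+8); have b9 := hr (n+9); have b10 := hr (n+10)
      unfold sd at *; linarith
  have diffb : ∀ n, |r (n+1) - r n| ≤ 1 := by
    intro n
    have h1 := hr n; have h2 := hr (n+1)
    rw [abs_le]; constructor <;> linarith
  -- the three periodic regimes
  have reg2 : ∀ n, sd r n = -(2*a) → sd r (n+1) = 1-2*a → sd r (n+2) = -(2*a) →
      sd r (n+3) = 1-2*a → sd r (n+4) = -(2*a) → False := by
    intro n h0 h1 h2 h3 h4
    have key : ∀ k : ℕ, sd r (n+2*k) = -(2*a) ∧ sd r (n+2*k+1) = 1-2*a ∧ sd r (n+2*k+2) = -(2*a) ∧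
      sd r (n+2*k+3) = 1-2*a ∧ sd r (n+2*k+4) = -(2*a) := by
      intro k
      induction k with
      | zero => exact ⟨h0, h1, h2, h3, h4⟩
      | succ k ih =>
        obtain ⟨i0, i1, i2, i3, i4⟩ := ih
        have := f3222 _ i0 i1 i2 i3 i4
        exact ⟨i2, i3, i4, this.2, this.1⟩
    have := ap_const (fun k => r (n+2*k+1) - r (n+2*k)) (1-4*a) (fun k => by
      obtain ⟨i0, i1, -⟩ := key k
      show r (n+2*k+3) - r (n+2*k+2) = r (n+2*k+1) - r (n+2*k) + _
      unfold sd at i0 i1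
      linarith) (fun k => diffb _)
    linarith
  have reg3 : ∀ n, sd r n = -(2*a) → sd r (n+1) = 1-2*a → sd r (n+2) = 1-2*a →
      sd r (n+3) = -(2*a) → sd r (n+4) = 1-2*a → sd r (n+5) = 1-2*a → sd r (n+6) = -(2*a) →
      a = 1/3 := by
    intro n h0 h1 h2 h3 h4 h5 h6
    have key : ∀ k : ℕ, sd r (n+3*k) = -(2*a) ∧ sd r (n+3*k+1) = 1-2*a ∧ sd r (n+3*k+2) = 1-2*a ∧
      sd r (n+3*k+3) = -(2*a) ∧ sd r (n+3*k+4) = 1-2*a ∧ sd r (n+3*k+5) = 1-2*a ∧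
      sd r (n+3*k+6) = -(2*a) := by
      intro k
      induction k with
      | zero => exact ⟨h0, h1, h2, h3, h4, h5, h6⟩
      | succ k ih =>
        obtain ⟨i0, i1, i2, i3, i4, i5, i6⟩ := ih
        have := f333 _ i0 i1 i2 i3 i4 i5 i6
        exact ⟨i3, i4, i5, i6, this⟩
    have := ap_const (fun k => r (n+3*k+1) - r (n+3*k)) (2-6*a) (fun k => by
      obtain ⟨i0, i1, i2, -⟩ := key k
      show r (n+3*k+4) - r (n+3*k+3) = r (n+3*k+1) - r (n+3*k) + _
      unfold sd at i0 i1 i2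
      linarith) (fun k => diffb _)
    linarith
  have reg5 : ∀ n, sd r n = -(2*a) → sd r (n+1) = 1-2*a → sd r (n+2) = -(2*a) →
      sd r (n+3) = 1-2*a → sd r (n+4) = 1-2*a → sd r (n+5) = -(2*a) → a = 3/10 := by
    intro n h0 h1 h2 h3 h4 h5
    have key : ∀ k : ℕ, sd r (n+5*k) = -(2*a) ∧ sd r (n+5*k+1) = 1-2*a ∧ sd r (n+5*k+2) = -(2*a) ∧
      sd r (n+5*k+3) = 1-2*a ∧ sd r (n+5*k+4) = 1-2*a ∧ sd r (n+5*k+5) = -(2*a) := by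
      intro k
      induction k with
      | zero => exact ⟨h0, h1, h2, h3, h4, h5⟩
      | succ k ih =>
        obtain ⟨i0, i1, i2, i3, i4, i5⟩ := ih
        obtain ⟨i6, i7⟩ := f232 _ i0 i1 i2 i3 i4 i5
        have := f322 _ i2 i3 i4 i5 i6 i7
        exact ⟨i5, i6, i7, this⟩
    have := ap_const (fun k => r (n+5*k+1) - r (n+5*k)) (3-10*a) (fun k => by
      obtain ⟨i0, i1, i2, i3, i4, -⟩ := key k
      show r (n+5*k+6) - r (n+5*k+5) = r (n+5*k+1) - r (n+5*k) + _
      unfold sd at i0 i1 i2 i3 i4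
      linarith) (fun k => diffb _)
    linarith
  obtain ⟨n, h0⟩ := exists_minus a r (by linarith) (fun n => ⟨(hr n).1, by linarith [(hr n).2]⟩) hw
  rcases nxt n h0 with ⟨h1, h2⟩ | ⟨h1, h2, h3⟩
  · rcases nxt _ h2 with ⟨h3, h4⟩ | ⟨h3, h4, h5⟩
    · exact (reg2 n h0 h1 h2 h3 h4).elim
    · exact Or.inr (reg5 n h0 h1 h2 h3 h4 h5)
  · rcases nxt _ h3 with ⟨h4, h5⟩ | ⟨h4, h5, h6⟩
    · obtain ⟨h6, h7, h8⟩ := f322 n h0 h1 h2 h3 h4 h5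
      exact Or.inr (reg5 (n+3) h3 h4 h5 h6 h7 h8)
    · exact Or.inl (reg3 n h0 h1 h2 h3 h4 h5 h6)

/-- A real equal to an integer and of absolute value below one vanishes. -/
lemma int_small (s : ℝ) (k : ℤ) (h : s = k) (h1 : -1 < s) (h2 : s < 1) : s = 0 := by
  rw [h] at h1 h2 ⊢
  have h3 : (-1 : ℤ) < k := by exact_mod_cast h1
  have h4 : k < (1 : ℤ) := by exact_mod_cast h2
  have : k = 0 := by omega
  simp [this]

set_option maxHeartbeats 1000000 in
lemma core_gt (a A d h : ℝ) (r : ℤ → ℤ → ℝ) (g0 g1 g2 : ℝ)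
    (hd : 1/2 < d) (hd2 : d ≤ 2*a) (had : a + d ≤ 1) (ha3 : a ≤ 2*d^3)
    (hA1 : d ≤ 2*A) (hA2 : A ≤ d^2) (hh : -1/2 < h ∧ h ≤ 1/2)
    (hr : ∀ x y, 0 ≤ r x y ∧ r x y ≤ 1 - d)
    (hG : ∀ x y : ℤ, ∃ k : ℤ, r x y = g0 + g1*x + g2*y - (a*(x+h*y)^2 + A*y^2) + k) : False := by
  have hdu : d ≤ 2/3 := by linarith
  have hch : a ≤ 1/4 + 37/18*(d - 1/2) := by
    have : 2*d^3 ≤ 1/4 + 37/18*(d-1/2) := by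
      nlinarith [mul_nonneg (sub_nonneg.mpr hd.le) (sub_nonneg.mpr hdu),
        mul_nonneg (mul_nonneg (sub_nonneg.mpr hd.le) (sub_nonneg.mpr hdu)) (by linarith : (0:ℝ) ≤ d)]
    linarith
  have hA49 : A ≤ 4/9 := by nlinarith
  have dif : ∀ x y x' y', -(1-d) ≤ r x y - r x' y' ∧ r x y - r x' y' ≤ 1-d := by
    intro x y x' y'
    constructor <;> linarith [hr x y, hr x' y']
  -- lines in direction e3
  have line : ∀ (y : ℤ) (n : ℕ), sd (fun n => r n y) n = -(2*a) ∨
      sd (fun n => r n y) n = 1 - 2*a := by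
    intro y n
    obtain ⟨k0, h0⟩ := hG n y
    obtain ⟨k1, h1⟩ := hG (n+1) y
    obtain ⟨k2, h2⟩ := hG (n+2) y
    have e : sd (fun n => r n y) n = -(2*a) + ((k2 + k0 - 2*k1 : ℤ) : ℝ) := by
      unfold sd
      push_cast
      rw [h0, h1, h2]
      push_cast
      ring
    have b : -(2*(1-d)) ≤ sd (fun n => r n y) n ∧ sd (fun n => r n y) n ≤ 2*(1-d) := by
      unfold sd
      push_cast
      constructor <;> linarith [hr n y, hr (n+1) y, hr (n+2) y]
    generalize k2 + k0 - 2*k1 = k at e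
    rw [e] at b ⊢
    have c1 : (-1 : ℝ) < k := by linarith
    have c2 : (k : ℝ) < 2 := by linarith
    have c3 : (-1 : ℤ) < k := by exact_mod_cast c1
    have c4 : k < (2 : ℤ) := by exact_mod_cast c2
    have : k = 0 ∨ k = 1 := by omega
    rcases this with rfl | rfl
    · left; simp
    · right; push_cast; ring
  obtain ⟨n0, hn0⟩ := exists_minus a (fun n => r n 0) (by linarith)
    (fun n => ⟨(hr n 0).1, by linarith [(hr n 0).2]⟩) (line 0)
  have hcase := one_dim a d (fun n => r n 0) hd hd2 had hch (fun n => hr n 0) (line 0)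
  -- denominators of the increments
  have quant : ∀ (q N M : ℤ), 2*a*(q:ℝ)^2 = N → a*q*(q-1) = M →
      ∀ x y, ∃ k : ℤ, q * (r (x+1) y - r x y) = k := by
    intro q N M hN hM x y
    have st : ∀ k : ℕ, r (x+q*((k+1 : ℕ):ℤ)) y - r (x+q*(k:ℤ)) y = r (x+q) y - r x y := by
      intro k
      induction k with
      | zero => simp
      | succ k ih =>
        rw [← ih]
        obtain ⟨k0, h0⟩ := hG (x+q*(k:ℤ)) y
        obtain ⟨k1, h1⟩ := hG (x+q*((k+1:ℕ):ℤ)) y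
        obtain ⟨k2, h2⟩ := hG (x+q*((k+1+1:ℕ):ℤ)) y
        have d1 := dif (x+q*((k+1+1:ℕ):ℤ)) y (x+q*((k+1:ℕ):ℤ)) y
        have d2 := dif (x+q*((k+1:ℕ):ℤ)) y (x+q*(k:ℤ)) y
        have := int_small (r (x+q*((k+1+1:ℕ):ℤ)) y - r (x+q*((k+1:ℕ):ℤ)) y
          - (r (x+q*((k+1:ℕ):ℤ)) y - r (x+q*(k:ℤ)) y)) (k2 + k0 - 2*k1 - N)
          (by rw [h0, h1, h2]; push_cast; rw [← hN]; ring) (by linarith) (by linarith)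
        linarith
    have c0 := ap_const (fun k => r (x+q*(k:ℤ)) y) (r (x+q) y - r x y) (fun k => by
      have := st k
      show r (x+q*((k+1 : ℕ):ℤ)) y = _
      linarith) (fun k => by
      have := hr (x+q*(k:ℤ)) y
      rw [abs_le]; constructor <;> linarith)
    obtain ⟨k0, h0⟩ := hG x y
    obtain ⟨k1, h1⟩ := hG (x+1) y
    obtain ⟨k2, h2⟩ := hG (x+q) y
    refine ⟨q*(k1-k0) - (k2-k0) + M, ?_⟩
    rw [h0, h2] at c0
    rw [h0, h1]
    push_cast at c0 ⊢
    rw [← hM]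
    linear_combination c0
  have quanth : ∀ (q N M : ℤ), 2*a*(q:ℝ)^2 = N → a*q*(q-1) = M → ∃ k : ℤ, q*(2*a*h) = k := by
    intro q N M hN hM
    obtain ⟨p0, hp0⟩ := quant q N M hN hM 0 0
    obtain ⟨p1, hp1⟩ := quant q N M hN hM 0 1
    obtain ⟨k0, h0⟩ := hG 0 0
    obtain ⟨k1, h1⟩ := hG (0+1) 0
    obtain ⟨k2, h2⟩ := hG 0 1
    obtain ⟨k3, h3⟩ := hG (0+1) 1
    refine ⟨p0 - p1 + q*(k3 - k2 - k1 + k0), ?_⟩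
    rw [h0, h1] at hp0
    rw [h2, h3] at hp1
    push_cast at hp0 hp1 ⊢
    linear_combination hp0 - hp1
  -- the separable direction
  have fin : ∀ (s c : ℤ) (C : ℝ), 2*a*(h+s) = c → C ≠ 0 →
      (∀ k : ℤ, -(2*(1-d-a)) ≤ -2*(A+a*(h+s)^2)+k → -2*(A+a*(h+s)^2)+k ≤ 2*(1-d-a) →
        -2*(A+a*(h+s)^2)+k = C) → False := by
    intro s c C hc hC hk
    have eqU : ∀ x y, r (x+1+s) (y+1) - r (x+s) (y+1) = r (x+1) y - r x y := by
      intro x y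
      obtain ⟨k0, h0⟩ := hG x y
      obtain ⟨k1, h1⟩ := hG (x+1) y
      obtain ⟨k2, h2⟩ := hG (x+s) (y+1)
      obtain ⟨k3, h3⟩ := hG (x+1+s) (y+1)
      have d1 := dif (x+1+s) (y+1) (x+s) (y+1)
      have d2 := dif (x+1) y x y
      have := int_small (r (x+1+s) (y+1) - r (x+s) (y+1) - (r (x+1) y - r x y))
        (k3 - k2 - k1 + k0 - c) (by rw [h0, h1, h2, h3]; push_cast; rw [← hc]; ring)
        (by linarith) (by linarith)
      linarith
    have D : ∀ y : ℕ, r ((n0:ℤ)+s*y+1+1) y + r ((n0:ℤ)+s*y) y - 2 * r ((n0:ℤ)+s*y+1) y = -(2*a) := by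
      intro y
      induction y with
      | zero =>
        unfold sd at hn0
        push_cast at hn0
        simp only [Nat.cast_zero, mul_zero, add_zero]
        rw [← hn0]
        simp only [add_assoc]
        norm_num
      | succ y ih =>
        have e1 := eqU ((n0:ℤ)+s*y) y
        have e2 := eqU ((n0:ℤ)+s*y+1) y
        have i0 : (n0:ℤ)+s*((y+1:ℕ):ℤ) = (n0:ℤ)+s*y+s := by push_cast; ring
        have i1 : (n0:ℤ)+s*y+s+1 = (n0:ℤ)+s*y+1+s := by ring
        have i2 : (n0:ℤ)+s*y+1+s+1 = (n0:ℤ)+s*y+1+1+s := by ring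
        rw [i0, i1, i2]
        push_cast
        linarith
    have lo : ∀ y : ℕ, a ≤ r ((n0:ℤ)+s*y+1) y := by
      intro y
      linarith [D y, hr ((n0:ℤ)+s*y+1+1) y, hr ((n0:ℤ)+s*y) y]
    refine hC (ap_const (fun y => r ((n0:ℤ)+s*((y+1:ℕ):ℤ)+1) ((y+1:ℕ):ℤ) - r ((n0:ℤ)+s*(y:ℤ)+1) (y:ℤ)) C
      (fun y => ?_) (fun y => ?_))
    · show r ((n0:ℤ)+s*((y+1+1:ℕ):ℤ)+1) ((y+1+1:ℕ):ℤ) - r ((n0:ℤ)+s*((y+1:ℕ):ℤ)+1) ((y+1:ℕ):ℤ) =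
        r ((n0:ℤ)+s*((y+1:ℕ):ℤ)+1) ((y+1:ℕ):ℤ) - r ((n0:ℤ)+s*(y:ℤ)+1) (y:ℤ) + C
      have l0 := lo y; have l1 := lo (y+1); have l2 := lo (y+1+1)
      have u0 := hr ((n0:ℤ)+s*(y:ℤ)+1) (y:ℤ)
      have u1 := hr ((n0:ℤ)+s*((y+1:ℕ):ℤ)+1) ((y+1:ℕ):ℤ)
      have u2 := hr ((n0:ℤ)+s*((y+1+1:ℕ):ℤ)+1) ((y+1+1:ℕ):ℤ)
      obtain ⟨k0, h0⟩ := hG ((n0:ℤ)+s*(y:ℤ)+1) (y:ℤ)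
      obtain ⟨k1, h1⟩ := hG ((n0:ℤ)+s*((y+1:ℕ):ℤ)+1) ((y+1:ℕ):ℤ)
      obtain ⟨k2, h2⟩ := hG ((n0:ℤ)+s*((y+1+1:ℕ):ℤ)+1) ((y+1+1:ℕ):ℤ)
      have e : r ((n0:ℤ)+s*((y+1+1:ℕ):ℤ)+1) ((y+1+1:ℕ):ℤ) + r ((n0:ℤ)+s*(y:ℤ)+1) (y:ℤ)
          - 2 * r ((n0:ℤ)+s*((y+1:ℕ):ℤ)+1) ((y+1:ℕ):ℤ) =
          -2*(A+a*(h+s)^2) + ((k2 + k0 - 2*k1 : ℤ) : ℝ) := by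
        rw [h0, h1, h2]; push_cast; ring
      have := hk (k2 + k0 - 2*k1) (by rw [← e]; linarith) (by rw [← e]; linarith)
      linarith
    · have u0 := hr ((n0:ℤ)+s*(y:ℤ)+1) (y:ℤ)
      have u1 := hr ((n0:ℤ)+s*((y+1:ℕ):ℤ)+1) ((y+1:ℕ):ℤ)
      show |r ((n0:ℤ)+s*((y+1:ℕ):ℤ)+1) ((y+1:ℕ):ℤ) - r ((n0:ℤ)+s*(y:ℤ)+1) (y:ℤ)| ≤ 1
      rw [abs_le]; constructor <;> linarith
  -- an integer is at most j-1, equal to j, or at least j+1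
  have tri : ∀ k j : ℤ, (k:ℝ) ≤ j - 1 ∨ k = j ∨ (j:ℝ) + 1 ≤ k := by
    intro k j
    rcases lt_trichotomy k j with h | h | h
    · left; have : k ≤ j - 1 := by omega
      exact_mod_cast this
    · right; left; exact h
    · right; right; have : j + 1 ≤ k := by omega
      exact_mod_cast this
  rcases hcase with rfl | rfl
  · have hd55 : 11/20 ≤ d := by
      by_contra hcon
      push Not at hcon
      nlinarith [mul_pos (by linarith : 0 < d) (by linarith : 0 < d), mul_pos (mul_pos (by linarith : 0 < d) (by linarith : 0 < d)) (sub_pos.mpr hcon),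
        mul_pos (by linarith : 0 < d) (sub_pos.mpr hcon)]
    obtain ⟨k, hk⟩ := quanth 3 6 2 (by norm_num) (by norm_num)
    have hk' : h = k/2 := by push_cast at hk; linarith
    have k1 : (-1 : ℝ) < k := by linarith
    have k2 : (k : ℝ) ≤ 1 := by linarith
    have k3 : (-1 : ℤ) < k := by exact_mod_cast k1
    have k4 : k ≤ (1 : ℤ) := by exact_mod_cast k2
    have : k = 0 ∨ k = 1 := by omega
    rcases this with rfl | rfl
    · have h0 : h = 0 := by rw [hk']; simp
      subst h0
      refine fin 0 0 (1-2*A) (by norm_num) (by intro hc; linarith) ?_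
      intro j b1 b2
      rcases tri j 1 with hj | rfl | hj <;> (try push_cast at hj) <;> push_cast at b1 b2 ⊢ <;> linarith
    · have h0 : h = 1/2 := by rw [hk']; simp
      subst h0
      refine fin 1 1 (1/2-2*A) (by norm_num) (by intro hc; linarith) ?_
      intro j b1 b2
      rcases tri j 2 with hj | rfl | hj <;> (try push_cast at hj) <;> push_cast at b1 b2 ⊢ <;> linarith
  · have hd53 : 53/100 ≤ d := by
      by_contra hcon
      push Not at hcon
      nlinarith [mul_pos (by linarith : 0 < d) (by linarith : 0 < d), mul_pos (mul_pos (by linarith : 0 < d) (by linarith : 0 < d)) (sub_pos.mpr hcon),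
        mul_pos (by linarith : 0 < d) (sub_pos.mpr hcon)]
    obtain ⟨k, hk⟩ := quanth 5 15 6 (by norm_num) (by norm_num)
    have hk' : h = k/3 := by push_cast at hk; linarith
    have k1 : (-2 : ℝ) < k := by linarith
    have k2 : (k : ℝ) < 2 := by linarith
    have k3 : (-2 : ℤ) < k := by exact_mod_cast k1
    have k4 : k < (2 : ℤ) := by exact_mod_cast k2
    have : k = 0 ∨ k = 1 ∨ k = -1 := by omega
    rcases this with rfl | rfl | rfl
    · have h0 : h = 0 := by rw [hk']; simp
      subst h0
      refine fin 0 0 (1-2*A) (by norm_num) (by intro hc; linarith) ?_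
      intro j b1 b2
      rcases tri j 1 with hj | rfl | hj <;> (try push_cast at hj) <;> push_cast at b1 b2 ⊢ <;> linarith
    · have h0 : h = 1/3 := by rw [hk']; simp
      subst h0
      refine fin (-2) (-1) (1/3-2*A) (by norm_num) (by intro hc; linarith) ?_
      intro j b1 b2
      rcases tri j 2 with hj | rfl | hj <;> (try push_cast at hj) <;> push_cast at b1 b2 ⊢ <;> linarith
    · have h0 : h = -1/3 := by rw [hk']; simp
      subst h0
      refine fin 2 1 (1/3-2*A) (by norm_num) (by intro hc; linarith) ?_
      intro j b1 b2
      rcases tri j 2 with hj | rfl | hj <;> (try push_cast at hj) <;> push_cast at b1 b2 ⊢ <;> linarith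

set_option maxHeartbeats 1000000 in
lemma core_half (h₄ h₅ : ℝ) (r : ℤ → ℤ → ℤ → ℝ) (g0 g1 g2 g3 : ℝ)
    (hh₄ : -1/2 < h₄ ∧ h₄ ≤ 1/2) (hh₅ : -1/2 < h₅ ∧ h₅ ≤ 1/2)
    (hr : ∀ x y z, 0 ≤ r x y z ∧ r x y z ≤ 1/2)
    (hG : ∀ x y z : ℤ, ∃ k : ℤ, r x y z = g0 + g1*x + g2*y + g3*z
      - redPhi (1/4) (1/4) (3/16) (1/2) h₄ h₅ x y z + k) : False := by
  -- mixed differences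
  have mix : ∀ x y z i j l i' j' l' : ℤ, ∃ k : ℤ,
      r (x+i'+i) (y+j'+j) (z+l'+l) - r (x+i') (y+j') (z+l') = r (x+i) (y+j) (z+l) - r x y z
      - (redPhi (1/4) (1/4) (3/16) (1/2) h₄ h₅ (i+i') (j+j') (l+l')
        - redPhi (1/4) (1/4) (3/16) (1/2) h₄ h₅ i j l
        - redPhi (1/4) (1/4) (3/16) (1/2) h₄ h₅ i' j' l') + k := by
    intro x y z i j l i' j' l'
    obtain ⟨k0, e0⟩ := hG x y z
    obtain ⟨k1, e1⟩ := hG (x+i) (y+j) (z+l)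
    obtain ⟨k2, e2⟩ := hG (x+i') (y+j') (z+l')
    obtain ⟨k3, e3⟩ := hG (x+i'+i) (y+j'+j) (z+l'+l)
    refine ⟨k3 - k2 - k1 + k0, ?_⟩
    rw [e0, e1, e2, e3]
    unfold redPhi
    push_cast
    ring
  -- dichotomy for vectors of norm 1/4
  have dich : ∀ i j l : ℤ, redPhi (1/4) (1/4) (3/16) (1/2) h₄ h₅ i j l = 1/4 → ∀ x y z : ℤ,
      (∃ k : ℤ, 2*(r (x+i) (y+j) (z+l) - r x y z) = k + 1/2) ∨
      ((r x y z = 0 ∨ r x y z = 1/2) ∧ ∃ k : ℤ, 2*(r (x+i) (y+j) (z+l) - r x y z) = k) := by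
    intro i j l hφ x y z
    have key : ∃ k : ℤ, 2*(r (x+i) (y+j) (z+l) - r x y z)
        = r (x+2*i) (y+2*j) (z+2*l) - r x y z + 1/2 + k := by
      obtain ⟨k0, e0⟩ := hG x y z
      obtain ⟨k1, e1⟩ := hG (x+i) (y+j) (z+l)
      obtain ⟨k2, e2⟩ := hG (x+2*i) (y+2*j) (z+2*l)
      refine ⟨2*k1 - k0 - k2, ?_⟩
      rw [e0, e1, e2]
      unfold redPhi at hφ ⊢
      push_cast
      linear_combination 2*hφ
    obtain ⟨k, hk⟩ := key
    have b0 := hr x y z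
    have b2 := hr (x+2*i) (y+2*j) (z+2*l)
    by_cases c1 : r (x+2*i) (y+2*j) (z+2*l) - r x y z = 1/2
    · right
      refine ⟨Or.inl (by linarith), 1 + k, ?_⟩
      rw [hk, c1]; push_cast; ring
    by_cases c2 : r (x+2*i) (y+2*j) (z+2*l) - r x y z = -1/2
    · right
      refine ⟨Or.inr (by linarith), k, ?_⟩
      rw [hk, c2]; ring
    left
    have c1' : r (x+2*i) (y+2*j) (z+2*l) - r x y z < 1/2 :=
      lt_of_le_of_ne (by linarith) c1
    have c2' : -1/2 < r (x+2*i) (y+2*j) (z+2*l) - r x y z :=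
      lt_of_le_of_ne (by linarith) (Ne.symm c2)
    have st : ∀ n : ℕ, r (x+2*((n+1:ℕ):ℤ)*i) (y+2*((n+1:ℕ):ℤ)*j) (z+2*((n+1:ℕ):ℤ)*l)
        - r (x+2*(n:ℤ)*i) (y+2*(n:ℤ)*j) (z+2*(n:ℤ)*l)
        = r (x+2*i) (y+2*j) (z+2*l) - r x y z := by
      intro n
      induction n with
      | zero => simp
      | succ n ih =>
        obtain ⟨k0, e0⟩ := hG (x+2*(n:ℤ)*i) (y+2*(n:ℤ)*j) (z+2*(n:ℤ)*l)
        obtain ⟨k1, e1⟩ := hG (x+2*((n+1:ℕ):ℤ)*i) (y+2*((n+1:ℕ):ℤ)*j) (z+2*((n+1:ℕ):ℤ)*l)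
        obtain ⟨k2, e2⟩ := hG (x+2*((n+1+1:ℕ):ℤ)*i) (y+2*((n+1+1:ℕ):ℤ)*j) (z+2*((n+1+1:ℕ):ℤ)*l)
        have u1 := hr (x+2*((n+1:ℕ):ℤ)*i) (y+2*((n+1:ℕ):ℤ)*j) (z+2*((n+1:ℕ):ℤ)*l)
        have u2 := hr (x+2*((n+1+1:ℕ):ℤ)*i) (y+2*((n+1+1:ℕ):ℤ)*j) (z+2*((n+1+1:ℕ):ℤ)*l)
        have := int_small
          (r (x+2*((n+1+1:ℕ):ℤ)*i) (y+2*((n+1+1:ℕ):ℤ)*j) (z+2*((n+1+1:ℕ):ℤ)*l)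
          - r (x+2*((n+1:ℕ):ℤ)*i) (y+2*((n+1:ℕ):ℤ)*j) (z+2*((n+1:ℕ):ℤ)*l)
          - (r (x+2*((n+1:ℕ):ℤ)*i) (y+2*((n+1:ℕ):ℤ)*j) (z+2*((n+1:ℕ):ℤ)*l)
            - r (x+2*(n:ℤ)*i) (y+2*(n:ℤ)*j) (z+2*(n:ℤ)*l))) (k2 + k0 - 2*k1 - 2)
          (by
            rw [e0, e1, e2]
            unfold redPhi at hφ ⊢
            push_cast
            linear_combination -8*hφ) (by linarith) (by linarith)
        linarith
    have c0 := ap_const (fun n => r (x+2*(n:ℤ)*i) (y+2*(n:ℤ)*j) (z+2*(n:ℤ)*l))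
      (r (x+2*i) (y+2*j) (z+2*l) - r x y z) (fun n => by
        have := st n
        show r (x+2*((n+1:ℕ):ℤ)*i) (y+2*((n+1:ℕ):ℤ)*j) (z+2*((n+1:ℕ):ℤ)*l) = _
        linarith) (fun n => by
        have := hr (x+2*(n:ℤ)*i) (y+2*(n:ℤ)*j) (z+2*(n:ℤ)*l)
        rw [abs_le]; constructor <;> linarith)
    exact ⟨k, by rw [hk, c0]; ring⟩
  have half : ∀ m n : ℤ, (m:ℝ) = n + 1/2 → False := by
    intro m n hmn
    have : (2*m : ℝ) = 2*n + 1 := by linarith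
    have : 2*m = 2*n+1 := by exact_mod_cast this
    omega
  have quarter : ∀ i j l : ℤ, redPhi (1/4) (1/4) (3/16) (1/2) h₄ h₅ i j l = 1/4 → ∀ x y z : ℤ,
      ∃ k : ℤ, 4*(r (x+i) (y+j) (z+l) - r x y z) = k := by
    intro i j l hφ x y z
    rcases dich i j l hφ x y z with ⟨k, hk⟩ | ⟨-, k, hk⟩
    · exact ⟨2*k+1, by push_cast; linarith⟩
    · exact ⟨2*k, by push_cast; linarith⟩
  have e3φ : redPhi (1/4) (1/4) (3/16) (1/2) h₄ h₅ ((1:ℤ):ℝ) ((0:ℤ):ℝ) ((0:ℤ):ℝ) = 1/4 := by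
    unfold redPhi; push_cast; ring
  -- admissible values of h₄, h₅
  have val : ∀ h : ℝ, (-1/2 < h ∧ h ≤ 1/2) → (∃ k : ℤ, 2*h = k) → h = 0 ∨ h = 1/2 := by
    rintro h ⟨b1, b2⟩ ⟨k, hk⟩
    have k1 : (-1:ℝ) < k := by linarith
    have k2 : (k:ℝ) ≤ 1 := by linarith
    have k3 : (-1 : ℤ) < k := by exact_mod_cast k1
    have k4 : k ≤ (1 : ℤ) := by exact_mod_cast k2
    have : k = 0 ∨ k = 1 := by omega
    rcases this with rfl | rfl
    · left; push_cast at hk; linarith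
    · right; push_cast at hk; linarith
  have v4 : h₄ = 0 ∨ h₄ = 1/2 := by
    apply val h₄ hh₄
    obtain ⟨k, hk⟩ := mix 0 0 0 1 0 0 0 1 0
    obtain ⟨p, hp⟩ := quarter 1 0 0 e3φ 0 0 0
    obtain ⟨q, hq⟩ := quarter 1 0 0 e3φ (0+0) (0+1) (0+0)
    refine ⟨p - q + 4*k, ?_⟩
    unfold redPhi at hk
    push_cast at hk ⊢
    simp only [zero_add, add_zero] at hk hp hq
    linarith
  have v5 : h₅ = 0 ∨ h₅ = 1/2 := by
    apply val h₅ hh₅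
    obtain ⟨k, hk⟩ := mix 0 0 0 1 0 0 0 0 1
    obtain ⟨p, hp⟩ := quarter 1 0 0 e3φ 0 0 0
    obtain ⟨q, hq⟩ := quarter 1 0 0 e3φ (0+0) (0+0) (0+1)
    refine ⟨p - q + 4*k, ?_⟩
    unfold redPhi at hk
    push_cast at hk ⊢
    simp only [zero_add, add_zero] at hk hp hq
    linarith
  -- incompatible types for orthogonal vectors
  have contr : ∀ i j l i' j' l' : ℤ, redPhi (1/4) (1/4) (3/16) (1/2) h₄ h₅ i' j' l' = 1/4 →
      redPhi (1/4) (1/4) (3/16) (1/2) h₄ h₅ (i'+i) (j'+j) (l'+l)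
        - redPhi (1/4) (1/4) (3/16) (1/2) h₄ h₅ i' j' l'
        - redPhi (1/4) (1/4) (3/16) (1/2) h₄ h₅ i j l = 0 → ∀ x y z k k' : ℤ,
      2*(r (x+i) (y+j) (z+l) - r x y z) = k + 1/2 →
      (r x y z = 0 ∨ r x y z = 1/2) →
      2*(r (x+i') (y+j') (z+l') - r x y z) = k' → False := by
    intro i j l i' j' l' hφ h0 x y z k k' hk hz hk'
    obtain ⟨p, hp⟩ := mix x y z i' j' l' i j l
    rw [h0] at hp
    rcases dich i' j' l' hφ (x+i) (y+j) (z+l) with ⟨q, hq⟩ | ⟨hz', -⟩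
    · exact half (k' + 2*p) q (by push_cast; linarith)
    · rcases hz with hz | hz <;> rcases hz' with hz' | hz' <;> rw [hz, hz'] at hk
      · exact half 0 k (by push_cast; linarith)
      · exact half 1 k (by push_cast; linarith)
      · exact half (-1) k (by push_cast; linarith)
      · exact half 0 k (by push_cast; linarith)
  -- with an orthogonal pair of norm 1/4 all residues are quarters
  have allq : ∀ j l : ℤ, redPhi (1/4) (1/4) (3/16) (1/2) h₄ h₅ ((0:ℤ):ℝ) j l = 1/4 →
      h₄ * j + h₅ * l = 0 → ∀ x y z, ∃ k : ℤ, 4 * r x y z = k := by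
    intro j l hφ hort x y z
    rcases dich 1 0 0 e3φ x y z with ⟨k, hk⟩ | ⟨hz, -⟩
    · rcases dich 0 j l hφ x y z with ⟨k', hk'⟩ | ⟨hz, k', hk'⟩
      · obtain ⟨p, hp⟩ := mix x y z 1 0 0 0 j l
        have h0 : redPhi (1/4) (1/4) (3/16) (1/2) h₄ h₅ (((1:ℤ):ℝ)+((0:ℤ):ℝ)) (((0:ℤ):ℝ)+j) (((0:ℤ):ℝ)+l)
            - redPhi (1/4) (1/4) (3/16) (1/2) h₄ h₅ ((1:ℤ):ℝ) ((0:ℤ):ℝ) ((0:ℤ):ℝ)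
            - redPhi (1/4) (1/4) (3/16) (1/2) h₄ h₅ ((0:ℤ):ℝ) j l = 0 := by
          unfold redPhi
          push_cast
          linear_combination (1/2)*hort
        rw [h0] at hp
        have b0 := hr x y z
        have b1 := hr (x+1) (y+0) (z+0)
        have b2 := hr (x+0) (y+j) (z+l)
        have b3 := hr (x+0+1) (y+j+0) (z+l+0)
        have kk : ∀ (m : ℤ) (s : ℝ), 2*s = m + 1/2 → -1/2 ≤ s → s ≤ 1/2 → m = 0 ∨ m = -1 := by
          intro m s hs s1 s2
          have k1 : (-2:ℝ) < m := by linarith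
          have k2 : (m:ℝ) < 1 := by linarith
          have k3 : (-2 : ℤ) < m := by exact_mod_cast k1
          have k4 : m < (1 : ℤ) := by exact_mod_cast k2
          omega
        have pp : ∀ s : ℝ, s = p → -1 < s → s < 1 → (p:ℝ) = 0 := by
          intro s hs s1 s2
          rw [← hs]; exact int_small s p hs s1 s2
        rcases kk k _ hk (by linarith) (by linarith) with rfl | rfl <;>
        rcases kk k' _ hk' (by linarith) (by linarith) with rfl | rfl <;> push_cast at hk hk'
        · -- both +1/4
          have pb : (p:ℝ) ≤ 0 := by linarith
          have pb2 : (-2:ℝ) < p := by linarith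
          have q1 : p ≤ (0:ℤ) := by exact_mod_cast pb
          have q2 : (-2:ℤ) < p := by exact_mod_cast pb2
          have : p = 0 ∨ p = -1 := by omega
          rcases this with rfl | rfl <;> push_cast at hp
          · exact ⟨0, by push_cast; linarith⟩
          · exact ⟨2, by push_cast; linarith⟩
        · exact ⟨1, by push_cast; linarith⟩
        · exact ⟨1, by push_cast; linarith⟩
        · have pb : (0:ℝ) ≤ p := by linarith
          have pb2 : (p:ℝ) < 2 := by linarith
          have q1 : (0:ℤ) ≤ p := by exact_mod_cast pb
          have q2 : p < (2:ℤ) := by exact_mod_cast pb2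
          have : p = 0 ∨ p = 1 := by omega
          rcases this with rfl | rfl <;> push_cast at hp
          · exact ⟨2, by push_cast; linarith⟩
          · exact ⟨0, by push_cast; linarith⟩
      · rcases hz with hz | hz
        · exact ⟨0, by rw [hz]; simp⟩
        · exact ⟨2, by rw [hz]; norm_num⟩
    · rcases hz with hz | hz
      · exact ⟨0, by rw [hz]; simp⟩
      · exact ⟨2, by rw [hz]; norm_num⟩
  have bad : (∀ x y z, ∃ k : ℤ, 4 * r x y z = k) → ∀ j l : ℤ,
      redPhi (1/4) (1/4) (3/16) (1/2) h₄ h₅ ((0:ℤ):ℝ) j l = 5/16 → False := by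
    intro hq j l hφ
    obtain ⟨k0, e0⟩ := hG 0 0 0
    obtain ⟨k1, e1⟩ := hG 0 j l
    obtain ⟨k2, e2⟩ := hG 0 (2*j) (2*l)
    obtain ⟨q0, f0⟩ := hq 0 0 0
    obtain ⟨q1, f1⟩ := hq 0 j l
    obtain ⟨q2, f2⟩ := hq 0 (2*j) (2*l)
    refine half (q2 + q0 - 2*q1) (4*(k2 + k0 - 2*k1) - 3) ?_
    push_cast
    rw [← f0, ← f1, ← f2, e0, e1, e2]
    unfold redPhi at hφ ⊢
    push_cast at hφ ⊢
    linear_combination -8*hφ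
  rcases v4 with rfl | rfl <;> rcases v5 with rfl | rfl
  · -- orthogonal case
    have e4φ : redPhi (1/4) (1/4) (3/16) (1/2) 0 0 ((0:ℤ):ℝ) ((1:ℤ):ℝ) ((0:ℤ):ℝ) = 1/4 := by
      unfold redPhi; push_cast; ring
    have no1 : ∀ x y z k k' : ℤ, 2*(r (x+1) (y+0) (z+0) - r x y z) = k + 1/2 →
        2*(r (x+0) (y+1) (z+0) - r x y z) = k' → False := by
      intro x y z k k' hk hk'
      rcases dich 0 1 0 e4φ x y z with ⟨q, hq⟩ | ⟨hz, -⟩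
      · exact half k' q (by linarith)
      · exact contr 1 0 0 0 1 0 e4φ (by unfold redPhi; push_cast; ring) x y z k k' hk hz hk'
    have no2 : ∀ x y z k k' : ℤ, 2*(r (x+0) (y+1) (z+0) - r x y z) = k + 1/2 →
        2*(r (x+1) (y+0) (z+0) - r x y z) = k' → False := by
      intro x y z k k' hk hk'
      rcases dich 1 0 0 e3φ x y z with ⟨q, hq⟩ | ⟨hz, -⟩
      · exact half k' q (by linarith)
      · exact contr 0 1 0 1 0 0 e3φ (by unfold redPhi; push_cast; ring) x y z k k' hk hz hk'
    obtain ⟨m, hm⟩ := mix 0 0 0 1 0 0 0 0 1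
    obtain ⟨n, hn⟩ := mix 0 0 0 0 1 0 0 0 1
    have hm0 : r (0+0+1) (0+0+0) (0+1+0) - r (0+0) (0+0) (0+1) = r (0+1) (0+0) (0+0) - r 0 0 0 + m := by
      rw [hm]; unfold redPhi; push_cast; ring
    have hn0 : r (0+0+0) (0+0+1) (0+1+0) - r (0+0) (0+0) (0+1)
        = r (0+0) (0+1) (0+0) - r 0 0 0 - 1/4 + n := by
      rw [hn]; unfold redPhi; push_cast; ring
    rcases dich 1 0 0 e3φ 0 0 0 with ⟨k, hk⟩ | ⟨-, k, hk⟩ <;>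
    rcases dich 0 1 0 e4φ 0 0 0 with ⟨k', hk'⟩ | ⟨-, k', hk'⟩
    · exact no1 (0+0) (0+0) (0+1) (k + 2*m) (k' + 2*n) (by rw [hm0]; simp only [Int.cast_add, Int.cast_sub, Int.cast_mul, Int.cast_ofNat, Int.cast_one]; linarith)
        (by rw [hn0]; simp only [Int.cast_add, Int.cast_sub, Int.cast_mul, Int.cast_ofNat, Int.cast_one]; linarith)
    · exact no1 0 0 0 k k' hk hk'
    · exact no2 0 0 0 k' k hk' hk
    · exact no2 (0+0) (0+0) (0+1) (k' + 2*n - 1) (k + 2*m) (by rw [hn0]; simp only [Int.cast_add, Int.cast_sub, Int.cast_mul, Int.cast_ofNat, Int.cast_one]; linear_combination hk')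
        (by rw [hm0]; simp only [Int.cast_add, Int.cast_sub, Int.cast_mul, Int.cast_ofNat, Int.cast_one]; linarith)
  · refine bad (allq 1 0 ?_ ?_) 0 1 ?_ <;> (try unfold redPhi) <;> push_cast <;> ring
  · refine bad (allq 0 1 ?_ ?_) 1 0 ?_ <;> (try unfold redPhi) <;> push_cast <;> ring
  · refine bad (allq (-1) 1 ?_ ?_) 1 0 ?_ <;> (try unfold redPhi) <;> push_cast <;> ring

lemma resid (a A t lam h₄ h₅ a₂ a₃ a₄ a₅ d c₁ c₃ c₄ c₅ : ℝ) 
    (hcon : ∀ k x y z : ℤ, ¬ (0 < redQ a A t lam h₄ h₅ a₂ a₃ a₄ a₅ (c₁ + k) 1 (c₃+x) (c₄+y) (c₅+z) ∧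
      redQ a A t lam h₄ h₅ a₂ a₃ a₄ a₅ (c₁ + k) 1 (c₃+x) (c₄+y) (c₅+z) < d)) :
    ∃ (r : ℤ → ℤ → ℤ → ℝ) (g0 g1 g2 g3 : ℝ), (∀ x y z, 0 ≤ r x y z ∧ r x y z ≤ 1 - d) ∧
      ∀ x y z : ℤ, ∃ k : ℤ,
      r x y z = g0 + g1*x + g2*y + g3*z - redPhi a A t lam h₄ h₅ x y z + k := by
  obtain ⟨G, hGd⟩ : ∃ G : ℤ → ℤ → ℤ → ℝ, ∀ x y z : ℤ, G x y z =
      c₁ + a₂ + a₃*(c₃+x) + a₄*(c₄+y) + a₅*(c₅+z)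
      - redPhi a A t lam h₄ h₅ (c₃+x) (c₄+y) (c₅+z) := ⟨_, fun _ _ _ => rfl⟩
  refine ⟨fun x y z => G x y z - ⌈G x y z⌉ + 1 - d,
    c₁ + a₂ + a₃*c₃ + a₄*c₄ + a₅*c₅ - redPhi a A t lam h₄ h₅ c₃ c₄ c₅ - d,
    a₃ - 2*a*(c₃+h₄*c₄+h₅*c₅), a₄ - 2*a*(c₃+h₄*c₄+h₅*c₅)*h₄ - 2*A*(c₄+lam*c₅),
    a₅ - 2*a*(c₃+h₄*c₄+h₅*c₅)*h₅ - 2*A*(c₄+lam*c₅)*lam - 2*t*c₅, ?_, ?_⟩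
  · intro x y z
    have u1 := Int.le_ceil (G x y z)
    have u2 := Int.ceil_lt_add_one (G x y z)
    beta_reduce
    refine ⟨?_, by linarith⟩
    by_contra hneg
    have hneg' := not_le.mp hneg
    have hQ : redQ a A t lam h₄ h₅ a₂ a₃ a₄ a₅ (c₁ + ((1 - ⌈G x y z⌉ : ℤ) : ℝ)) 1 (c₃+x) (c₄+y) (c₅+z)
        = G x y z - ⌈G x y z⌉ + 1 := by
      generalize ⌈G x y z⌉ = N
      rw [hGd]
      unfold redQ
      push_cast
      ring
    apply hcon (1 - ⌈G x y z⌉) x y z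
    rw [hQ]
    constructor <;> linarith
  · intro x y z
    refine ⟨1 - ⌈G x y z⌉, ?_⟩
    beta_reduce
    generalize ⌈G x y z⌉ = N
    rw [hGd]
    push_cast
    unfold redPhi
    ring


set_option maxHeartbeats 2000000 in
theorem thm8 (a A t lam h₄ h₅ a₂ a₃ a₄ a₅ d : ℝ) (m K : ℤ)
    (ha : 0 < a) (hA : 0 < A) (ht : 0 < t)
    (ha₂ : -1/2 < a₂ ∧ a₂ ≤ 1/2) (ha₃ : -1/2 < a₃ ∧ a₃ ≤ 1/2)
    (ha₄ : -1/2 < a₄ ∧ a₄ ≤ 1/2) (ha₅ : -1/2 < a₅ ∧ a₅ ≤ 1/2)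
    (hh₄ : -1/2 < h₄ ∧ h₄ ≤ 1/2) (hh₅ : -1/2 < h₅ ∧ h₅ ≤ 1/2)
    (hlam : 0 ≤ lam ∧ lam ≤ 1/2) (hAC : A ≤ t + A * lam^2)
    (hmin_le : ∀ u v w : ℤ, ¬(u = 0 ∧ v = 0 ∧ w = 0) →
      a ≤ redPhi a A t lam h₄ h₅ (u : ℝ) (v : ℝ) (w : ℝ))
    (hmin_eq : ∃ u v w : ℤ, ¬(u = 0 ∧ v = 0 ∧ w = 0) ∧
      redPhi a A t lam h₄ h₅ (u : ℝ) (v : ℝ) (w : ℝ) = a)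
    (hd : d = ((8/3) * a * A * t) ^ ((1 : ℝ)/5))
    (hm : (m : ℝ) < d / a ∧ d / a ≤ (m : ℝ) + 1)
    (hK : (K : ℝ) < (d + ((m : ℝ)^2 - 1) * a / 4) / A ∧
          (d + ((m : ℝ)^2 - 1) * a / 4) / A ≤ (K : ℝ) + 1)
    (ha' : a < 1/2) (hd1 : d ≤ 1) (had : a + d ≤ 1)
    (hmK : m = 1 ∧ K = 1)
    (c₁ c₂ c₃ c₄ c₅ : ℝ) (hc₂ : ∃ n : ℤ, (n : ℝ) = c₂) :
    ∃ x₁ x₂ x₃ x₄ x₅ : ℝ,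
      (∃ k : ℤ, x₁ - c₁ = k) ∧ (∃ k : ℤ, x₂ - c₂ = k) ∧ (∃ k : ℤ, x₃ - c₃ = k) ∧
      (∃ k : ℤ, x₄ - c₄ = k) ∧ (∃ k : ℤ, x₅ - c₅ = k) ∧
      0 < redQ a A t lam h₄ h₅ a₂ a₃ a₄ a₅ x₁ x₂ x₃ x₄ x₅ ∧
      redQ a A t lam h₄ h₅ a₂ a₃ a₄ a₅ x₁ x₂ x₃ x₄ x₅ < d := by
  obtain ⟨rfl, rfl⟩ := hmK
  obtain ⟨n2, hn2⟩ := hc₂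
  have hprod : 0 < (8/3) * a * A * t := by positivity
  have hd0 : 0 < d := by rw [hd]; exact Real.rpow_pos_of_pos hprod _
  have hd5 : d^5 = (8/3) * a * A * t := by
    rw [hd, ← Real.rpow_natCast, ← Real.rpow_mul hprod.le]
    norm_num
  have hd2a : d ≤ 2*a := by
    have := hm.2
    rw [div_le_iff₀ ha] at this
    push_cast at this; linarith
  have hd2A : d ≤ 2*A := by
    have := hK.2
    rw [div_le_iff₀ hA] at this
    push_cast at this; linarith
  have ht3 : 3/4*A ≤ t := by nlinarith [mul_nonneg hA.le (by nlinarith : (0:ℝ) ≤ 1/4 - lam^2)]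
  have h5 : 2*a*A^2 ≤ d^5 := by
    rw [hd5]; nlinarith [mul_le_mul_of_nonneg_left ht3 (mul_pos ha hA).le]
  have hAd : A ≤ d^2 := by
    have : d*A^2 ≤ d*(d^2)^2 := by nlinarith [mul_le_mul_of_nonneg_right hd2a (sq_nonneg A)]
    have := le_of_mul_le_mul_left this hd0
    exact le_of_sq_le_sq this (by positivity)
  have had3 : a ≤ 2*d^3 := by
    have h1 : d^2 ≤ 4*A^2 := by nlinarith
    have : d^2*a ≤ d^2*(2*d^3) := by nlinarith [mul_le_mul_of_nonneg_left h1 ha.le]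
    exact le_of_mul_le_mul_left this (by positivity)
  have hdh : 1/2 ≤ d := by nlinarith
  by_contra hcon
  obtain ⟨r, g0, g1, g2, g3, hr, hg⟩ := resid a A t lam h₄ h₅ a₂ a₃ a₄ a₅ d c₁ c₃ c₄ c₅ (by
    intro k x y z hQ
    exact hcon ⟨c₁ + k, 1, c₃+x, c₄+y, c₅+z, ⟨k, by ring⟩,
      ⟨1 - n2, by rw [← hn2]; push_cast; ring⟩, ⟨x, by ring⟩, ⟨y, by ring⟩, ⟨z, by ring⟩,
      hQ.1, hQ.2⟩)
  rcases lt_or_eq_of_le hdh with hlt | heq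
  · refine core_gt a A d h₄ (fun x y => r x y 0) g0 g1 g2 hlt hd2a had had3 hd2A hAd hh₄
      (fun x y => hr x y 0) (fun x y => ?_)
    obtain ⟨k, hk⟩ := hg x y 0
    refine ⟨k, ?_⟩
    show r x y 0 = _
    rw [hk]
    unfold redPhi
    push_cast
    ring
  · have ea : a = 1/4 := by rw [← heq] at had3 hd2a; linarith
    have eA : A = 1/4 := by rw [← heq] at hAd hd2A; linarith
    have et : t = 3/16 := by rw [ea, eA, ← heq] at hd5; linarith
    have el : lam = 1/2 := by rw [eA, et] at hAC; nlinarith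
    subst ea eA et el
    refine core_half h₄ h₅ r g0 g1 g2 g3 hh₄ hh₅ (fun x y z => ?_) hg
    have := hr x y z
    rw [← heq] at this
    exact ⟨this.1, by linarith [this.2]⟩
end

section
/- Lemma 3 (Dumir): Let α, β, γ be real numbers with γ > 1, and let m be the unique integer with m < γ ≤ m + 1. If 1/4 < β ≤ γ + m²/4, then for every real number x_0 there exists a real x with x − x_0 ∈ ℤ such that 0 < −(x + α)² + β ≤ γ. Moreover, if in addition β < γ + m²/4, then x can be chosen so that 0 < −(x + α)² + β < γ. -/
/-- Lemma 3 (Dumir): for reals `α, β, γ` with `γ > 1`, `m` the integer with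
`m < γ ≤ m+1`, and `1/4 < β ≤ γ + m²/4`, the inequality `0 < −(x+α)² + β ≤ γ` is
soluble with `x ≡ x₀ (mod 1)` for every real `x₀`; strict inequality in
`β ≤ γ + m²/4` gives strict inequality in the conclusion. -/
theorem dumir_lemma3 (α β γ : ℝ) (hγ : 1 < γ) (m : ℤ)
    (hm₁ : (m : ℝ) < γ) (hm₂ : γ ≤ (m : ℝ) + 1)
    (hβ₁ : 1/4 < β) (hβ₂ : β ≤ γ + (m : ℝ)^2/4) :
    (∀ x₀ : ℝ, ∃ x : ℝ, (∃ n : ℤ, x - x₀ = n) ∧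
      0 < -(x + α)^2 + β ∧ -(x + α)^2 + β ≤ γ) ∧
    (β < γ + (m : ℝ)^2/4 → ∀ x₀ : ℝ, ∃ x : ℝ, (∃ n : ℤ, x - x₀ = n) ∧
      0 < -(x + α)^2 + β ∧ -(x + α)^2 + β < γ) := by
  have rep : ∀ a x₀ : ℝ, ∃ x : ℝ, (∃ n : ℤ, x - x₀ = n) ∧ a < x + α ∧ x + α ≤ a + 1 := by
    intro a x₀
    refine ⟨x₀ + ((⌊a - x₀ - α⌋ + 1 : ℤ) : ℝ), ⟨_, by ring⟩, ?_, ?_⟩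
    · push_cast
      linarith [Int.lt_floor_add_one (a - x₀ - α)]
    · push_cast
      linarith [Int.floor_le (a - x₀ - α)]
  have hm0 : (1 : ℝ) ≤ m := by
    have h : (0 : ℝ) < m := by linarith
    have hpos : 0 < m := by exact_mod_cast h
    exact_mod_cast hpos
  have big : (γ + 1)^2/4 ≤ β → ∀ x₀ : ℝ, ∃ x : ℝ, (∃ n : ℤ, x - x₀ = n) ∧
      0 < -(x + α)^2 + β ∧ (m : ℝ)^2/4 ≤ (x + α)^2 := by
    intro hb x₀
    obtain ⟨x, ⟨n, hn⟩, h1, h2⟩ := rep (((m : ℝ) - 1)/2) x₀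
    by_cases h : (m : ℝ)/2 ≤ x + α
    · exact ⟨x, ⟨n, hn⟩, by nlinarith, by nlinarith⟩
    · push Not at h
      refine ⟨x - m, ⟨n - m, by push_cast; linarith⟩, ?_, ?_⟩
      · have e : (x - m + α)^2 = (m - (x + α))^2 := by ring
        rw [e]
        have h3 : m - (x + α) < ((m : ℝ) + 1)/2 := by linarith
        nlinarith
      · have e : (x - m + α)^2 = (m - (x + α))^2 := by ring
        rw [e]
        nlinarith
  have small : β < (γ + 1)^2/4 → ∀ x₀ : ℝ, ∃ x : ℝ, (∃ n : ℤ, x - x₀ = n) ∧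
      0 < -(x + α)^2 + β ∧ -(x + α)^2 + β < γ := by
    intro hb x₀
    by_cases h : β < γ
    · obtain ⟨x, hn, h1, h2⟩ := rep (-1/2) x₀
      exact ⟨x, hn, by nlinarith, by nlinarith⟩
    · push Not at h
      obtain ⟨x, hn, h1, h2⟩ := rep (√(β - γ)) x₀
      have ha := Real.sqrt_nonneg (β - γ)
      have hs := Real.sq_sqrt (sub_nonneg.2 h)
      have h3 : √(β - γ) < (γ - 1)/2 := by
        apply lt_of_pow_lt_pow_left₀ 2 (by linarith)
        nlinarith
      exact ⟨x, hn, by nlinarith, by nlinarith⟩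
  rcases lt_or_ge β ((γ + 1)^2/4) with hb | hb
  · refine ⟨fun x₀ => ?_, fun _ => small hb⟩
    obtain ⟨x, hn, h1, h2⟩ := small hb x₀
    exact ⟨x, hn, h1, h2.le⟩
  · refine ⟨fun x₀ => ?_, fun hlt x₀ => ?_⟩
    · obtain ⟨x, hn, h1, h2⟩ := big hb x₀
      exact ⟨x, hn, h1, by linarith⟩
    · obtain ⟨x, hn, h1, h2⟩ := big hb x₀
      exact ⟨x, hn, h1, by linarith⟩
end

section
/- Lemma 5 (Macbeath's first lemma): Let α, β, γ be real numbers with α > 0 and γ > 0. Let h be a real number with 2h ∈ ℤ and let k be a positive integer such that |h − k²α| + 1/2 ≤ γ. Assume it is not the case that both α = h/k² and β = h/k + m/k + 2nα for some integers m, n (i.e. either α ≠ h/k² or β ≢ h/k modulo the subgroup of ℝ generated by 1/k and 2α). Then for every real number ν and each sign ε ∈ {+1, −1}, there exist integers x, y such that 0 < x + βy + ε·α·y² + ν ≤ γ. Moreover, if |h − k²α| + 1/2 < γ, then x, y can be chosen so that 0 < x + βy + ε·α·y² + ν < γ. -/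
lemma arith_bdd (a d C : ℝ) (H : ∀ t : ℕ, |a + d * t| ≤ C) : d = 0 := by
  by_contra hd
  have hd' : 0 < |d| := abs_pos.mpr hd
  obtain ⟨n, hn⟩ := exists_nat_gt ((C + |a|) / |d|)
  rw [div_lt_iff₀ hd'] at hn
  have h1 := H n
  have h2 : |d * n| ≤ |a + d * n| + |a| := by
    have := abs_sub (a + d * n) a
    simpa using this
  rw [abs_mul, Nat.abs_cast] at h2
  linarith [mul_comm (n : ℝ) |d|]

lemma second_diff (r : ℕ → ℝ) (D A : ℝ) (hD : |D| = A)
    (hb : ∀ s t, |r s - r t| < 1/2 - A)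
    (hi : ∀ t, ∃ n : ℤ, r (t+2) - 2 * r (t+1) + r t - 2 * D = n) :
    D = 0 ∧ r 1 = r 0 := by
  have h2 : ∀ t, r (t+2) - 2 * r (t+1) + r t = 2 * D := by
    intro t
    obtain ⟨n, hn⟩ := hi t
    have a1 := abs_lt.mp (hb (t+2) (t+1))
    have a2 := abs_lt.mp (hb t (t+1))
    have a3 := abs_le.mp hD.le
    have u1 : (n : ℝ) < 1 := by linarith
    have u2 : (-1 : ℝ) < n := by linarith
    have u3 : n < 1 := by exact_mod_cast u1
    have u4 : -1 < n := by exact_mod_cast u2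
    have u5 : n = 0 := by omega
    subst u5
    push_cast at hn
    linarith
  have h3 : ∀ t : ℕ, r (t+1) - r t = (r 1 - r 0) + (2 * D) * t := by
    intro t
    induction t with
    | zero => simp
    | succ m ih => have := h2 m; push_cast; linarith
  have hD0 : D = 0 := by
    have := arith_bdd (r 1 - r 0) (2 * D) (1/2 - A) (fun t => by
      rw [← h3]; exact (hb _ _).le)
    linarith
  refine ⟨hD0, ?_⟩
  have h4 : ∀ t : ℕ, r t - r 0 = 0 + (r 1 - r 0) * t := by
    intro t
    induction t with
    | zero => simp
    | succ m ih => have := h3 m; rw [hD0] at this; push_cast; linarith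
  have := arith_bdd 0 (r 1 - r 0) (1/2 - A) (fun t => by
      rw [← h4]; exact (hb _ _).le)
  linarith

lemma core_s16 (α β h : ℝ) (k : ℤ)
    (hh : ∃ j : ℤ, 2 * h = (j : ℝ)) (hk : 0 < k)
    (hne : ¬ (α = h / (k : ℝ)^2 ∧
      ∃ m n : ℤ, β = h / (k : ℝ) + (m : ℝ) / (k : ℝ) + 2 * (n : ℝ) * α))
    (ν ε : ℝ) (hε : ε = 1 ∨ ε = -1) (v : ℕ → ℝ)
    (hv : ∀ t : ℕ, v t = β * ((k * t : ℤ) : ℝ) + ε * α * ((k * t : ℤ) : ℝ)^2 + ν)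
    (hb : ∀ s t, |(v s - ⌈v s⌉) - (v t - ⌈v t⌉)| < 1/2 - |h - (k : ℝ)^2 * α|) : False := by
  obtain ⟨j, hj⟩ := hh
  have hk' : (k : ℝ) ≠ 0 := by exact_mod_cast hk.ne'
  obtain ⟨e, he⟩ : ∃ e : ℤ, ε = e := by
    rcases hε with h | h
    · exact ⟨1, by simp [h]⟩
    · exact ⟨-1, by simp [h]⟩
  have := second_diff (fun t => v t - ⌈v t⌉) (ε * ((k : ℝ)^2 * α - h)) (|h - (k : ℝ)^2 * α|)
    (by rw [abs_mul, abs_sub_comm]; rcases hε with h | h <;> simp [h]) hb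
    (by
      intro t
      refine ⟨e * j - ⌈v (t+2)⌉ + 2 * ⌈v (t+1)⌉ - ⌈v t⌉, ?_⟩
      push_cast
      rw [← he, ← hj, hv t, hv (t+1), hv (t+2)]
      push_cast
      ring)
  obtain ⟨h1, h2⟩ := this
  have h3 : (k : ℝ)^2 * α = h := by
    rcases hε with h | h <;> rw [h] at h1 <;> linarith
  apply hne
  refine ⟨by rw [← h3]; field_simp, ?_⟩
  have e1 : v 1 - v 0 = β * k + ε * h := by
    rw [hv, hv, ← h3]; push_cast; ring
  have e2 : β * k + ε * h = ((⌈v 1⌉ - ⌈v 0⌉ : ℤ) : ℝ) := by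
    push_cast; linarith
  generalize (⌈v 1⌉ - ⌈v 0⌉ : ℤ) = N at e2
  rcases hε with h | h <;> rw [h] at e2
  · refine ⟨N - j, 0, ?_⟩
    push_cast
    rw [← hj]; field_simp; linarith
  · refine ⟨N, 0, ?_⟩
    push_cast
    field_simp; linarith


/-- Lemma 5 (Macbeath's first lemma): let `α, β, γ` be reals with `α > 0`, `γ > 0`,
`h` a half-integer and `k` a positive integer with `|h − k²α| + 1/2 ≤ γ`, and suppose
it is not the case that `α = h/k²` and `β ≡ h/k (mod (1/k, 2α))`. Then for every real
`ν` and each sign `ε ∈ {1, −1}` there are integers `x, y` with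
`0 < x + βy + ε·α·y² + ν ≤ γ`; strict hypothesis gives strict conclusion. -/
theorem macbeath_first (α β γ h : ℝ) (k : ℤ)
    (hα : 0 < α) (hγ : 0 < γ)
    (hh : ∃ j : ℤ, 2 * h = (j : ℝ)) (hk : 0 < k)
    (hbound : |h - (k : ℝ)^2 * α| + 1/2 ≤ γ)
    (hne : ¬ (α = h / (k : ℝ)^2 ∧
      ∃ m n : ℤ, β = h / (k : ℝ) + (m : ℝ) / (k : ℝ) + 2 * (n : ℝ) * α)) :
    (∀ ν ε : ℝ, (ε = 1 ∨ ε = -1) → ∃ x y : ℤ,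
      0 < (x : ℝ) + β * (y : ℝ) + ε * α * (y : ℝ)^2 + ν ∧
      (x : ℝ) + β * (y : ℝ) + ε * α * (y : ℝ)^2 + ν ≤ γ) ∧
    (|h - (k : ℝ)^2 * α| + 1/2 < γ → ∀ ν ε : ℝ, (ε = 1 ∨ ε = -1) → ∃ x y : ℤ,
      0 < (x : ℝ) + β * (y : ℝ) + ε * α * (y : ℝ)^2 + ν ∧
      (x : ℝ) + β * (y : ℝ) + ε * α * (y : ℝ)^2 + ν < γ) := by
  constructor
  · intro ν ε hε
    by_contra hcon
    push Not at hcon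
    set v : ℕ → ℝ := fun t => β * ((k * t : ℤ) : ℝ) + ε * α * ((k * t : ℤ) : ℝ)^2 + ν with hv
    refine core_s16 α β h k hh hk hne ν ε hε v (fun t => rfl) ?_
    have key : ∀ t, v t - ⌈v t⌉ ≤ 0 ∧ γ - 1 < v t - ⌈v t⌉ := by
      intro t
      have a := Int.le_ceil (v t)
      have b := Int.ceil_lt_add_one (v t)
      have c := hcon (1 - ⌈v t⌉) (k * t)
      have d : v t = β * ((k * t : ℤ) : ℝ) + ε * α * ((k * t : ℤ) : ℝ)^2 + ν := rfl
      push_cast at c d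
      have := c (by linarith)
      constructor <;> linarith
    intro s t
    have := key s
    have := key t
    rw [abs_lt]; constructor <;> linarith
  · intro hb ν ε hε
    by_contra hcon
    push Not at hcon
    set v : ℕ → ℝ := fun t => β * ((k * t : ℤ) : ℝ) + ε * α * ((k * t : ℤ) : ℝ)^2 + ν with hv
    refine core_s16 α β h k hh hk hne ν ε hε v (fun t => rfl) ?_
    have key : ∀ t, v t - ⌈v t⌉ ≤ 0 ∧ γ - 1 ≤ v t - ⌈v t⌉ := by
      intro t
      have a := Int.le_ceil (v t)
      have b := Int.ceil_lt_add_one (v t)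
      have c := hcon (1 - ⌈v t⌉) (k * t)
      have d : v t = β * ((k * t : ℤ) : ℝ) + ε * α * ((k * t : ℤ) : ℝ)^2 + ν := rfl
      push_cast at c d
      have := c (by linarith)
      constructor <;> linarith
    intro s t
    have := key s
    have := key t
    rw [abs_lt]; constructor <;> linarith
end

section
/- Lemma 7: Let α, β, δ, ν and c_1, c_2 be real numbers. Suppose that δ ≥ 1/2 if c_2 ∉ ℤ, and δ ≥ 1 if c_2 ∈ ℤ. Then there exist x_1, x_2 with x_1 − c_1 ∈ ℤ and x_2 − c_2 ∈ ℤ such that 0 < (x_1 + αx_2 + ν)·x_2 + β ≤ δ. Moreover, if the corresponding inequality on δ is strict (δ > 1/2, respectively δ > 1), then x_1, x_2 can be chosen so that 0 < (x_1 + αx_2 + ν)·x_2 + β < δ. -/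
theorem step_aux (α β ν c₁ x₂ : ℝ) (hx : x₂ ≠ 0) :
    ∃ x₁ : ℝ, (∃ k : ℤ, x₁ - c₁ = k) ∧
      0 < (x₁ + α * x₂ + ν) * x₂ + β ∧ (x₁ + α * x₂ + ν) * x₂ + β ≤ |x₂| := by
  obtain ⟨m, ⟨hm1, hm2⟩, -⟩ := existsUnique_add_zsmul_mem_Ioc (abs_pos.mpr hx)
    ((c₁ + α * x₂ + ν) * x₂ + β) 0
  rw [zsmul_eq_mul] at hm1 hm2
  rcases abs_cases x₂ with ⟨h, _⟩ | ⟨h, _⟩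
  · rw [h] at hm1 hm2 ⊢
    refine ⟨c₁ + m, ⟨m, by ring⟩, ?_, ?_⟩ <;> linarith
  · rw [h] at hm1 hm2 ⊢
    refine ⟨c₁ - m, ⟨-m, by push_cast; ring⟩, ?_, ?_⟩ <;> linarith

theorem choice_aux (c₂ : ℝ) : ∃ x₂ : ℝ, x₂ ≠ 0 ∧ (∃ k : ℤ, x₂ - c₂ = k) ∧
    (((¬ ∃ n : ℤ, (n : ℝ) = c₂) ∧ |x₂| ≤ 1/2) ∨ ((∃ n : ℤ, (n : ℝ) = c₂) ∧ |x₂| ≤ 1)) := by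
  by_cases hc : ∃ n : ℤ, (n : ℝ) = c₂
  · obtain ⟨n, hn⟩ := hc
    exact ⟨1, one_ne_zero, ⟨1 - n, by push_cast; rw [hn]⟩, Or.inr ⟨⟨n, hn⟩, by simp⟩⟩
  · refine ⟨c₂ - round c₂, fun h => hc ⟨round c₂, by linarith⟩,
      ⟨-round c₂, by push_cast; ring⟩, Or.inl ⟨hc, abs_sub_round c₂⟩⟩

/-- Lemma 7: for reals `α, β, δ, ν, c₁, c₂` with `δ ≥ 1/2` if `c₂ ∉ ℤ` and `δ ≥ 1` if
`c₂ ∈ ℤ`, the inequality `0 < (x₁ + αx₂ + ν)x₂ + β ≤ δ` is soluble with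
`xᵢ ≡ cᵢ (mod 1)`; if the corresponding inequality on `δ` is strict, the conclusion
can be made strict. -/
theorem lemma7 (α β δ ν c₁ c₂ : ℝ)
    (h₁ : (¬ ∃ n : ℤ, (n : ℝ) = c₂) → 1/2 ≤ δ)
    (h₂ : (∃ n : ℤ, (n : ℝ) = c₂) → 1 ≤ δ) :
    (∃ x₁ x₂ : ℝ, (∃ k : ℤ, x₁ - c₁ = k) ∧ (∃ k : ℤ, x₂ - c₂ = k) ∧
      0 < (x₁ + α * x₂ + ν) * x₂ + β ∧ (x₁ + α * x₂ + ν) * x₂ + β ≤ δ) ∧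
    ((((¬ ∃ n : ℤ, (n : ℝ) = c₂) → 1/2 < δ) ∧ ((∃ n : ℤ, (n : ℝ) = c₂) → 1 < δ)) →
      ∃ x₁ x₂ : ℝ, (∃ k : ℤ, x₁ - c₁ = k) ∧ (∃ k : ℤ, x₂ - c₂ = k) ∧
        0 < (x₁ + α * x₂ + ν) * x₂ + β ∧ (x₁ + α * x₂ + ν) * x₂ + β < δ) := by
  obtain ⟨x₂, hx, hk, hb⟩ := choice_aux c₂
  obtain ⟨x₁, hk1, hpos, hle⟩ := step_aux α β ν c₁ x₂ hx
  refine ⟨⟨x₁, x₂, hk1, hk, hpos, ?_⟩, fun ⟨g₁, g₂⟩ => ⟨x₁, x₂, hk1, hk, hpos, ?_⟩⟩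
  · rcases hb with ⟨hc, hb⟩ | ⟨hc, hb⟩
    · exact hle.trans (hb.trans (h₁ hc))
    · exact hle.trans (hb.trans (h₂ hc))
  · rcases hb with ⟨hc, hb⟩ | ⟨hc, hb⟩
    · exact hle.trans_lt (hb.trans_lt (g₁ hc))
    · exact hle.trans_lt (hb.trans_lt (g₂ hc))
end
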